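/- arXiv:1309.1582 — 2 statements merged into one kernel-verified Lean document; each statement's English description precedes it below -/
import Mathlib

section
/- (Lemma 3: asymptotic estimates in the presence of three blow-up points.) Under the blow-up setup with three blow-up points, where x_i is the principal blow-up point and y_i, t_i are the two other blow-up points, and with v_i converging in C²_loc(ℝ²) to u₀ solving −Δu₀ = V(0) e^{u₀} in ℝ² (V(0) = lim_i V_i(x_i) > 0), the following holds: for all ε > 0 and ε' ∈ (0, 1/4) there exist k = k(ε, ε') > 0, i₀ = i₀(ε, ε') ∈ ℕ, and constants C_{ε,ε'} > 0, C > 0, C₁ > 0, C₂ > 0, m ∈ ℝ, such that for all i ≥ i₀, all j ∈ {1, 2}, and all θ with k ≤ |θ| ≤ δ_i ε' / r_i: (i) (−4 − ε) log|θ| − C_{ε,ε'} ≤ v_i(θ) ≤ (−4 + ε) log|θ| + C_{ε,ε'}; and (ii) |∂_j v_i(θ) − ∂_j u₀(θ) − m (r_i/δ_i)| ≤ ε/|θ| + C (r_i/δ_i)² |θ| + C₁ r_i / d(x_i, y_i) + C₂ r_i / d(x_i, t_i). -/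
open MeasureTheory Filter Metric

abbrev E2 := EuclideanSpace ℝ (Fin 2)

noncomputable def pd (j : Fin 2) (u : E2 → ℝ) (x : E2) : ℝ :=
  fderiv ℝ u x (EuclideanSpace.single j 1)

noncomputable def lapl (u : E2 → ℝ) (x : E2) : ℝ :=
  pd 0 (pd 0 u) x + pd 1 (pd 1 u) x

namespace Aux

noncomputable def pol (ρ t : ℝ) : E2 := !₂[ρ * Real.cos t, ρ * Real.sin t]

noncomputable def K (j : Fin 2) (w : E2) : ℝ := w j / ‖w‖ ^ 2

lemma nsq (w : E2) : ‖w‖ ^ 2 = w 0 ^ 2 + w 1 ^ 2 := by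
  rw [EuclideanSpace.norm_sq_eq]; simp

lemma norm_pol (ρ t : ℝ) (h : 0 ≤ ρ) : ‖pol ρ t‖ = ρ := by
  have : ‖pol ρ t‖ ^ 2 = ρ ^ 2 := by
    rw [nsq]; simp [pol]; nlinarith [Real.sin_sq_add_cos_sq t]
  exact (pow_left_inj₀ (norm_nonneg _) h two_ne_zero).1 this

lemma vec_eq (w : E2) : w = w 0 • EuclideanSpace.single 0 (1:ℝ) + w 1 • EuclideanSpace.single 1 (1:ℝ) := by
  ext i; fin_cases i <;> simp

lemma fderiv_vec (u : E2 → ℝ) (x w : E2) : fderiv ℝ u x w = w 0 * pd 0 u x + w 1 * pd 1 u x := by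
  conv_lhs => rw [vec_eq w]
  simp [pd]

lemma abs_coord_le (w : E2) (j : Fin 2) : |w j| ≤ ‖w‖ := by
  have := PiLp.norm_apply_le w j
  simpa using this

lemma abs_K_le (j : Fin 2) (w : E2) : |K j w| ≤ 1 / ‖w‖ := by
  unfold K
  rcases eq_or_ne w 0 with rfl | h
  · simp
  have h0 : 0 < ‖w‖ := norm_pos_iff.2 h
  rw [abs_div, abs_of_nonneg (by positivity : (0:ℝ) ≤ ‖w‖^2), div_le_div_iff₀ (by positivity) h0]
  nlinarith [abs_coord_le w j]

lemma abs_pd_le (u : E2 → ℝ) (x : E2) (j : Fin 2) : |pd j u x| ≤ ‖fderiv ℝ u x‖ := by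
  unfold pd
  have := (fderiv ℝ u x).le_opNorm (EuclideanSpace.single j 1)
  simpa using this

lemma norm_fderiv_le (u : E2 → ℝ) (x : E2) : ‖fderiv ℝ u x‖ ≤ |pd 0 u x| + |pd 1 u x| := by
  refine ContinuousLinearMap.opNorm_le_bound _ (by positivity) fun w => ?_
  rw [fderiv_vec, Real.norm_eq_abs]
  calc |w 0 * pd 0 u x + w 1 * pd 1 u x| ≤ |w 0| * |pd 0 u x| + |w 1| * |pd 1 u x| := by
        rw [← abs_mul, ← abs_mul]; exact abs_add_le _ _
    _ ≤ ‖w‖ * |pd 0 u x| + ‖w‖ * |pd 1 u x| := by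
        gcongr <;> exact abs_coord_le _ _
    _ = _ := by ring

lemma integral_polar (F : E2 → ℝ) :
    ∫ w, F w = ∫ p in Set.Ioi (0:ℝ) ×ˢ Set.Ioo (-Real.pi) Real.pi, p.1 * F (pol p.1 p.2) := by
  have h1 : MeasurePreserving (fun p : ℝ × ℝ => (!₂[p.1, p.2] : E2)) :=
    (PiLp.volume_preserving_toLp (Fin 2)).comp (volume_preserving_finTwoArrow ℝ).symm
  have hemb : MeasurableEmbedding (fun p : ℝ × ℝ => (!₂[p.1, p.2] : E2)) :=
    (MeasurableEquiv.toLp 2 (Fin 2 → ℝ)).measurableEmbedding.comp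
      (MeasurableEquiv.finTwoArrow (α := ℝ)).symm.measurableEmbedding
  rw [← h1.integral_comp hemb F, ← integral_comp_polarCoord_symm]
  rfl

/-- integrability of `1/‖w‖` on balls, and the value of the integral -/
lemma kernel_ball (a : ℝ) (ha : 0 ≤ a) :
    IntegrableOn (fun w : E2 => 1 / ‖w‖) (ball 0 a) ∧ ∫ w in ball (0:E2) a, 1 / ‖w‖ = 2 * Real.pi * a := by
  have e : (ball (0:E2) a).indicator (fun w : E2 => 1 / ‖w‖) =
      fun w : E2 => (Set.Iio a).indicator (fun x => 1 / x) ‖w‖ := by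
    ext w; simp [Set.indicator]
  have e2 : (fun y : ℝ => y ^ (2 - 1) • (Set.Iio a).indicator (fun x => 1 / x) y) =ᵐ[volume.restrict (Set.Ioi 0)]
      (Set.Iio a).indicator (fun _ => (1:ℝ)) := by
    filter_upwards [ae_restrict_mem measurableSet_Ioi] with y hy
    have : y ≠ 0 := ne_of_gt hy
    by_cases h : y < a <;> simp [Set.indicator, h, this]
  constructor
  · rw [← integrable_indicator_iff measurableSet_ball, e]
    rw [integrable_fun_norm_addHaar volume (f := (Set.Iio a).indicator (fun x => 1 / x))]
    have hd : Module.finrank ℝ E2 = 2 := by simp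
    rw [hd]
    rw [IntegrableOn, integrable_congr e2, integrable_indicator_iff measurableSet_Iio]
    rw [IntegrableOn, Measure.restrict_restrict measurableSet_Iio]
    refine integrableOn_const (by
      rw [Set.Iio_inter_Ioi, Real.volume_Ioo]; exact ENNReal.ofReal_ne_top)
  · rw [← integral_indicator measurableSet_ball, e, integral_fun_norm_addHaar volume]
    have hd : Module.finrank ℝ E2 = 2 := by simp
    rw [hd, integral_congr_ae e2, integral_indicator measurableSet_Iio,
      Measure.restrict_restrict measurableSet_Iio, Set.Iio_inter_Ioi]
    have : volume.real (ball (0:E2) 1) = Real.pi := by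
      rw [Measure.real, EuclideanSpace.volume_ball]
      have g : Real.Gamma (1 + 1) = 1 := by norm_num [Real.Gamma_two]
      simp [Real.pi_pos.le, g]
    rw [this]
    simp [Measure.real, ha, Real.volume_Ioo]
    ring

lemma kernel_ball' (x : E2) (a : ℝ) (ha : 0 ≤ a) :
    IntegrableOn (fun w : E2 => 1 / ‖x - w‖) (ball x a) ∧
      ∫ w in ball x a, 1 / ‖x - w‖ = 2 * Real.pi * a := by
  have mp : MeasurePreserving (fun w : E2 => x - w) volume volume := Measure.measurePreserving_sub_left volume x
  have me : MeasurableEmbedding (fun w : E2 => x - w) := (Homeomorph.subLeft x).measurableEmbedding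
  have pre : (fun w : E2 => x - w) ⁻¹' (ball 0 a) = ball x a := by
    ext w; simp [dist_eq_norm, norm_sub_rev]
  constructor
  · rw [← pre]
    exact (mp.integrableOn_comp_preimage me).2 (kernel_ball a ha).1
  · rw [← pre, mp.setIntegral_preimage_emb me (fun w => 1 / ‖w‖)]
    exact (kernel_ball a ha).2

lemma measurable_K (j : Fin 2) : Measurable (K j) := by
  unfold K
  have : Measurable (fun w : E2 => w j) := (by fun_prop : Continuous (fun w : E2 => w j)).measurable
  exact this.div (by fun_prop)

/-- bounded integrable functions are integrable against `1/‖x-ζ‖`; with an estimate -/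
lemma kernel_bound (f : E2 → ℝ) (hf : Integrable f) (h0 : ∀ z, 0 ≤ f z) (x : E2) (a B : ℝ) (ha : 0 < a)
    (hB : ∀ z ∈ ball x a, f z ≤ B) :
    Integrable (fun z => f z * (1 / ‖x - z‖)) ∧
      ∫ z, f z * (1 / ‖x - z‖) ≤ 2 * Real.pi * a * B + (∫ z in (ball x a)ᶜ, f z) / a := by
  have m : AEStronglyMeasurable (fun z => f z * (1 / ‖x - z‖)) volume := by
    refine hf.aestronglyMeasurable.mul (Measurable.aestronglyMeasurable (by fun_prop))
  obtain ⟨k1, k2⟩ := kernel_ball' x a ha.le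
  have b1 : ∀ᵐ z ∂(volume.restrict (ball x a)), f z * (1 / ‖x - z‖) ≤ B * (1 / ‖x - z‖) := by
    filter_upwards [ae_restrict_mem measurableSet_ball] with z hz
    gcongr
    exact hB z hz
  have b2 : ∀ᵐ z ∂(volume.restrict (ball x a)ᶜ), f z * (1 / ‖x - z‖) ≤ f z * (1 / a) := by
    filter_upwards [ae_restrict_mem measurableSet_ball.compl] with z hz
    have : a ≤ ‖x - z‖ := by simpa [dist_eq_norm, norm_sub_rev] using hz
    have := h0 z
    gcongr
  have nn : ∀ z, 0 ≤ f z * (1 / ‖x - z‖) := fun z => mul_nonneg (h0 z) (by positivity)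
  have i1 : IntegrableOn (fun z => f z * (1 / ‖x - z‖)) (ball x a) := by
    refine Integrable.mono' (k1.const_mul B) m.restrict ?_
    filter_upwards [b1] with z hz
    rwa [Real.norm_eq_abs, abs_of_nonneg (nn z)]
  have i2 : IntegrableOn (fun z => f z * (1 / ‖x - z‖)) (ball x a)ᶜ := by
    refine Integrable.mono' (hf.integrableOn.mul_const (1/a)) m.restrict ?_
    filter_upwards [b2] with z hz
    rwa [Real.norm_eq_abs, abs_of_nonneg (nn z)]
  have hi : Integrable (fun z => f z * (1 / ‖x - z‖)) := by
    rw [← integrableOn_univ, ← Set.union_compl_self (ball x a)]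
    exact i1.union i2
  refine ⟨hi, ?_⟩
  rw [← integral_add_compl measurableSet_ball hi (s := ball x a)]
  have j1 := integral_mono_ae i1 (k1.const_mul B) b1
  have j2 := integral_mono_ae i2 (hf.integrableOn.mul_const (1/a)) b2
  rw [integral_const_mul, k2] at j1
  rw [integral_mul_const] at j2
  have : (∫ z in (ball x a)ᶜ, f z) / a = (∫ z in (ball x a)ᶜ, f z) * (1/a) := by ring
  rw [this]
  linarith

lemma kernel_int (f : E2 → ℝ) (hf : Integrable f) (x : E2) (a B : ℝ) (ha : 0 < a)
    (hB : ∀ z ∈ ball x a, |f z| ≤ B) (j : Fin 2) :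
    Integrable (fun z => f z * K j (x - z)) := by
  have := (kernel_bound (fun z => |f z|) hf.abs (fun z => abs_nonneg _) x a B ha hB).1
  refine this.mono' ?_ ?_
  · exact hf.aestronglyMeasurable.mul
      ((measurable_K j).comp (measurable_const.sub measurable_id)).aestronglyMeasurable
  · filter_upwards with z
    rw [Real.norm_eq_abs, abs_mul]
    gcongr
    exact abs_K_le _ _

end Aux

namespace Aux

lemma polar_intOn (G : ℝ × ℝ → ℝ) (hG : Continuous G) (R : ℝ) (hR : ∀ p : ℝ × ℝ, R < p.1 → G p = 0) :
    IntegrableOn G (Set.Ioi (0:ℝ) ×ˢ Set.Ioo (-Real.pi) Real.pi) := by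
  have h : IntegrableOn G (Set.Icc (0:ℝ) R ×ˢ Set.Icc (-Real.pi) Real.pi) :=
    hG.continuousOn.integrableOn_compact (isCompact_Icc.prod isCompact_Icc)
  refine h.of_forall_sdiff_eq_zero (measurableSet_Ioi.prod measurableSet_Ioo) ?_
  rintro ⟨a, b⟩ ⟨⟨h1, h2⟩, h3⟩
  refine hR _ ?_
  by_contra h4
  simp only [not_lt] at h4
  exact h3 ⟨⟨le_of_lt h1, h4⟩, ⟨h2.1.le, h2.2.le⟩⟩

lemma contDiff_pol : ContDiff ℝ ⊤ (fun p : ℝ × ℝ => pol p.1 p.2) := by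
  unfold pol
  rw [contDiff_euclidean]
  intro i
  fin_cases i
  · simp; fun_prop
  · simp; fun_prop

lemma mk_eq (a b : ℝ) : (!₂[a, b] : E2) =
    a • EuclideanSpace.single 0 (1:ℝ) + b • EuclideanSpace.single 1 (1:ℝ) := by
  ext i; fin_cases i <;> simp

lemma hasDerivAt_pol_r (ρ t : ℝ) : HasDerivAt (fun s => pol s t) (pol 1 t) ρ := by
  simp only [pol, mk_eq]
  exact ((((hasDerivAt_id ρ).mul_const (Real.cos t))).smul_const _).add
    ((((hasDerivAt_id ρ).mul_const (Real.sin t))).smul_const _)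

lemma hasDerivAt_pol_t (ρ t : ℝ) : HasDerivAt (fun s => pol ρ s) (!₂[-(ρ * Real.sin t), ρ * Real.cos t]) t := by
  simp only [pol, mk_eq]
  have h1 := ((Real.hasDerivAt_cos t).const_mul ρ).smul_const (EuclideanSpace.single 0 (1:ℝ) : E2)
  have h2 := ((Real.hasDerivAt_sin t).const_mul ρ).smul_const (EuclideanSpace.single 1 (1:ℝ) : E2)
  refine (h1.add h2).congr_deriv ?_
  rw [mul_neg]

lemma pd_continuous {ψ : E2 → ℝ} (h : ContDiff ℝ 1 ψ) (j : Fin 2) : Continuous (pd j ψ) := by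
  unfold pd
  exact (h.continuous_fderiv one_ne_zero).clm_apply continuous_const

lemma pd_contDiff {ψ : E2 → ℝ} (h : ContDiff ℝ 2 ψ) (j : Fin 2) : ContDiff ℝ 1 (pd j ψ) := by
  unfold pd
  exact (h.fderiv_right (m := 1) (by norm_num)).clm_apply contDiff_const

lemma pd_compact {ψ : E2 → ℝ} (h : HasCompactSupport ψ) (j : Fin 2) : HasCompactSupport (pd j ψ) :=
  h.fderiv_apply ℝ _

lemma far_zero {ψ : E2 → ℝ} (hs : HasCompactSupport ψ) : ∃ R : ℝ, 0 < R ∧ ∀ x, R < ‖x‖ → ψ x = 0 := by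
  obtain ⟨R, hR, hR2⟩ := hs.exists_pos_le_norm
  exact ⟨R, hR, fun x hx => hR2 x hx.le⟩

lemma far_pol (y : E2) {R ρ t : ℝ} (hR : 0 < R) (h : R + ‖y‖ < ρ) : R < ‖y + pol ρ t‖ := by
  have h0 : ‖pol ρ t‖ = ρ := norm_pol _ _ (by have := norm_nonneg y; linarith)
  have := norm_sub_norm_le (pol ρ t) (-y)
  rw [norm_neg, sub_neg_eq_add, add_comm (pol ρ t)] at this
  linarith

lemma K_pol0 (ρ t : ℝ) (h : 0 < ρ) : ρ * K 0 (pol ρ t) = Real.cos t := by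
  unfold K; rw [norm_pol _ _ h.le]; simp [pol]; field_simp

lemma K_pol1 (ρ t : ℝ) (h : 0 < ρ) : ρ * K 1 (pol ρ t) = Real.sin t := by
  unfold K; rw [norm_pol _ _ h.le]; simp [pol]; field_simp

lemma radial (ψ : E2 → ℝ) (h : ContDiff ℝ 1 ψ) (hs : HasCompactSupport ψ) (y : E2) :
    ∫ w, (K 0 w * pd 0 ψ (y + w) + K 1 w * pd 1 ψ (y + w)) = -(2 * Real.pi * ψ y) := by
  obtain ⟨R0, hR0, hz0⟩ := far_zero (pd_compact hs 0)
  obtain ⟨R1, hR1, hz1⟩ := far_zero (pd_compact hs 1)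
  obtain ⟨R2, hR2, hz2⟩ := far_zero hs
  rw [integral_polar]
  set G : ℝ × ℝ → ℝ := fun p => Real.cos p.2 * pd 0 ψ (y + pol p.1 p.2) + Real.sin p.2 * pd 1 ψ (y + pol p.1 p.2) with hGdef
  have hGc : Continuous G := by
    have := contDiff_pol.continuous
    have := pd_continuous h 0
    have := pd_continuous h 1
    fun_prop
  have hGi := polar_intOn G hGc (max R0 R1 + ‖y‖) (by
    intro p hp
    simp only [hGdef]
    rw [hz0, hz1]
    · simp
    · exact far_pol y hR1 (by linarith [le_max_right R0 R1])
    · exact far_pol y hR0 (by linarith [le_max_left R0 R1]))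
  rw [setIntegral_congr_fun (g := G) (measurableSet_Ioi.prod measurableSet_Ioo)]
  · rw [IntegrableOn, Measure.volume_eq_prod, ← Measure.prod_restrict] at hGi
    rw [Measure.volume_eq_prod, ← Measure.prod_restrict, integral_prod_symm _ hGi]
    have key : ∀ t, ∫ ρ in Set.Ioi (0:ℝ), G (ρ, t) = - ψ y := by
      intro t
      have hd : ∀ ρ : ℝ, HasDerivAt (fun s => ψ (y + pol s t)) (G (ρ, t)) ρ := by
        intro ρ
        have h1 := ((h.differentiable one_ne_zero) (y + pol ρ t)).hasFDerivAt
        have := h1.comp_hasDerivAt ρ ((hasDerivAt_pol_r ρ t).const_add y)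
        rw [fderiv_vec] at this
        refine this.congr_deriv ?_
        simp [pol, hGdef]
      have ht : Tendsto (fun s => ψ (y + pol s t)) atTop (nhds 0) := by
        refine tendsto_const_nhds.congr' ?_
        filter_upwards [eventually_gt_atTop (R2 + ‖y‖)] with s hs
        exact (hz2 _ (far_pol y hR2 hs)).symm
      have hi : IntegrableOn (fun ρ => G (ρ, t)) (Set.Ioi 0) := by
        have : IntegrableOn (fun ρ => G (ρ, t)) (Set.Icc 0 (max R0 R1 + ‖y‖)) :=
          (by fun_prop : Continuous (fun ρ => G (ρ, t))).continuousOn.integrableOn_compact isCompact_Icc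
        refine this.of_forall_sdiff_eq_zero measurableSet_Ioi ?_
        rintro a ⟨h1, h2⟩
        have hp : max R0 R1 + ‖y‖ < a := by
          by_contra h3
          exact h2 ⟨le_of_lt h1, not_lt.1 h3⟩
        simp only [hGdef]
        rw [hz0, hz1]
        · simp
        · exact far_pol y hR1 (by linarith [le_max_right R0 R1])
        · exact far_pol y hR0 (by linarith [le_max_left R0 R1])
      have := integral_Ioi_of_hasDerivAt_of_tendsto (hd 0).continuousAt.continuousWithinAt
        (fun x _ => hd x) hi ht
      rw [this]
      have : pol 0 t = 0 := by
        rw [← norm_eq_zero, norm_pol _ _ le_rfl]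
      simp [this]
    simp_rw [key]
    simp [Measure.real, Real.volume_Ioo, Real.pi_pos.le]
    left; ring
  · rintro ⟨ρ, t⟩ ⟨h1, h2⟩
    have e0 := K_pol0 ρ t h1
    have e1 := K_pol1 ρ t h1
    simp only [hGdef]
    rw [← e0, ← e1]; ring

lemma angular (ψ : E2 → ℝ) (h : ContDiff ℝ 1 ψ) (hs : HasCompactSupport ψ) (y : E2) :
    ∫ w, (K 0 w * pd 1 ψ (y + w) - K 1 w * pd 0 ψ (y + w)) = 0 := by
  obtain ⟨R0, hR0, hz0⟩ := far_zero (pd_compact hs 0)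
  obtain ⟨R1, hR1, hz1⟩ := far_zero (pd_compact hs 1)
  rw [integral_polar]
  set G : ℝ × ℝ → ℝ := fun p => Real.cos p.2 * pd 1 ψ (y + pol p.1 p.2) - Real.sin p.2 * pd 0 ψ (y + pol p.1 p.2) with hGdef
  have hGc : Continuous G := by
    have := contDiff_pol.continuous
    have := pd_continuous h 0
    have := pd_continuous h 1
    fun_prop
  have hGi := polar_intOn G hGc (max R0 R1 + ‖y‖) (by
    intro p hp
    simp only [hGdef]
    rw [hz0, hz1]
    · simp
    · exact far_pol y hR1 (by linarith [le_max_right R0 R1])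
    · exact far_pol y hR0 (by linarith [le_max_left R0 R1]))
  rw [setIntegral_congr_fun (g := G) (measurableSet_Ioi.prod measurableSet_Ioo)]
  · rw [Measure.volume_eq_prod] at hGi
    rw [Measure.volume_eq_prod, setIntegral_prod _ hGi]
    rw [setIntegral_congr_fun (g := fun _ => (0:ℝ)) measurableSet_Ioi]
    · simp
    intro ρ hρ
    have hρ : 0 < ρ := hρ
    change ∫ t in Set.Ioo (-Real.pi) Real.pi, G (ρ, t) = 0
    rw [← integral_Ioc_eq_integral_Ioo, ← intervalIntegral.integral_of_le (by linarith [Real.pi_pos])]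
    have hd : ∀ t : ℝ, HasDerivAt (fun s => ψ (y + pol ρ s) / ρ) (G (ρ, t)) t := by
      intro t
      have h1 := ((h.differentiable one_ne_zero) (y + pol ρ t)).hasFDerivAt
      have := (h1.comp_hasDerivAt t ((hasDerivAt_pol_t ρ t).const_add y)).div_const ρ
      rw [fderiv_vec] at this
      refine this.congr_deriv ?_
      simp [hGdef]; field_simp; ring
    rw [intervalIntegral.integral_eq_sub_of_hasDerivAt (fun t _ => hd t)
      ((by fun_prop : Continuous (fun t => G (ρ, t))).intervalIntegrable _ _)]
    simp [pol]
  · rintro ⟨ρ, t⟩ ⟨h1, h2⟩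
    have e0 := K_pol0 ρ t h1
    have e1 := K_pol1 ρ t h1
    simp only [hGdef]
    rw [← e0, ← e1]; ring

end Aux

namespace Aux

lemma pd_pd {φ : E2 → ℝ} (h : ContDiff ℝ 2 φ) (i j : Fin 2) (x : E2) :
    pd i (pd j φ) x = fderiv ℝ (fderiv ℝ φ) x (EuclideanSpace.single i 1) (EuclideanSpace.single j 1) := by
  have hd : DifferentiableAt ℝ (fderiv ℝ φ) x :=
    ((h.fderiv_right (m := 1) (by norm_num)).differentiable one_ne_zero) x
  unfold pd
  rw [fderiv_clm_apply hd (differentiableAt_const _)]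
  simp

lemma pd_comm {φ : E2 → ℝ} (h : ContDiff ℝ 2 φ) (i j : Fin 2) (x : E2) :
    pd i (pd j φ) x = pd j (pd i φ) x := by
  rw [pd_pd h, pd_pd h]
  have := (h.contDiffAt (x := x)).isSymmSndFDerivAt (by simp)
  exact this _ _

lemma K_neg (j : Fin 2) (w : E2) : K j (-w) = - K j w := by
  simp [K, neg_div]

lemma intK {g : E2 → ℝ} (hg : Continuous g) (hs : HasCompactSupport g) (x : E2) (j : Fin 2) :
    Integrable (fun z => g z * K j (x - z)) := by
  obtain ⟨C, hC⟩ := hs.exists_bound_of_continuous hg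
  exact kernel_int g (hg.integrable_of_hasCompactSupport hs) x 1 C one_pos (fun z _ => hC z) j

lemma intK' {g : E2 → ℝ} (hg : Continuous g) (hs : HasCompactSupport g) (y : E2) (j : Fin 2) :
    Integrable (fun w => K j w * g (y + w)) := by
  have h1 : HasCompactSupport (fun w => g (y + w)) := hs.comp_homeomorph (Homeomorph.addLeft y)
  have := (intK (g := fun w => g (y + w)) (by fun_prop) h1 0 j).neg
  refine this.congr (Eventually.of_forall fun w => ?_)
  simp [K_neg]; ring

lemma rep0 (φ : E2 → ℝ) (h : ContDiff ℝ 2 φ) (hs : HasCompactSupport φ) (y : E2) (j : Fin 2) :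
    ∫ ζ, lapl φ ζ * K j (y - ζ) = 2 * Real.pi * pd j φ y := by
  have e1 : ∫ ζ, lapl φ ζ * K j (y - ζ) = - ∫ w, K j w * lapl φ (y + w) := by
    rw [← integral_add_left_eq_self _ y, ← integral_neg]
    congr 1; ext w
    simp [K_neg]; ring
  have c := fun a b => pd_continuous (pd_contDiff h a) b
  have s := fun a b => pd_compact (pd_compact hs a) b
  have I := fun a b l => intK' (c a b) (s a b) y l
  have r := fun a => radial (pd a φ) (pd_contDiff h a) (pd_compact hs a) y
  have an := fun a => angular (pd a φ) (pd_contDiff h a) (pd_compact hs a) y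
  rw [e1]
  fin_cases j
  · have : (fun w => K 0 w * lapl φ (y + w)) = fun w =>
        (K 0 w * pd 0 (pd 0 φ) (y + w) + K 1 w * pd 1 (pd 0 φ) (y + w)) +
        (K 0 w * pd 1 (pd 1 φ) (y + w) - K 1 w * pd 0 (pd 1 φ) (y + w)) := by
      ext w; rw [pd_comm h 1 0]; unfold lapl; ring
    change -∫ w, K 0 w * lapl φ (y + w) = 2 * Real.pi * pd 0 φ y
    have A := integral_add ((I 0 0 0).add (I 0 1 1)) ((I 1 1 0).sub (I 1 0 1))
    simp only [Pi.add_apply, Pi.sub_apply] at A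
    rw [this, A, r, an]
    ring
  · have : (fun w => K 1 w * lapl φ (y + w)) = fun w =>
        (K 0 w * pd 0 (pd 1 φ) (y + w) + K 1 w * pd 1 (pd 1 φ) (y + w)) -
        (K 0 w * pd 1 (pd 0 φ) (y + w) - K 1 w * pd 0 (pd 0 φ) (y + w)) := by
      ext w; rw [pd_comm h 1 0]; unfold lapl; ring
    change -∫ w, K 1 w * lapl φ (y + w) = 2 * Real.pi * pd 1 φ y
    have A := integral_sub ((I 1 0 0).add (I 1 1 1)) ((I 0 1 0).sub (I 0 0 1))
    simp only [Pi.add_apply, Pi.sub_apply] at A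
    rw [this, A, r, an]
    ring

lemma pd_mul {f g : E2 → ℝ} {x : E2} (hf : DifferentiableAt ℝ f x) (hg : DifferentiableAt ℝ g x) (j : Fin 2) :
    pd j (fun z => f z * g z) x = pd j f x * g x + f x * pd j g x := by
  unfold pd
  rw [fderiv_fun_mul hf hg]; simp; ring

lemma pd_add {f g : E2 → ℝ} {x : E2} (hf : DifferentiableAt ℝ f x) (hg : DifferentiableAt ℝ g x) (j : Fin 2) :
    pd j (fun z => f z + g z) x = pd j f x + pd j g x := by
  unfold pd
  rw [fderiv_fun_add hf hg]; simp

noncomputable def bχ : ContDiffBump (0:E2) := ⟨3/8, 1/2, by norm_num, by norm_num⟩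
noncomputable def bκ : ContDiffBump (0:E2) := ⟨1/64, 1/32, by norm_num, by norm_num⟩

noncomputable def χ : E2 → ℝ := bχ
noncomputable def Kt (j : Fin 2) (w : E2) : ℝ := (1 - bκ w) * K j w

lemma χ_cd : ContDiff ℝ 3 χ := bχ.contDiff
lemma χ_cs : HasCompactSupport χ := bχ.hasCompactSupport
lemma χ_one {x : E2} (h : ‖x‖ ≤ 3/8) : χ x = 1 := bχ.one_of_mem_closedBall (by simpa [bχ] using h)
lemma χ_zero {x : E2} (h : 1/2 ≤ ‖x‖) : χ x = 0 := bχ.zero_of_le_dist (by simpa [bχ] using h)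
lemma χ_nonneg (x : E2) : 0 ≤ χ x := bχ.nonneg
lemma χ_le_one (x : E2) : χ x ≤ 1 := bχ.le_one

lemma pd_congr {f g : E2 → ℝ} {x : E2} (h : f =ᶠ[nhds x] g) (j : Fin 2) : pd j f x = pd j g x := by
  unfold pd; rw [h.fderiv_eq]

lemma pd_χ_in {x : E2} (h : ‖x‖ < 3/8) (j : Fin 2) : pd j χ x = 0 := by
  have : χ =ᶠ[nhds x] fun _ => (1:ℝ) := by
    filter_upwards [isOpen_ball.mem_nhds (show x ∈ ball (0:E2) (3/8) by simpa using h)] with z hz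
    exact χ_one (le_of_lt (by simpa using hz))
  rw [pd_congr this]; simp [pd]

lemma pd_χ_out {x : E2} (h : 1/2 < ‖x‖) (j : Fin 2) : pd j χ x = 0 := by
  have : χ =ᶠ[nhds x] fun _ => (0:ℝ) := by
    filter_upwards [(isOpen_lt continuous_const continuous_norm).mem_nhds h] with z hz
    exact χ_zero (le_of_lt hz)
  rw [pd_congr this]; simp [pd]

lemma pd_pd_χ_in {x : E2} (h : ‖x‖ < 3/8) (j l : Fin 2) : pd l (pd j χ) x = 0 := by
  have : pd j χ =ᶠ[nhds x] fun _ => (0:ℝ) := by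
    filter_upwards [isOpen_ball.mem_nhds (show x ∈ ball (0:E2) (3/8) by simpa using h)] with z hz
    exact pd_χ_in (by simpa using hz) j
  rw [pd_congr this]; simp [pd]

lemma pd_pd_χ_out {x : E2} (h : 1/2 < ‖x‖) (j l : Fin 2) : pd l (pd j χ) x = 0 := by
  have : pd j χ =ᶠ[nhds x] fun _ => (0:ℝ) := by
    filter_upwards [(isOpen_lt continuous_const continuous_norm).mem_nhds h] with z hz
    exact pd_χ_out hz j
  rw [pd_congr this]; simp [pd]

lemma Kt_eq {w : E2} (h : 1/32 ≤ ‖w‖) (j : Fin 2) : Kt j w = K j w := by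
  unfold Kt
  rw [bκ.zero_of_le_dist (by simpa [bκ] using h)]; simp

lemma Kt_cd (j : Fin 2) : ContDiff ℝ 2 (Kt j) := by
  rw [contDiff_iff_contDiffAt]
  intro w
  by_cases hw : w = 0
  · have : Kt j =ᶠ[nhds w] fun _ => (0:ℝ) := by
      filter_upwards [isOpen_ball.mem_nhds (show w ∈ ball (0:E2) (1/64) by simp [hw])] with z hz
      have := bκ.one_of_mem_closedBall (x := z) (by simpa [bκ] using le_of_lt (by simpa using hz))
      simp [Kt, this]
    exact contDiffAt_const.congr_of_eventuallyEq this
  · unfold Kt K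
    have h1 : ContDiffAt ℝ 2 (fun z : E2 => z j) w := by fun_prop
    have h2 : ContDiffAt ℝ 2 (fun z : E2 => ‖z‖ ^ 2) w := contDiffAt_id.norm_sq ℝ
    exact (contDiffAt_const.sub bκ.contDiffAt).mul (h1.div h2 (by simpa using hw))

noncomputable def EE (j : Fin 2) (y ζ : E2) : ℝ :=
  -(lapl χ ζ * Kt j (y - ζ)) + 2 * (pd 0 χ ζ * pd 0 (Kt j) (y - ζ) + pd 1 χ ζ * pd 1 (Kt j) (y - ζ))

lemma EE_zero (j : Fin 2) (y ζ : E2) (h : ¬ (3/8 ≤ ‖ζ‖ ∧ ‖ζ‖ ≤ 1/2)) : EE j y ζ = 0 := by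
  unfold EE lapl
  rcases lt_or_ge ‖ζ‖ (3/8) with h1 | h1
  · simp [pd_χ_in h1, pd_pd_χ_in h1]
  · have h2 : 1/2 < ‖ζ‖ := by
      by_contra h3; exact h ⟨h1, not_lt.1 h3⟩
    simp [pd_χ_out h2, pd_pd_χ_out h2]

lemma pd_bound (f : E2 → ℝ) (h : ContDiff ℝ 1 f) (R : ℝ) : ∃ C, 0 ≤ C ∧ ∀ j, ∀ x, ‖x‖ ≤ R → |f x| ≤ C ∧ |pd j f x| ≤ C := by
  obtain ⟨C0, h0⟩ := (isCompact_closedBall (0:E2) R).exists_bound_of_continuousOn (pd_continuous h 0).continuousOn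
  obtain ⟨C1, h1⟩ := (isCompact_closedBall (0:E2) R).exists_bound_of_continuousOn (pd_continuous h 1).continuousOn
  obtain ⟨C2, h2⟩ := (isCompact_closedBall (0:E2) R).exists_bound_of_continuousOn h.continuous.continuousOn
  refine ⟨max 0 (max C0 (max C1 C2)), le_max_left _ _, fun j x hx => ?_⟩
  have hx : x ∈ closedBall (0:E2) R := by simpa using hx
  have a0 := h0 x hx
  have a1 := h1 x hx
  have a2 := h2 x hx
  rw [Real.norm_eq_abs] at a0 a1 a2
  fin_cases j <;> simp_all

lemma EE_bound : ∃ C, 0 < C ∧ ∀ j, ∀ y ζ : E2, ‖y‖ ≤ 5/16 → |EE j y ζ| ≤ C := by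
  have hk : ∃ C, 0 ≤ C ∧ ∀ j l : Fin 2, ∀ x : E2, ‖x‖ ≤ 1 → |Kt j x| ≤ C ∧ |pd l (Kt j) x| ≤ C := by
    obtain ⟨A, hA, hA'⟩ := pd_bound _ ((Kt_cd 0).of_le (by norm_num)) 1
    obtain ⟨B, hB, hB'⟩ := pd_bound _ ((Kt_cd 1).of_le (by norm_num)) 1
    refine ⟨max A B, le_max_of_le_left hA, fun j l x hx => ?_⟩
    fin_cases j
    · exact ⟨(hA' l x hx).1.trans (le_max_left _ _), (hA' l x hx).2.trans (le_max_left _ _)⟩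
    · exact ⟨(hB' l x hx).1.trans (le_max_right _ _), (hB' l x hx).2.trans (le_max_right _ _)⟩
  obtain ⟨C, hC, hC'⟩ := hk
  have h2 : ContDiff ℝ 2 χ := χ_cd.of_le (by norm_num)
  obtain ⟨A, hA, hA'⟩ := pd_bound _ (pd_contDiff h2 0) 1
  obtain ⟨B, hB, hB'⟩ := pd_bound _ (pd_contDiff h2 1) 1
  refine ⟨(A + B) * C + 2 * (A * C + B * C) + 1, by positivity, fun j y ζ hy => ?_⟩
  by_cases h : 3/8 ≤ ‖ζ‖ ∧ ‖ζ‖ ≤ 1/2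
  · have hz : ‖ζ‖ ≤ 1 := by linarith [h.2]
    have hyz : ‖y - ζ‖ ≤ 1 := (norm_sub_le _ _).trans (by linarith [h.2])
    unfold EE lapl
    have k0 := hC' j 0 _ hyz
    have k1 := hC' j 1 _ hyz
    have a := hA' 0 ζ hz
    have b := hB' 1 ζ hz
    calc _ ≤ |(pd 0 (pd 0 χ) ζ + pd 1 (pd 1 χ) ζ) * Kt j (y - ζ)| + 2 * (|pd 0 χ ζ * pd 0 (Kt j) (y - ζ)| + |pd 1 χ ζ * pd 1 (Kt j) (y - ζ)|) := by
          refine (abs_add_le _ _).trans ?_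
          rw [abs_neg, abs_mul 2, abs_two]
          gcongr
          exact abs_add_le _ _
      _ ≤ (A + B) * C + 2 * (A * C + B * C) := by
          rw [abs_mul, abs_mul, abs_mul]
          have := (abs_add_le (pd 0 (pd 0 χ) ζ) (pd 1 (pd 1 χ) ζ)).trans (add_le_add a.2 b.2)
          gcongr
          exacts [k0.1, a.1, k0.2, b.1, k1.2]
      _ ≤ _ := by linarith
  · rw [EE_zero j y ζ h]; simp; positivity

lemma EE_cont (j : Fin 2) (y : E2) : Continuous (EE j y) := by
  have h2 : ContDiff ℝ 2 χ := χ_cd.of_le (by norm_num)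
  have a := pd_continuous (pd_contDiff h2 0) 0
  have b := pd_continuous (pd_contDiff h2 1) 1
  have c0 := pd_continuous (χ_cd.of_le (by norm_num)) 0
  have c1 := pd_continuous (χ_cd.of_le (by norm_num)) 1
  have d0 := pd_continuous ((Kt_cd j).of_le (by norm_num)) 0
  have d1 := pd_continuous ((Kt_cd j).of_le (by norm_num)) 1
  have e := (Kt_cd j).continuous
  unfold EE lapl
  fun_prop

end Aux

namespace Aux

lemma lapl_mul {f g : E2 → ℝ} (hf : ContDiff ℝ 2 f) (hg : ContDiff ℝ 2 g) (x : E2) :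
    lapl (fun z => f z * g z) x = f x * lapl g x +
      2 * (pd 0 f x * pd 0 g x + pd 1 f x * pd 1 g x) + lapl f x * g x := by
  have df : Differentiable ℝ f := hf.differentiable (by norm_num)
  have dg : Differentiable ℝ g := hg.differentiable (by norm_num)
  have dpf : ∀ j, Differentiable ℝ (pd j f) := fun j => (pd_contDiff hf j).differentiable one_ne_zero
  have dpg : ∀ j, Differentiable ℝ (pd j g) := fun j => (pd_contDiff hg j).differentiable one_ne_zero
  have key : ∀ j, pd j (pd j (fun z => f z * g z)) x =
      pd j (pd j f) x * g x + 2 * (pd j f x * pd j g x) + f x * pd j (pd j g) x := by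
    intro j
    have e : pd j (fun z => f z * g z) = fun z => pd j f z * g z + f z * pd j g z := by
      ext z; exact pd_mul (df z) (dg z) j
    rw [e, pd_add (f := fun z => pd j f z * g z) (g := fun z => f z * pd j g z) ((dpf j x).mul (dg x)) ((df x).mul (dpg j x)), pd_mul (dpf j x) (dg x),
      pd_mul (df x) (dpg j x)]
    ring
  unfold lapl
  rw [key, key]; ring

lemma pd_comp_sub (f : E2 → ℝ) (hf : Differentiable ℝ f) (y x : E2) (j : Fin 2) :
    pd j (fun z => f (y - z)) x = - pd j f (y - x) := by
  unfold pd
  have h1 : HasFDerivAt (fun z : E2 => y - z) (-(ContinuousLinearMap.id ℝ E2)) x := by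
    simpa using (hasFDerivAt_id x).const_sub y
  have := ((hf (y - x)).hasFDerivAt.comp x h1).fderiv
  have e : (fun z => f (y - z)) = f ∘ (fun z => y - z) := rfl
  rw [e, this]; simp

lemma rep1 (U : E2 → ℝ) (hU : ContDiff ℝ 2 U) (y : E2) (hy : ‖y‖ ≤ 5/16) (j : Fin 2) :
    2 * Real.pi * pd j U y = (∫ ζ, (χ ζ * lapl U ζ) * K j (y - ζ)) + ∫ ζ, U ζ * EE j y ζ := by
  have h2 : ContDiff ℝ 2 χ := χ_cd.of_le (by norm_num)
  have h1 : ContDiff ℝ 1 χ := χ_cd.of_le (by norm_num)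
  have k1 : ContDiff ℝ 1 (Kt j) := (Kt_cd j).of_le (by norm_num)
  have kd : Differentiable ℝ (Kt j) := k1.differentiable one_ne_zero
  have kdy : Differentiable ℝ (fun z => Kt j (y - z)) := by fun_prop
  have kc := k1.continuous
  have kyc : ContDiff ℝ 1 (fun z => Kt j (y - z)) := by fun_prop
  have U1 : ContDiff ℝ 1 U := hU.of_le (by norm_num)
  have uc : Continuous U := hU.continuous
  have uc0 := pd_continuous U1 0
  have uc1 := pd_continuous U1 1
  have xc0 := pd_continuous h1 0
  have xc1 := pd_continuous h1 1
  have ulc : Continuous (lapl U) := (pd_continuous (pd_contDiff hU 0) 0).add (pd_continuous (pd_contDiff hU 1) 1)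
  have xlc : Continuous (lapl χ) := (pd_continuous (pd_contDiff h2 0) 0).add (pd_continuous (pd_contDiff h2 1) 1)
  have xls : HasCompactSupport (lapl χ) := (pd_compact (pd_compact χ_cs 0) 0).add (pd_compact (pd_compact χ_cs 1) 1)
  have r := rep0 (fun z => χ z * U z) (h2.mul hU) (χ_cs.mul_right) y j
  have e1 : pd j (fun z => χ z * U z) y = pd j U y := by
    apply pd_congr
    filter_upwards [isOpen_ball.mem_nhds (show y ∈ ball (0:E2) (3/8) by simp; linarith)] with z hz
    rw [χ_one (le_of_lt (by simpa using hz)), one_mul]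
  rw [e1] at r
  rw [← r]
  simp_rw [lapl_mul h2 hU]
  -- replace K by Kt in the cut-off terms
  have kk : ∀ ζ : E2, 3/8 ≤ ‖ζ‖ → K j (y - ζ) = Kt j (y - ζ) := by
    intro ζ hz
    refine (Kt_eq ?_ j).symm
    have := norm_sub_norm_le ζ y
    rw [norm_sub_rev] at this
    linarith
  have e2 : ∀ ζ, (χ ζ * lapl U ζ + 2 * (pd 0 χ ζ * pd 0 U ζ + pd 1 χ ζ * pd 1 U ζ) + lapl χ ζ * U ζ) * K j (y - ζ)
      = χ ζ * lapl U ζ * K j (y - ζ) + (2 * ((pd 0 χ ζ * Kt j (y - ζ)) * pd 0 U ζ) +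
        2 * ((pd 1 χ ζ * Kt j (y - ζ)) * pd 1 U ζ) + lapl χ ζ * Kt j (y - ζ) * U ζ) := by
    intro ζ
    rcases lt_or_ge ‖ζ‖ (3/8) with hz | hz
    · simp [lapl, pd_χ_in hz, pd_pd_χ_in hz]
    · rw [kk ζ hz]; ring
  simp_rw [e2]
  have cs0 : ∀ l, HasCompactSupport (fun ζ => pd l χ ζ * Kt j (y - ζ)) := fun l => (pd_compact χ_cs l).mul_right
  have cd0 : ∀ l, ContDiff ℝ 1 (fun ζ => pd l χ ζ * Kt j (y - ζ)) := fun l => (pd_contDiff h2 l).mul kyc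
  have I0 : Integrable (fun ζ => χ ζ * lapl U ζ * K j (y - ζ)) :=
    intK (g := fun ζ => χ ζ * lapl U ζ) (h2.continuous.mul ulc) χ_cs.mul_right y j
  have I1 : ∀ l, Integrable (fun ζ => (pd l χ ζ * Kt j (y - ζ)) * pd l U ζ) := fun l =>
    ((cd0 l).continuous.mul (pd_continuous U1 l)).integrable_of_hasCompactSupport ((cs0 l).mul_right)
  have I2 : Integrable (fun ζ => lapl χ ζ * Kt j (y - ζ) * U ζ) :=
    (by fun_prop : Continuous (fun ζ => lapl χ ζ * Kt j (y - ζ) * U ζ)).integrable_of_hasCompactSupport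
      (xls.mul_right.mul_right)
  have I3 : ∀ l, Integrable (fun ζ => pd l (fun ζ => pd l χ ζ * Kt j (y - ζ)) ζ * U ζ) := fun l =>
    ((pd_continuous (cd0 l) l).mul uc).integrable_of_hasCompactSupport ((pd_compact (cs0 l) l).mul_right)
  have I4 : ∀ l, Integrable (fun ζ => (pd l χ ζ * Kt j (y - ζ)) * U ζ) := fun l =>
    ((cd0 l).continuous.mul uc).integrable_of_hasCompactSupport ((cs0 l).mul_right)
  have ibp : ∀ l, ∫ ζ, (pd l χ ζ * Kt j (y - ζ)) * pd l U ζ = - ∫ ζ, pd l (fun ζ => pd l χ ζ * Kt j (y - ζ)) ζ * U ζ := by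
    intro l
    exact integral_mul_fderiv_eq_neg_fderiv_mul_of_integrable (I3 l) (I1 l) (I4 l)
      (fun x _ => (cd0 l).differentiable one_ne_zero x) (fun x _ => U1.differentiable one_ne_zero x)
  have A1 := integral_add I0 ((((I1 0).const_mul 2).add ((I1 1).const_mul 2)).add I2)
  have A2 := integral_add (((I1 0).const_mul 2).add ((I1 1).const_mul 2)) I2
  have A3 := integral_add ((I1 0).const_mul 2) ((I1 1).const_mul 2)
  simp only [Pi.add_apply] at A1 A2 A3
  rw [A1, A2, A3, integral_const_mul, integral_const_mul, ibp, ibp]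
  have e3 : ∀ ζ, U ζ * EE j y ζ = lapl χ ζ * Kt j (y - ζ) * U ζ -
      (2 * (pd 0 (fun ζ => pd 0 χ ζ * Kt j (y - ζ)) ζ * U ζ) + 2 * (pd 1 (fun ζ => pd 1 χ ζ * Kt j (y - ζ)) ζ * U ζ)) := by
    intro ζ
    have d : ∀ l, Differentiable ℝ (pd l χ) := fun l => (pd_contDiff h2 l).differentiable one_ne_zero
    rw [pd_mul (d 0 ζ) (kdy ζ), pd_mul (d 1 ζ) (kdy ζ), pd_comp_sub _ kd, pd_comp_sub _ kd]
    unfold EE lapl; ring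
  simp_rw [e3]
  have A4 := integral_sub I2 (((I3 0).const_mul 2).add ((I3 1).const_mul 2))
  have A5 := integral_add ((I3 0).const_mul 2) ((I3 1).const_mul 2)
  simp only [Pi.add_apply] at A4 A5
  rw [A4, A5, integral_const_mul, integral_const_mul]
  ring

end Aux

namespace Aux

lemma param_deriv (G H : ℝ × ℝ → ℝ) (hG : Continuous G) (hH : Continuous H)
    (h : ∀ ρ t, HasDerivAt (fun s => G (s, t)) (H (ρ, t)) ρ) (ρ : ℝ) :
    HasDerivAt (fun ρ => ∫ t in (-Real.pi)..Real.pi, G (ρ, t)) (∫ t in (-Real.pi)..Real.pi, H (ρ, t)) ρ := by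
  obtain ⟨C, hC⟩ := ((isCompact_closedBall ρ 1).prod (isCompact_Icc (a := -Real.pi) (b := Real.pi))).exists_bound_of_continuousOn hH.continuousOn
  refine (intervalIntegral.hasDerivAt_integral_of_dominated_loc_of_deriv_le (F := fun s t => G (s, t)) (F' := fun s t => H (s, t)) (bound := fun _ => C)
    (s := ball ρ 1) (ball_mem_nhds ρ one_pos) ?_ ?_ ?_ ?_ ?_ ?_).2
  · exact Eventually.of_forall fun s => (by fun_prop : Continuous (fun t => G (s, t))).aestronglyMeasurable
  · exact (by fun_prop : Continuous (fun t => G (ρ, t))).intervalIntegrable _ _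
  · exact (by fun_prop : Continuous (fun t => H (ρ, t))).aestronglyMeasurable
  · refine Eventually.of_forall fun t ht s hs => hC (s, t) ⟨ball_subset_closedBall hs, ?_⟩
    rw [Set.uIoc_of_le (by linarith [Real.pi_pos])] at ht
    exact ⟨ht.1.le, ht.2⟩
  · exact intervalIntegrable_const
  · exact Eventually.of_forall fun t _ s _ => h s t

lemma hasDerivAt_comp_pol_r {f : E2 → ℝ} (hf : Differentiable ℝ f) (ρ t : ℝ) :
    HasDerivAt (fun s => f (pol s t)) (Real.cos t * pd 0 f (pol ρ t) + Real.sin t * pd 1 f (pol ρ t)) ρ := by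
  have := (hf (pol ρ t)).hasFDerivAt.comp_hasDerivAt ρ (hasDerivAt_pol_r ρ t)
  rw [fderiv_vec] at this
  refine this.congr_deriv ?_
  simp [pol]

lemma hasDerivAt_comp_pol_t {f : E2 → ℝ} (hf : Differentiable ℝ f) (ρ t : ℝ) :
    HasDerivAt (fun s => f (pol ρ s)) (-(ρ * Real.sin t) * pd 0 f (pol ρ t) + ρ * Real.cos t * pd 1 f (pol ρ t)) t := by
  have := (hf (pol ρ t)).hasFDerivAt.comp_hasDerivAt t (hasDerivAt_pol_t ρ t)
  rw [fderiv_vec] at this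
  refine this.congr_deriv ?_
  simp

lemma circle_mono (U : E2 → ℝ) (hU : ContDiff ℝ 2 U) (hs : ∀ x : E2, ‖x‖ < 5/8 → lapl U x ≤ 0)
    (ρ : ℝ) (h1 : 3/8 ≤ ρ) (h2 : ρ ≤ 1/2) :
    ∫ t in (-Real.pi)..Real.pi, U (pol ρ t) ≤ ∫ t in (-Real.pi)..Real.pi, U (pol (3/8) t) := by
  have U1 : ContDiff ℝ 1 U := hU.of_le (by norm_num)
  have ud : Differentiable ℝ U := U1.differentiable one_ne_zero
  have uc : Continuous U := hU.continuous
  have p1 := fun l => pd_contDiff hU l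
  have pc := fun l => (p1 l).continuous
  have pdd := fun l => (p1 l).differentiable one_ne_zero
  have ppc := fun l m => pd_continuous (p1 l) m
  have polc := contDiff_pol.continuous
  have c0 := pc 0
  have c1 := pc 1
  have c00 := ppc 0 0
  have c01 := ppc 0 1
  have c10 := ppc 1 0
  have c11 := ppc 1 1
  set D : ℝ × ℝ → ℝ := fun p => Real.cos p.2 * pd 0 U (pol p.1 p.2) + Real.sin p.2 * pd 1 U (pol p.1 p.2) with hD
  set DD : ℝ × ℝ → ℝ := fun p => Real.cos p.2 * (Real.cos p.2 * pd 0 (pd 0 U) (pol p.1 p.2) + Real.sin p.2 * pd 1 (pd 0 U) (pol p.1 p.2))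
      + Real.sin p.2 * (Real.cos p.2 * pd 0 (pd 1 U) (pol p.1 p.2) + Real.sin p.2 * pd 1 (pd 1 U) (pol p.1 p.2)) with hDD
  have dJ := param_deriv (fun p => U (pol p.1 p.2)) D (by fun_prop) (by fun_prop)
    (fun ρ t => hasDerivAt_comp_pol_r ud ρ t)
  have dP := param_deriv (fun p => p.1 * D p) (fun p => D p + p.1 * DD p) (by fun_prop) (by fun_prop)
    (fun ρ t => by
      have a := (hasDerivAt_comp_pol_r (pdd 0) ρ t).const_mul (Real.cos t)
      have b := (hasDerivAt_comp_pol_r (pdd 1) ρ t).const_mul (Real.sin t)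
      have c := (hasDerivAt_id ρ).mul (a.add b)
      refine c.congr_deriv ?_
      simp [hD, hDD])
  set J : ℝ → ℝ := fun ρ => ∫ t in (-Real.pi)..Real.pi, U (pol ρ t) with hJ
  set P : ℝ → ℝ := fun ρ => ∫ t in (-Real.pi)..Real.pi, ρ * D (ρ, t) with hP
  have P'le : ∀ ρ, 0 ≤ ρ → ρ ≤ 1/2 → ∫ t in (-Real.pi)..Real.pi, (D (ρ, t) + ρ * DD (ρ, t)) ≤ 0 := by
    intro ρ hρ hρ2
    set T : ℝ → ℝ := fun t => -Real.sin t * pd 0 U (pol ρ t) + Real.cos t * pd 1 U (pol ρ t) with hT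
    have hTd : ∀ t, HasDerivAt T (ρ * lapl U (pol ρ t) - (D (ρ, t) + ρ * DD (ρ, t))) t := by
      intro t
      have a := (Real.hasDerivAt_sin t).neg.mul (hasDerivAt_comp_pol_t (pdd 0) ρ t)
      have b := (Real.hasDerivAt_cos t).mul (hasDerivAt_comp_pol_t (pdd 1) ρ t)
      refine (a.add b).congr_deriv ?_
      simp only [hD, hDD, lapl, Pi.neg_apply]
      rw [pd_comm hU 1 0]
      have := Real.sin_sq_add_cos_sq t
      linear_combination (ρ * (pd 0 (pd 0 U) (pol ρ t) + pd 1 (pd 1 U) (pol ρ t))) * this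
    have lc : Continuous (fun t => lapl U (pol ρ t)) := by unfold lapl; fun_prop
    have cA : Continuous (fun t => D (ρ, t) + ρ * DD (ρ, t)) := by fun_prop
    have := intervalIntegral.integral_eq_sub_of_hasDerivAt (a := -Real.pi) (b := Real.pi) (fun t _ => hTd t)
      ((by fun_prop : Continuous fun t => ρ * lapl U (pol ρ t) - (D (ρ, t) + ρ * DD (ρ, t))).intervalIntegrable _ _)
    rw [intervalIntegral.integral_sub ((lc.const_mul ρ).intervalIntegrable _ _) (cA.intervalIntegrable _ _)] at this
    have z : T Real.pi - T (-Real.pi) = 0 := by simp [hT, pol]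
    rw [z] at this
    have l0 : ∫ t in (-Real.pi)..Real.pi, ρ * lapl U (pol ρ t) ≤ 0 := by
      rw [intervalIntegral.integral_const_mul]
      refine mul_nonpos_of_nonneg_of_nonpos hρ ?_
      have := intervalIntegral.integral_mono_on (μ := volume) (a := -Real.pi) (b := Real.pi) (by linarith [Real.pi_pos])
        (lc.intervalIntegrable _ _) (g := fun _ => 0) (by simp) (fun t _ => hs _ (by rw [norm_pol _ _ hρ]; linarith))
      simpa using this
    linarith
  have P0 : P 0 = 0 := by simp [hP]
  have Pnp : ∀ ρ, 0 ≤ ρ → ρ ≤ 1/2 → P ρ ≤ 0 := by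
    have : AntitoneOn P (Set.Icc 0 (1/2)) := by
      refine antitoneOn_of_deriv_nonpos (convex_Icc _ _) (fun x _ => (dP x).continuousAt.continuousWithinAt)
        (fun x _ => (dP x).differentiableAt.differentiableWithinAt) ?_
      intro x hx
      rw [interior_Icc] at hx
      rw [(dP x).deriv]
      exact P'le x hx.1.le hx.2.le
    intro ρ a b
    rw [← P0]
    exact this ⟨le_rfl, by norm_num⟩ ⟨a, b⟩ a
  have : AntitoneOn J (Set.Icc (3/8) (1/2)) := by
    refine antitoneOn_of_deriv_nonpos (convex_Icc _ _) (fun x _ => (dJ x).continuousAt.continuousWithinAt)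
        (fun x _ => (dJ x).differentiableAt.differentiableWithinAt) ?_
    intro x hx
    rw [interior_Icc] at hx
    rw [(dJ x).deriv]
    have h3 := Pnp x (by linarith [hx.1]) hx.2.le
    simp only [hP] at h3
    rw [intervalIntegral.integral_const_mul] at h3
    have : 0 < x := by linarith [hx.1]
    by_contra h4
    push Not at h4
    nlinarith [mul_pos this h4]
  exact this ⟨le_rfl, by norm_num⟩ ⟨h1, h2⟩ h1

lemma annulus_bound (U : E2 → ℝ) (hU : ContDiff ℝ 2 U) (hs : ∀ x : E2, ‖x‖ < 5/8 → lapl U x ≤ 0)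
    (M : ℝ) (hM0 : 0 ≤ M) (hM : ∀ x : E2, ‖x‖ = 3/8 → U x ≤ M) :
    ∫ x in {x : E2 | 3/8 ≤ ‖x‖ ∧ ‖x‖ ≤ 1/2}, U x ≤ 2 * Real.pi * M := by
  have polc := contDiff_pol.continuous
  have uc : Continuous U := hU.continuous
  have ms : MeasurableSet {x : E2 | 3/8 ≤ ‖x‖ ∧ ‖x‖ ≤ 1/2} :=
    ((isClosed_le continuous_const continuous_norm).inter (isClosed_le continuous_norm continuous_const)).measurableSet
  rw [← integral_indicator ms, integral_polar]
  have e : ∫ p in Set.Ioi (0:ℝ) ×ˢ Set.Ioo (-Real.pi) Real.pi, p.1 * ({x : E2 | 3/8 ≤ ‖x‖ ∧ ‖x‖ ≤ 1/2}.indicator U (pol p.1 p.2))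
      = ∫ p in Set.Icc (3/8:ℝ) (1/2) ×ˢ Set.Ioo (-Real.pi) Real.pi, p.1 * U (pol p.1 p.2) := by
    rw [← integral_indicator (measurableSet_Ioi.prod measurableSet_Ioo), ← integral_indicator (measurableSet_Icc.prod measurableSet_Ioo)]
    congr 1; ext ⟨ρ, t⟩
    by_cases h0 : 0 < ρ
    · have hn := norm_pol ρ t h0.le
      simp only [Set.indicator, Set.mem_prod, Set.mem_Ioi, Set.mem_Icc, Set.mem_ofPred_eq, hn, h0, true_and]
      by_cases hc : 3/8 ≤ ρ ∧ ρ ≤ 1/2 <;> by_cases ht : t ∈ Set.Ioo (-Real.pi) Real.pi <;>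
        simp only [hc, ht, if_true, if_false, and_true, true_and, and_false, false_and, and_self, mul_zero]
    · have h1 : ¬ (3/8 ≤ ρ) := fun h => h0 (by linarith)
      simp [Set.indicator, h0, h1]
  rw [e]
  have ci : IntegrableOn (fun p : ℝ × ℝ => p.1 * U (pol p.1 p.2)) (Set.Icc (3/8:ℝ) (1/2) ×ˢ Set.Ioo (-Real.pi) Real.pi) := by
    have : IntegrableOn (fun p : ℝ × ℝ => p.1 * U (pol p.1 p.2)) (Set.Icc (3/8:ℝ) (1/2) ×ˢ Set.Icc (-Real.pi) Real.pi) :=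
      (by fun_prop : Continuous (fun p : ℝ × ℝ => p.1 * U (pol p.1 p.2))).continuousOn.integrableOn_compact (isCompact_Icc.prod isCompact_Icc)
    exact this.mono_set (Set.prod_mono le_rfl Set.Ioo_subset_Icc_self)
  rw [Measure.volume_eq_prod] at ci ⊢
  rw [setIntegral_prod _ ci]
  have b2 : ∀ ρ ∈ Set.Icc (3/8:ℝ) (1/2), ∫ t in Set.Ioo (-Real.pi) Real.pi, ρ * U (pol ρ t) ≤ 2 * Real.pi * M := by
    intro ρ hρ
    rw [integral_const_mul, ← integral_Ioc_eq_integral_Ioo, ← intervalIntegral.integral_of_le (by linarith [Real.pi_pos])]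
    have h1 := circle_mono U hU hs ρ hρ.1 hρ.2
    have h2 : ∫ t in (-Real.pi)..Real.pi, U (pol (3/8) t) ≤ 2 * Real.pi * M := by
      have := intervalIntegral.integral_mono_on (μ := volume) (a := -Real.pi) (b := Real.pi) (by linarith [Real.pi_pos])
        ((by fun_prop : Continuous (fun t => U (pol (3/8) t))).intervalIntegrable _ _) (g := fun _ => M) (by simp) (fun t _ => hM _ (norm_pol _ _ (by norm_num)))
      refine this.trans (le_of_eq ?_)
      rw [intervalIntegral.integral_const, smul_eq_mul]; ring
    have h3 : 0 ≤ 2 * Real.pi * M := by positivity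
    have h4 : ∫ t in (-Real.pi)..Real.pi, U (pol ρ t) ≤ 2 * Real.pi * M := h1.trans h2
    nlinarith [hρ.1, hρ.2, mul_le_mul_of_nonneg_left h4 (by linarith [hρ.1] : 0 ≤ ρ)]
  have ii : IntegrableOn (fun ρ => ∫ t in Set.Ioo (-Real.pi) Real.pi, ρ * U (pol ρ t)) (Set.Icc (3/8:ℝ) (1/2)) := by
    rw [IntegrableOn, ← Measure.prod_restrict] at ci
    exact ci.integral_prod_left
  have := setIntegral_mono_on ii (g := fun _ => 2 * Real.pi * M) (continuous_const.continuousOn.integrableOn_compact isCompact_Icc) measurableSet_Icc b2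
  refine this.trans ?_
  have h3 : 0 ≤ 2 * Real.pi * M := by positivity
  simp [Measure.real]
  norm_num
  nlinarith

/-- The basic gradient representation on the unit scale. -/
lemma rep2 : ∃ C, 0 < C ∧ ∀ (U : E2 → ℝ) (M : ℝ), ContDiff ℝ 2 U → (∀ x : E2, ‖x‖ < 5/8 → lapl U x ≤ 0) →
    (∀ x : E2, ‖x‖ < 5/8 → 0 ≤ U x) → 0 ≤ M → (∀ x : E2, ‖x‖ = 3/8 → U x ≤ M) →
    ∀ y : E2, ‖y‖ ≤ 5/16 → ∀ j, |2 * Real.pi * pd j U y - ∫ ζ, (χ ζ * lapl U ζ) * K j (y - ζ)| ≤ C * M := by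
  obtain ⟨C, hC, hE⟩ := EE_bound
  refine ⟨C * (2 * Real.pi), by positivity, fun U M hU hs h0 hM0 hM y hy j => ?_⟩
  rw [rep1 U hU y hy j, add_sub_cancel_left]
  have ms : MeasurableSet {x : E2 | 3/8 ≤ ‖x‖ ∧ ‖x‖ ≤ 1/2} :=
    ((isClosed_le continuous_const continuous_norm).inter (isClosed_le continuous_norm continuous_const)).measurableSet
  have hsub : {x : E2 | 3/8 ≤ ‖x‖ ∧ ‖x‖ ≤ 1/2} ⊆ closedBall 0 (1/2) := fun x hx => by simpa using hx.2
  have e : ∫ ζ, U ζ * EE j y ζ = ∫ ζ in {x : E2 | 3/8 ≤ ‖x‖ ∧ ‖x‖ ≤ 1/2}, U ζ * EE j y ζ := by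
    rw [← integral_indicator ms]
    congr 1; ext ζ
    by_cases h : ζ ∈ {x : E2 | 3/8 ≤ ‖x‖ ∧ ‖x‖ ≤ 1/2}
    · rw [Set.indicator_of_mem h]
    · rw [Set.indicator_of_notMem h, EE_zero _ _ _ h, mul_zero]
  rw [e]
  have i1 : IntegrableOn (fun ζ => C * U ζ) {x : E2 | 3/8 ≤ ‖x‖ ∧ ‖x‖ ≤ 1/2} :=
    (((hU.continuous.const_mul C).continuousOn.integrableOn_compact (isCompact_closedBall 0 (1/2)))).mono_set hsub
  have := norm_integral_le_of_norm_le (f := fun ζ => U ζ * EE j y ζ) i1 (by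
    filter_upwards [ae_restrict_mem ms] with ζ hζ
    have hu := h0 ζ (by linarith [hζ.2])
    rw [norm_mul, Real.norm_eq_abs, Real.norm_eq_abs, abs_of_nonneg hu, mul_comm]
    gcongr
    exact hE j y ζ hy)
  rw [Real.norm_eq_abs, integral_const_mul] at this
  refine this.trans ?_
  rw [mul_assoc]
  gcongr
  exact annulus_bound U hU hs M hM0 hM

end Aux

namespace Aux

lemma second_deriv_min (g g' : ℝ → ℝ) (c : ℝ) (h1 : ∀ᶠ t in nhds 0, HasDerivAt g (g' t) t)
    (h2 : HasDerivAt g' c 0) (hm : IsLocalMin g 0) : 0 ≤ c := by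
  by_contra hc
  push Not at hc
  have e : deriv g =ᶠ[nhds 0] g' := h1.mono fun t ht => ht.deriv
  have d2 : deriv (deriv g) 0 = c := by rw [e.deriv_eq, h2.deriv]
  have d1 : deriv g 0 = 0 := hm.deriv_eq_zero
  have hM : IsLocalMax g 0 := isLocalMax_of_deriv_deriv_neg (by rw [d2]; exact hc) d1 h1.self_of_nhds.continuousAt
  have ec : g =ᶠ[nhds 0] fun _ => g 0 := by
    filter_upwards [hm, hM] with t a b using le_antisymm b a
  have e2 : deriv g =ᶠ[nhds 0] fun _ => 0 := by
    have := ec.deriv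
    refine this.trans ?_
    simp
  rw [e2.deriv_eq] at d2
  simp at d2
  linarith

lemma line_deriv (u : E2 → ℝ) (x : E2) (j : Fin 2) (t : ℝ) (h : DifferentiableAt ℝ u (x + t • EuclideanSpace.single j 1)) :
    HasDerivAt (fun t : ℝ => u (x + t • EuclideanSpace.single j 1)) (pd j u (x + t • EuclideanSpace.single j 1)) t := by
  have a : HasDerivAt (fun t : ℝ => x + t • (EuclideanSpace.single j 1 : E2)) ((1:ℝ) • (EuclideanSpace.single j 1 : E2)) t :=
    ((hasDerivAt_id t).smul_const _).const_add x
  have := h.hasFDerivAt.comp_hasDerivAt t a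
  rw [one_smul] at this
  exact this

lemma pd_contDiffAt {u : E2 → ℝ} {x : E2} (h : ContDiffAt ℝ 2 u x) (j : Fin 2) : ContDiffAt ℝ 1 (pd j u) x := by
  have : ContDiffAt ℝ 1 (fderiv ℝ u) x := h.fderiv_right (by norm_num)
  exact this.clm_apply contDiffAt_const

lemma pd_pd_min (u : E2 → ℝ) (x : E2) (ε : ℝ) (j : Fin 2) (h : ContDiffAt ℝ 2 u x)
    (hm : IsLocalMin (fun y => u y - ε * ‖y‖ ^ 2) x) : 2 * ε ≤ pd j (pd j u) x := by
  have c : ContinuousAt (fun t : ℝ => x + t • (EuclideanSpace.single j 1 : E2)) 0 := by fun_prop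
  have c0 : Tendsto (fun t : ℝ => x + t • (EuclideanSpace.single j 1 : E2)) (nhds 0) (nhds x) := by
    have := c.tendsto; simpa using this
  have n : ∀ t : ℝ, ‖x + t • (EuclideanSpace.single j 1 : E2)‖ ^ 2 = ‖x‖ ^ 2 + 2 * t * x j + t ^ 2 := by
    intro t
    rw [nsq, nsq]
    fin_cases j <;> simp <;> ring
  have hd : ∀ᶠ y in nhds x, DifferentiableAt ℝ u y := by
    have := h.eventually (by simp)
    exact this.mono fun y hy => hy.differentiableAt (by norm_num)
  have := second_deriv_min (fun t => u (x + t • EuclideanSpace.single j 1) - ε * (‖x‖ ^ 2 + 2 * t * x j + t ^ 2))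
    (fun t => pd j u (x + t • EuclideanSpace.single j 1) - ε * (2 * x j + 2 * t)) (pd j (pd j u) x - ε * 2) ?_ ?_ ?_
  · linarith
  · filter_upwards [c0.eventually hd] with t ht
    have A : HasDerivAt (fun t : ℝ => ‖x‖ ^ 2 + 2 * t * x j + t ^ 2) (2 * x j + 2 * t) t := by
      have a1 := (((hasDerivAt_id t).const_mul 2).mul_const (x j)).const_add (‖x‖^2)
      have a2 := a1.add ((hasDerivAt_id t).pow 2)
      refine a2.congr_deriv ?_
      simp
    exact (line_deriv u x j t ht).sub (A.const_mul ε)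
  · have := line_deriv (pd j u) x j 0 (by simpa using (pd_contDiffAt h j).differentiableAt (by norm_num))
    have A : HasDerivAt (fun t : ℝ => (2 * x j + 2 * t)) 2 0 := by
      have := ((hasDerivAt_id (0:ℝ)).const_mul 2).const_add (2 * x j)
      refine this.congr_deriv ?_
      simp
    refine (this.sub (A.const_mul ε)).congr_deriv ?_
    simp
  · have := c0.eventually hm
    filter_upwards [this] with t ht
    simp only [n] at ht
    simpa using ht

lemma min_principle (u : E2 → ℝ) (hu : ContDiffOn ℝ 2 u (closedBall (0:E2) 1))
    (hl : ∀ x ∈ ball (0:E2) 1, lapl u x ≤ 0) (hb : ∀ x ∈ sphere (0:E2) 1, u x = 0) :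
    ∀ x ∈ closedBall (0:E2) 1, 0 ≤ u x := by
  intro x0 hx0
  by_contra hc
  push Not at hc
  set ε := - u x0 / 2 with hε
  have εp : 0 < ε := by linarith
  obtain ⟨x1, hx1, hmin⟩ := (isCompact_closedBall (0:E2) 1).exists_isMinOn ⟨x0, hx0⟩
    (f := fun y => u y - ε * ‖y‖ ^ 2) (hu.continuousOn.sub (by fun_prop))
  have h1 : u x1 - ε * ‖x1‖ ^ 2 ≤ u x0 - ε * ‖x0‖ ^ 2 := hmin hx0
  have n1 : ‖x1‖ ≤ 1 := by simpa using hx1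
  have x1b : x1 ∈ ball (0:E2) 1 := by
    by_contra h
    have : ‖x1‖ = 1 := by
      have : ¬ ‖x1‖ < 1 := by simpa using h
      linarith
    have h2 := hb x1 (by simpa using this)
    rw [this, h2] at h1
    have : 0 ≤ ε * ‖x0‖ ^ 2 := by positivity
    linarith
  have nb : closedBall (0:E2) 1 ∈ nhds x1 := mem_of_superset (isOpen_ball.mem_nhds x1b) ball_subset_closedBall
  have hloc : IsLocalMin (fun y => u y - ε * ‖y‖ ^ 2) x1 := hmin.isLocalMin nb
  have cd : ContDiffAt ℝ 2 u x1 := hu.contDiffAt nb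
  have a := pd_pd_min u x1 ε 0 cd hloc
  have b := pd_pd_min u x1 ε 1 cd hloc
  have := hl x1 x1b
  unfold lapl at this
  linarith

lemma pd_affine (f : E2 → ℝ) (a : E2) (c : ℝ) (x : E2) (j : Fin 2) :
    pd j (fun y => f (a + c • y)) x = c * pd j f (a + c • x) := by
  unfold pd
  have := fderiv_comp_smul (𝕜 := ℝ) (f := fun z => f (a + z)) (x := x) c
  simp only [fderiv_comp_add_left] at this
  rw [this]
  simp

lemma lapl_affine (f : E2 → ℝ) (a : E2) (c : ℝ) (x : E2) :
    lapl (fun y => f (a + c • y)) x = c ^ 2 * lapl f (a + c • x) := by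
  have : ∀ j, pd j (pd j (fun y => f (a + c • y))) x = c ^ 2 * pd j (pd j f) (a + c • x) := by
    intro j
    have e : pd j (fun y => f (a + c • y)) = fun y => c * pd j f (a + c • y) := by
      ext y; exact pd_affine f a c y j
    rw [e]
    have : pd j (fun y => c * pd j f (a + c • y)) x = c * pd j (fun y => pd j f (a + c • y)) x := by
      unfold pd
      have := fderiv_const_smul_field (𝕜 := ℝ) c (f := fun y => fderiv ℝ f (a + c • y) (EuclideanSpace.single j 1))
      simp only [Pi.smul_def, smul_eq_mul] at this
      rw [this]; simp
    rw [this, pd_affine]; ring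
  unfold lapl
  rw [this, this]; ring

lemma lapl_congr {f g : E2 → ℝ} {x : E2} (h : f =ᶠ[nhds x] g) : lapl f x = lapl g x := by
  have : ∀ j, pd j f =ᶠ[nhds x] pd j g := fun j => h.eventuallyEq_nhds.mono fun y hy => pd_congr hy j
  unfold lapl
  rw [pd_congr (this 0), pd_congr (this 1)]

lemma K_smul (j : Fin 2) (c : ℝ) (w : E2) (hc : 0 < c) : K j (c • w) = K j w / c := by
  unfold K
  rw [norm_smul, Real.norm_eq_abs, abs_of_pos hc]
  simp
  field_simp

lemma infDist_le (x : E2) (hx : x ∈ ball (0:E2) 1) : Metric.infDist x (sphere (0:E2) 1) ≤ 1 - ‖x‖ := by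
  have hx' : ‖x‖ < 1 := by simpa using hx
  by_cases h : x = 0
  · have : (EuclideanSpace.single 0 1 : E2) ∈ sphere (0:E2) 1 := by simp
    refine (Metric.infDist_le_dist_of_mem this).trans ?_
    simp [h]
  · have n : 0 < ‖x‖ := norm_pos_iff.mpr h
    have : (‖x‖⁻¹ • x : E2) ∈ sphere (0:E2) 1 := by
      simp [norm_smul, n.ne']
    refine (Metric.infDist_le_dist_of_mem this).trans ?_
    have e : x - ‖x‖⁻¹ • x = (1 - ‖x‖⁻¹) • x := by rw [sub_smul, one_smul]
    rw [dist_eq_norm, e, norm_smul, Real.norm_eq_abs, abs_of_nonpos]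
    · field_simp; linarith
    · have : 1 ≤ ‖x‖⁻¹ := (one_le_inv₀ n).mpr hx'.le
      linarith

structure Data (C b : ℝ) (v W f : E2 → ℝ) (lam m : ℝ) : Prop where
  lam_pos : 0 < lam
  fc : Continuous f
  fcs : HasCompactSupport f
  f0 : ∀ z, 0 ≤ f z
  fb : ∀ z, f z ≤ b
  fm : ∫ z, f z ≤ m
  feq : ∀ z, lam * ‖z‖ ≤ 3/8 → f z = W z * Real.exp (v z)
  vC : ∀ z, lam * ‖z‖ < 5/8 → ContDiffAt ℝ 2 v z
  v0 : ∀ z, lam * ‖z‖ < 5/8 → v z ≤ 0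
  R : ∀ θ, lam * ‖θ‖ ≤ 5/16 → ∀ j, |2 * Real.pi * pd j v θ + ∫ ζ, f ζ * K j (θ - ζ)| ≤ C * lam

end Aux

namespace Aux

noncomputable def bχ2 : ContDiffBump (0:E2) := ⟨5/8, 3/4, by norm_num, by norm_num⟩

lemma U_cd (u : E2 → ℝ) (hu : ContDiffOn ℝ 2 u (closedBall (0:E2) 1)) (x0 : E2) (δ : ℝ) (hδ : 0 < δ) (hδ1 : δ ≤ 1 - ‖x0‖) :
    ContDiff ℝ 2 (fun y => bχ2 y * u (x0 + δ • y)) := by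
  rw [contDiff_iff_contDiffAt]
  intro y
  by_cases h : ‖y‖ < 1
  · have hb : x0 + δ • y ∈ ball (0:E2) 1 := by
      rw [mem_ball_zero_iff]
      have := norm_add_le x0 (δ • y)
      rw [norm_smul, Real.norm_eq_abs, abs_of_pos hδ] at this
      nlinarith
    have c1 : ContDiffAt ℝ 2 u (x0 + δ • y) := hu.contDiffAt (mem_of_superset (isOpen_ball.mem_nhds hb) ball_subset_closedBall)
    have c2 : ContDiffAt ℝ 2 (fun y : E2 => x0 + δ • y) y := by fun_prop
    exact (bχ2.contDiff.contDiffAt).mul (c1.comp y c2)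
  · have : (fun y => bχ2 y * u (x0 + δ • y)) =ᶠ[nhds y] fun _ => 0 := by
      have ho : {y : E2 | 3/4 < ‖y‖} ∈ nhds y := (isOpen_lt continuous_const continuous_norm).mem_nhds (by
        show 3/4 < ‖y‖
        linarith [not_lt.mp h])
      filter_upwards [ho] with z hz
      have : bχ2 z = 0 := bχ2.zero_of_le_dist (by
        have hz : 3/4 < ‖z‖ := hz
        simpa [bχ2] using hz.le)
      rw [this, zero_mul]
    exact contDiffAt_const.congr_of_eventuallyEq this

lemma mkData : ∃ C, 0 < C ∧ ∀ (u V v : E2 → ℝ) (x0 : E2) (δ r M b : ℝ),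
    ContDiffOn ℝ 2 u (closedBall (0:E2) 1) →
    (∀ x ∈ ball (0:E2) 1, 0 ≤ V x ∧ V x ≤ b) →
    (∀ x ∈ ball (0:E2) 1, -(lapl u x) = V x * Real.exp (u x)) →
    (∀ x ∈ sphere (0:E2) 1, u x = 0) →
    x0 ∈ ball (0:E2) 1 →
    (∀ y ∈ closedBall (0:E2) 1, u y ≤ u x0) →
    0 < δ → δ ≤ 1 - ‖x0‖ → r = Real.exp (-(u x0) / 2) → 0 ≤ M →
    (∀ y : E2, ‖y‖ = 3/8 → u (x0 + δ • y) ≤ M) →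
    (∀ θ, v θ = u (x0 + r • θ) - u x0) →
    Data (C * M) b v (fun z => V (x0 + r • z)) (fun z => χ ((r / δ) • z) * (V (x0 + r • z) * Real.exp (v z))) (r / δ)
      (∫ y in ball x0 (δ / 2), V y * Real.exp (u y)) := by
  obtain ⟨C, hC, hrep⟩ := rep2
  refine ⟨C, hC, fun u V v x0 δ r M b hu hV hp hb hx0 hmax hδ hδ1 hr hM hMb hv => ?_⟩
  have rp : 0 < r := by rw [hr]; exact Real.exp_pos _
  set lam := r / δ with hlam
  have lp : 0 < lam := by positivity
  have rl : r = δ * lam := by rw [hlam]; field_simp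
  have r2 : r ^ 2 * Real.exp (u x0) = 1 := by
    rw [hr, ← Real.exp_nat_mul, ← Real.exp_add]; simp; ring
  have hin : ∀ y : E2, ‖y‖ < 1 → x0 + δ • y ∈ ball (0:E2) 1 := by
    intro y h
    rw [mem_ball_zero_iff]
    have := norm_add_le x0 (δ • y)
    rw [norm_smul, Real.norm_eq_abs, abs_of_pos hδ] at this
    nlinarith
  have unn := min_principle u hu (fun x hx => by
    have := hp x hx
    have h2 := mul_nonneg (hV x hx).1 (Real.exp_pos (u x)).le
    linarith) hb
  set U : E2 → ℝ := fun y => bχ2 y * u (x0 + δ • y) with hU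
  have Ucd : ContDiff ℝ 2 U := U_cd u hu x0 δ hδ hδ1
  have one : ∀ y : E2, ‖y‖ ≤ 5/8 → bχ2 y = 1 := fun y h => bχ2.one_of_mem_closedBall (by simpa [bχ2] using h)
  have ev : ∀ y : E2, ‖y‖ < 5/8 → U =ᶠ[nhds y] fun y => u (x0 + δ • y) := by
    intro y hy
    have ho : {y : E2 | ‖y‖ < 5/8} ∈ nhds y := (isOpen_lt continuous_norm continuous_const).mem_nhds hy
    filter_upwards [ho] with z hz
    have hz : ‖z‖ < 5/8 := hz
    simp only [hU]
    rw [one z hz.le, one_mul]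
  have lapU : ∀ y : E2, ‖y‖ < 5/8 → lapl U y = - (δ ^ 2 * (V (x0 + δ • y) * Real.exp (u (x0 + δ • y)))) := by
    intro y hy
    rw [lapl_congr (ev y hy), lapl_affine, ← hp _ (hin y (by linarith))]; ring
  have lapUc : Continuous (lapl U) := by
    have := (pd_continuous (pd_contDiff Ucd 0) 0).add (pd_continuous (pd_contDiff Ucd 1) 1)
    exact this
  have nl : ∀ z : E2, ‖lam • z‖ = lam * ‖z‖ := fun z => by rw [norm_smul, Real.norm_eq_abs, abs_of_pos lp]
  have rz : ∀ z : E2, r • z = δ • lam • z := fun z => by rw [smul_smul, ← rl]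
  -- the key identity
  have key : ∀ z : E2, ‖lam • z‖ < 5/8 → V (x0 + r • z) * Real.exp (v z) = - lam ^ 2 * lapl U (lam • z) := by
    intro z hz
    rw [lapU _ hz, ← rz, hv, Real.exp_sub]
    have : Real.exp (u x0) = 1 / r ^ 2 := by field_simp; linarith
    rw [this, rl]
    field_simp
  have fe : ∀ z : E2, χ (lam • z) * (V (x0 + r • z) * Real.exp (v z)) = - lam ^ 2 * (χ (lam • z) * lapl U (lam • z)) := by
    intro z
    by_cases h : ‖lam • z‖ < 5/8
    · rw [key z h]; ring
    · rw [χ_zero (by linarith [not_lt.mp h])]; ring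
  have f0 : ∀ z, 0 ≤ χ (lam • z) * (V (x0 + r • z) * Real.exp (v z)) := by
    intro z
    by_cases h : ‖lam • z‖ < 5/8
    · have := (hV _ (hin (lam • z) (by linarith))).1
      rw [← rz] at this
      have := χ_nonneg (lam • z)
      positivity
    · rw [χ_zero (by linarith [not_lt.mp h])]; simp
  have v0 : ∀ z, lam * ‖z‖ < 5/8 → v z ≤ 0 := by
    intro z hz
    rw [← nl] at hz
    rw [hv, rz]
    have := hmax _ (ball_subset_closedBall (hin (lam • z) (by linarith)))
    linarith
  have bnn : 0 ≤ b := (hV x0 hx0).1.trans (hV x0 hx0).2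
  have χc : Continuous χ := χ_cd.continuous
  have feq : (fun z => χ (lam • z) * (V (x0 + r • z) * Real.exp (v z))) = fun z => - lam ^ 2 * (χ (lam • z) * lapl U (lam • z)) := by
    ext z; exact fe z
  have fc : Continuous (fun z => χ (lam • z) * (V (x0 + r • z) * Real.exp (v z))) := by
    rw [feq]; fun_prop
  have fcs : HasCompactSupport (fun z => χ (lam • z) * (V (x0 + r • z) * Real.exp (v z))) := by
    refine HasCompactSupport.mul_right ?_
    exact χ_cs.comp_smul lp.ne'
  have evv : ∀ z, lam * ‖z‖ < 5/8 → v =ᶠ[nhds z] fun z => U (lam • z) - u x0 := by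
    intro z hz
    have ho : {y : E2 | lam * ‖y‖ < 5/8} ∈ nhds z := (isOpen_lt (by fun_prop) continuous_const).mem_nhds hz
    filter_upwards [ho] with w hw
    have hw : lam * ‖w‖ < 5/8 := hw
    rw [← nl] at hw
    simp only [hU]
    rw [hv, one _ hw.le, one_mul, rz]
  refine ⟨lp, fc, fcs, f0, ?_, ?_, ?_, ?_, v0, ?_⟩
  · intro z
    by_cases h : ‖lam • z‖ < 5/8
    · have h1 := (hV _ (hin (lam • z) (by linarith)))
      rw [← rz] at h1
      have h2 : Real.exp (v z) ≤ 1 := Real.exp_le_one_iff.mpr (v0 z (by rw [← nl]; exact h))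
      have h3 : V (x0 + r • z) * Real.exp (v z) ≤ b * 1 := mul_le_mul h1.2 h2 (Real.exp_pos _).le bnn
      have h4 := χ_le_one (lam • z)
      have h5 := χ_nonneg (lam • z)
      calc _ ≤ 1 * (b * 1) := mul_le_mul h4 h3 (mul_nonneg h1.1 (Real.exp_pos _).le) zero_le_one
        _ = b := by ring
    · rw [χ_zero (by linarith [not_lt.mp h])]; simpa using bnn
  · -- mass
    have e1 : ∫ y in ball x0 (δ / 2), V y * Real.exp (u y)
        = ∫ z, (ball (0:E2) (1/2)).indicator (fun y => - lapl U y) z := by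
      rw [← integral_indicator measurableSet_ball]
      have t1 := integral_add_left_eq_self (μ := (volume : Measure E2)) ((ball x0 (δ / 2)).indicator fun y => V y * Real.exp (u y)) x0
      rw [← t1]
      have t2 := Measure.integral_comp_smul (volume : Measure E2) (fun z => (ball x0 (δ / 2)).indicator (fun y => V y * Real.exp (u y)) (x0 + z)) δ
      rw [finrank_euclideanSpace_fin, abs_of_pos (by positivity), smul_eq_mul] at t2
      have t3 : ∫ z, (ball x0 (δ / 2)).indicator (fun y => V y * Real.exp (u y)) (x0 + z) =
        δ ^ 2 * ∫ z, (ball x0 (δ / 2)).indicator (fun y => V y * Real.exp (u y)) (x0 + δ • z) := by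
        rw [t2]; field_simp
      rw [t3, ← integral_const_mul]
      congr 1; ext z
      have hm : x0 + δ • z ∈ ball x0 (δ / 2) ↔ z ∈ ball (0:E2) (1/2) := by
        rw [mem_ball_iff_norm, add_sub_cancel_left, norm_smul, Real.norm_eq_abs, abs_of_pos hδ, mem_ball_zero_iff]
        constructor
        · intro h; by_contra h2; push Not at h2; nlinarith
        · intro h; nlinarith
      by_cases h : z ∈ ball (0:E2) (1/2)
      · rw [Set.indicator_of_mem (hm.mpr h), Set.indicator_of_mem h, lapU z (by
          rw [mem_ball_zero_iff] at h; linarith)]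
        ring
      · rw [Set.indicator_of_notMem (fun h' => h (hm.mp h')), Set.indicator_of_notMem h, mul_zero]
    have e2 : ∫ z, χ (lam • z) * (V (x0 + r • z) * Real.exp (v z)) = ∫ z, χ z * (- lapl U z) := by
      have t2 := Measure.integral_comp_smul (volume : Measure E2) (fun z => χ z * (- lapl U z)) lam
      rw [finrank_euclideanSpace_fin, abs_of_pos (by positivity), smul_eq_mul] at t2
      have : ∫ z, χ z * (- lapl U z) = lam ^ 2 * ∫ z, χ (lam • z) * (- lapl U (lam • z)) := by
        rw [t2]; field_simp
      rw [this, ← integral_const_mul, feq]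
      congr 1; ext z; ring
    rw [e1, e2]
    refine integral_mono ?_ ?_ ?_
    · exact (χc.mul lapUc.neg).integrable_of_hasCompactSupport χ_cs.mul_right
    · rw [integrable_indicator_iff measurableSet_ball]
      exact (lapUc.neg.continuousOn.integrableOn_compact (isCompact_closedBall 0 (1/2))).mono_set ball_subset_closedBall
    · intro z
      by_cases h : z ∈ ball (0:E2) (1/2)
      · simp only [Set.indicator_of_mem h]
        rw [mem_ball_zero_iff] at h
        have h1 : 0 ≤ - lapl U z := by
          rw [lapU z (by linarith), neg_neg]
          have := (hV _ (hin z (by linarith))).1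
          positivity
        have := χ_le_one z
        nlinarith
      · simp only [Set.indicator_of_notMem h]
        rw [mem_ball_zero_iff, not_lt] at h
        rw [χ_zero h, zero_mul]
  · intro z hz
    rw [χ_one (by rw [nl]; exact hz), one_mul]
  · intro z hz
    refine ContDiffAt.congr_of_eventuallyEq ?_ (evv z hz)
    have : ContDiff ℝ 2 (fun z => U (lam • z) - u x0) := by fun_prop
    exact this.contDiffAt
  · intro θ hθ j
    have := hrep U M Ucd (fun x hx => by
        rw [lapU x hx]
        have := (hV _ (hin x (by linarith))).1
        have : 0 ≤ δ ^ 2 * (V (x0 + δ • x) * Real.exp (u (x0 + δ • x))) := by positivity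
        linarith)
      (fun x hx => mul_nonneg bχ2.nonneg (unn _ (ball_subset_closedBall (hin x (by linarith))))) hM (fun x hx => by
        simp only [hU]
        rw [one x (by linarith), one_mul]
        exact hMb x hx) (lam • θ) (by rw [nl]; exact hθ) j
    have p1 : pd j v θ = lam * pd j U (lam • θ) := by
      rw [pd_congr (evv θ (by linarith))]
      have := pd_affine U 0 lam θ j
      simp only [zero_add] at this
      rw [← this]
      unfold pd
      rw [fderiv_sub_const]
    have i1 : ∫ ζ, (χ ζ * lapl U ζ) * K j (lam • θ - ζ) = lam * ∫ ζ, (χ (lam • ζ) * lapl U (lam • ζ)) * K j (θ - ζ) := by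
      have t2 := Measure.integral_comp_smul (volume : Measure E2) (fun ζ => (χ ζ * lapl U ζ) * K j (lam • θ - ζ)) lam
      rw [finrank_euclideanSpace_fin, abs_of_pos (by positivity), smul_eq_mul] at t2
      have : ∫ ζ, (χ ζ * lapl U ζ) * K j (lam • θ - ζ) = lam ^ 2 * ∫ ζ, (χ (lam • ζ) * lapl U (lam • ζ)) * K j (lam • θ - lam • ζ) := by
        rw [t2]; field_simp
      rw [this, ← integral_const_mul, ← integral_const_mul]
      congr 1; ext z
      rw [← smul_sub, K_smul _ _ _ lp]; field_simp
    have i2 : ∫ ζ, χ (lam • ζ) * (V (x0 + r • ζ) * Real.exp (v ζ)) * K j (θ - ζ) = - lam ^ 2 * ∫ ζ, (χ (lam • ζ) * lapl U (lam • ζ)) * K j (θ - ζ) := by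
      rw [← integral_const_mul]
      congr 1; ext z
      rw [fe]; ring
    rw [i1] at this
    rw [p1, i2]
    set I := ∫ ζ, (χ (lam • ζ) * lapl U (lam • ζ)) * K j (θ - ζ)
    have e : 2 * Real.pi * (lam * pd j U (lam • θ)) + -lam ^ 2 * I = lam * (2 * Real.pi * pd j U (lam • θ) - lam * I) := by ring
    rw [e, abs_mul, abs_of_pos lp, mul_comm]
    gcongr

end Aux

namespace Aux

structure Sq (C b V₀ : ℝ) (v W f : ℕ → E2 → ℝ) (lam m : ℕ → ℝ) (u₀ : E2 → ℝ) : Prop where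
  D : ∀ i, Data C b (v i) (W i) (f i) (lam i) (m i)
  lam0 : Tendsto lam atTop (nhds 0)
  m0 : Tendsto m atTop (nhds (8 * Real.pi))
  W0 : ∀ η > 0, ∃ i₀ : ℕ, ∀ i ≥ i₀, ∀ z : E2, lam i * ‖z‖ ≤ 3/8 → |W i z - V₀| ≤ η
  V0 : 0 < V₀
  cv : ∀ R : ℝ, TendstoUniformlyOn v u₀ atTop (closedBall 0 R)
  cd : ∀ R : ℝ, TendstoUniformlyOn (fun i => fderiv ℝ (v i)) (fderiv ℝ u₀) atTop (closedBall 0 R)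

variable {C b V₀ : ℝ} {v W f : ℕ → E2 → ℝ} {lam m : ℕ → ℝ} {u₀ : E2 → ℝ}

lemma Data.fi {v W f : E2 → ℝ} {lam m : ℝ} (D : Data C b v W f lam m) : Integrable f :=
  D.fc.integrable_of_hasCompactSupport D.fcs

lemma Sq.small (S : Sq C b V₀ v W f lam m u₀) (R : ℝ) (a : ℝ) (ha : 0 < a) :
    ∀ᶠ i in atTop, ∀ z : E2, ‖z‖ ≤ R → lam i * ‖z‖ < a := by
  have := S.lam0.mul_const R
  rw [zero_mul] at this
  filter_upwards [this.eventually (gt_mem_nhds ha)] with i hi z hz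
  have := (S.D i).lam_pos
  nlinarith

lemma Sq.u0c (S : Sq C b V₀ v W f lam m u₀) : Continuous u₀ := by
  rw [continuous_iff_continuousAt]
  intro x
  have : ContinuousOn u₀ (closedBall 0 (‖x‖ + 1)) := by
    refine (S.cv (‖x‖+1)).continuousOn (Eventually.frequently ?_)
    filter_upwards [S.small (‖x‖+1) (5/8) (by norm_num)] with i hi
    intro z hz
    exact ((S.D i).vC z (hi z (by simpa using hz))).continuousAt.continuousWithinAt
  exact this.continuousAt (closedBall_mem_nhds_of_mem (by simp))

lemma Sq.u0dc (S : Sq C b V₀ v W f lam m u₀) : Continuous (fderiv ℝ u₀) := by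
  rw [continuous_iff_continuousAt]
  intro x
  have : ContinuousOn (fderiv ℝ u₀) (closedBall 0 (‖x‖ + 1)) := by
    refine (S.cd (‖x‖+1)).continuousOn (Eventually.frequently ?_)
    filter_upwards [S.small (‖x‖+1) (5/8) (by norm_num)] with i hi
    intro z hz
    have h := ((S.D i).vC z (hi z (by simpa using hz)))
    have : ContDiffAt ℝ 1 (fderiv ℝ (v i)) z := h.fderiv_right (by norm_num)
    exact this.continuousAt.continuousWithinAt
  exact this.continuousAt (closedBall_mem_nhds_of_mem (by simp))

lemma Sq.pt (S : Sq C b V₀ v W f lam m u₀) (x : E2) : Tendsto (fun i => v i x) atTop (nhds (u₀ x)) :=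
  (S.cv ‖x‖).tendsto_at (by simp)

lemma Sq.pt' (S : Sq C b V₀ v W f lam m u₀) (x : E2) : Tendsto (fun i => fderiv ℝ (v i) x) atTop (nhds (fderiv ℝ u₀ x)) :=
  (S.cd ‖x‖).tendsto_at (by simp)

lemma Sq.u0d (S : Sq C b V₀ v W f lam m u₀) : Differentiable ℝ u₀ := by
  intro x
  have nb : closedBall 0 (‖x‖+1) ∈ nhds x := closedBall_mem_nhds_of_mem (by simp)
  have h := hasFDerivAt_of_tendstoUniformlyOnFilter (𝕜 := ℝ) (l := atTop) (f := v) (g := u₀)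
    (f' := fun i => fderiv ℝ (v i)) (g' := fderiv ℝ u₀) (x := x) ?_ ?_ ?_
  · exact h.differentiableAt
  · have := (S.cd (‖x‖+1)).tendstoUniformlyOnFilter
    exact this.mono_right (le_principal_iff.mpr nb)
  · have a := (S.small (‖x‖+1) (5/8) (by norm_num)).prod_mk (eventually_mem_set.mpr nb)
    filter_upwards [a] with n hn
    exact (((S.D n.1).vC n.2 (hn.1 n.2 (by simpa using hn.2))).differentiableAt (by norm_num)).hasFDerivAt
  · exact Eventually.of_forall S.pt

lemma Sq.u0np (S : Sq C b V₀ v W f lam m u₀) (x : E2) : u₀ x ≤ 0 := by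
  refine le_of_tendsto (S.pt x) ?_
  filter_upwards [S.small ‖x‖ (5/8) (by norm_num)] with i hi
  exact (S.D i).v0 x (hi x le_rfl)

lemma exp_sub_le (a b : ℝ) (ha : a ≤ 0) (hb : b ≤ 0) : |Real.exp a - Real.exp b| ≤ |a - b| := by
  wlog h : b ≤ a generalizing a b
  · rw [abs_sub_comm, abs_sub_comm a]; exact this b a hb ha (le_of_not_ge h)
  rw [abs_of_nonneg (sub_nonneg.mpr (Real.exp_le_exp.mpr h)), abs_of_nonneg (sub_nonneg.mpr h)]
  have h1 := Real.add_one_le_exp (b - a)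
  have h2 : Real.exp b = Real.exp a * Real.exp (b - a) := by rw [← Real.exp_add]; ring_nf
  have h3 : Real.exp a ≤ 1 := Real.exp_le_one_iff.mpr ha
  have h4 := Real.exp_pos a
  nlinarith

lemma Sq.fconv (S : Sq C b V₀ v W f lam m u₀) (R η : ℝ) (hη : 0 < η) :
    ∀ᶠ i in atTop, ∀ z : E2, ‖z‖ ≤ R → |f i z - V₀ * Real.exp (u₀ z)| ≤ η := by
  have V0 := S.V0
  obtain ⟨i₀, h0⟩ := S.W0 (η / 2) (by linarith)
  have h1 := Metric.tendstoUniformlyOn_iff.mp (S.cv R) (η / (2 * V₀)) (by positivity)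
  filter_upwards [S.small R (3/8) (by norm_num), eventually_ge_atTop i₀, h1] with i hi hi0 h1 z hz
  have l := hi z hz
  have a := h0 i hi0 z l.le
  have b1 := h1 z (by simpa using hz)
  rw [Real.dist_eq, abs_sub_comm] at b1
  have vn := (S.D i).v0 z (by linarith)
  have c := exp_sub_le _ _ vn (S.u0np z)
  rw [(S.D i).feq z l.le]
  have e : W i z * Real.exp (v i z) - V₀ * Real.exp (u₀ z) = (W i z - V₀) * Real.exp (v i z) + V₀ * (Real.exp (v i z) - Real.exp (u₀ z)) := by ring
  rw [e]
  refine (abs_add_le _ _).trans ?_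
  rw [abs_mul, abs_mul, abs_of_pos V0, abs_of_pos (Real.exp_pos _)]
  have h3 : Real.exp (v i z) ≤ 1 := Real.exp_le_one_iff.mpr vn
  have h4 : |W i z - V₀| * Real.exp (v i z) ≤ η / 2 * 1 := mul_le_mul a h3 (Real.exp_pos _).le (by linarith)
  have h5 : V₀ * |Real.exp (v i z) - Real.exp (u₀ z)| ≤ V₀ * (η / (2 * V₀)) := by
    gcongr; linarith
  have : V₀ * (η / (2 * V₀)) = η / 2 := by field_simp
  linarith

lemma Sq.f0c (S : Sq C b V₀ v W f lam m u₀) : Continuous (fun z => V₀ * Real.exp (u₀ z)) := by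
  have := S.u0c
  fun_prop

lemma Sq.f0mass (S : Sq C b V₀ v W f lam m u₀) : Integrable (fun z => V₀ * Real.exp (u₀ z)) ∧
    ∫ z, V₀ * Real.exp (u₀ z) ≤ 8 * Real.pi := by
  have V0 := S.V0
  have loc : ∀ R : ℝ, IntegrableOn (fun z => V₀ * Real.exp (u₀ z)) (closedBall (0:E2) R) := fun R =>
    S.f0c.continuousOn.integrableOn_compact (isCompact_closedBall 0 R)
  have bd : ∀ R : ℝ, ∫ z in closedBall (0:E2) R, V₀ * Real.exp (u₀ z) ≤ 8 * Real.pi := by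
    intro R
    set c := volume.real (closedBall (0:E2) R) with hc
    refine le_of_forall_pos_le_add fun e he => ?_
    have e1 := S.fconv R (e / (2 * (c + 1))) (by positivity)
    have e2 := S.m0.eventually (gt_mem_nhds (show 8 * Real.pi < 8 * Real.pi + e / 2 by linarith))
    obtain ⟨i, h1, h2⟩ := (e1.and e2).exists
    have fi := (S.D i).fi
    have j : ∫ z in closedBall (0:E2) R, V₀ * Real.exp (u₀ z) ≤ ∫ z in closedBall (0:E2) R, (f i z + e / (2 * (c + 1))) := by
      refine setIntegral_mono_on (loc R) ?_ measurableSet_closedBall ?_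
      · exact fi.integrableOn.add (continuous_const.continuousOn.integrableOn_compact (isCompact_closedBall 0 R))
      · intro z hz
        have := abs_le.mp (h1 z (by simpa using hz))
        linarith
    have A := integral_add (μ := volume.restrict (closedBall (0:E2) R)) fi.integrableOn ((continuous_const (y := e / (2 * (c + 1)))).continuousOn.integrableOn_compact (isCompact_closedBall 0 R))
    rw [A, setIntegral_const, smul_eq_mul, ← hc] at j
    have k : ∫ z in closedBall (0:E2) R, f i z ≤ ∫ z, f i z :=
      setIntegral_le_integral fi (Eventually.of_forall (S.D i).f0)
    have : c * (e / (2 * (c + 1))) ≤ e / 2 := by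
      have : 0 ≤ c := by positivity
      field_simp; nlinarith
    have := (S.D i).fm
    linarith
  have ac := aecover_closedBall (μ := (volume : Measure E2)) (x := 0) (tendsto_id (α := ℝ) (x := atTop))
  have i1 : Integrable (fun z => V₀ * Real.exp (u₀ z)) :=
    ac.integrable_of_integral_bounded_of_nonneg_ae (8 * Real.pi) loc (Eventually.of_forall fun z => by positivity) (Eventually.of_forall bd)
  exact ⟨i1, le_of_tendsto (ac.integral_tendsto_of_countably_generated i1) (Eventually.of_forall bd)⟩

lemma Sq.pd_conv (S : Sq C b V₀ v W f lam m u₀) (x : E2) (j : Fin 2) :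
    Tendsto (fun i => pd j (v i) x) atTop (nhds (pd j u₀ x)) := by
  have := S.pt' x
  exact ((ContinuousLinearMap.apply ℝ ℝ (EuclideanSpace.single j 1 : E2)).continuous.tendsto _).comp this

lemma Sq.rep (S : Sq C b V₀ v W f lam m u₀) (θ : E2) (j : Fin 2) :
    2 * Real.pi * pd j u₀ θ = - ∫ ζ, V₀ * Real.exp (u₀ ζ) * K j (θ - ζ) := by
  obtain ⟨i0, m0⟩ := S.f0mass
  have V0 := S.V0
  set f0 : E2 → ℝ := fun ζ => V₀ * Real.exp (u₀ ζ) with hf0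
  have f0b : ∀ z, |f0 z| ≤ V₀ := by
    intro z
    have : Real.exp (u₀ z) ≤ 1 := Real.exp_le_one_iff.mpr (S.u0np z)
    rw [abs_of_nonneg (by positivity)]
    simp only [hf0]
    nlinarith
  have f0n : ∀ z, 0 ≤ f0 z := fun z => by positivity
  have T : Tendsto (fun i => ∫ ζ, f i ζ * K j (θ - ζ)) atTop (nhds (∫ ζ, f0 ζ * K j (θ - ζ))) := by
    rw [Metric.tendsto_atTop']
    intro e he
    set L := 4 * (17 * Real.pi) / e with hL
    have Lp : 0 < L := by positivity
    have e1 := S.fconv (‖θ‖ + L) (e / (16 * Real.pi * L)) (by positivity)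
    have e2 := S.m0.eventually (gt_mem_nhds (show 8 * Real.pi < 9 * Real.pi by linarith [Real.pi_pos]))
    obtain ⟨N, hN⟩ := eventually_atTop.mp (e1.and e2)
    refine ⟨N, fun i hi => ?_⟩
    obtain ⟨h1, h2⟩ := hN i hi.le
    have fi := (S.D i).fi
    have D := S.D i
    have ki := kernel_int (f i) fi θ 1 b one_pos (fun z _ => by rw [abs_of_nonneg (D.f0 z)]; exact D.fb z) j
    have k0 := kernel_int f0 i0 θ 1 V₀ one_pos (fun z _ => f0b z) j
    have ii : Integrable (fun z => |f i z - f0 z|) := (fi.sub i0).abs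
    obtain ⟨kb1, kb2⟩ := kernel_bound (fun z => |f i z - f0 z|) ii (fun z => abs_nonneg _) θ L (e / (16 * Real.pi * L)) Lp (by
      intro z hz
      refine h1 z ?_
      have : ‖z - θ‖ < L := by simpa [dist_eq_norm] using hz
      have := norm_add_le θ (z - θ)
      rw [add_sub_cancel] at this
      linarith)
    rw [Real.dist_eq, ← integral_sub ki k0]
    have s1 : |∫ ζ, (f i ζ * K j (θ - ζ) - f0 ζ * K j (θ - ζ))| ≤ ∫ z, |f i z - f0 z| * (1 / ‖θ - z‖) := by
      rw [← Real.norm_eq_abs]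
      refine norm_integral_le_of_norm_le kb1 (Eventually.of_forall fun z => ?_)
      rw [← sub_mul, Real.norm_eq_abs, abs_mul]
      gcongr
      exact abs_K_le _ _
    have s2 : ∫ z in (ball θ L)ᶜ, |f i z - f0 z| ≤ 17 * Real.pi := by
      calc _ ≤ ∫ z, |f i z - f0 z| := setIntegral_le_integral ii (Eventually.of_forall fun z => abs_nonneg _)
        _ ≤ ∫ z, (f i z + f0 z) := integral_mono ii (fi.add i0) (fun z => by
            have := D.f0 z
            have := f0n z
            exact abs_le.mpr ⟨by linarith, by linarith⟩)
        _ = (∫ z, f i z) + ∫ z, f0 z := integral_add fi i0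
        _ ≤ _ := by linarith [D.fm]
    have s3 : (∫ z in (ball θ L)ᶜ, |f i z - f0 z|) / L ≤ 17 * Real.pi / L := by gcongr
    have s4 : 17 * Real.pi / L = e / 4 := by rw [hL]; field_simp
    have s5 : 2 * Real.pi * L * (e / (16 * Real.pi * L)) = e / 8 := by field_simp; norm_num
    linarith
  have T2 : Tendsto (fun i => 2 * Real.pi * pd j (v i) θ + ∫ ζ, f i ζ * K j (θ - ζ)) atTop (nhds 0) := by
    have z : Tendsto (fun i => C * lam i) atTop (nhds 0) := by simpa using S.lam0.const_mul C
    refine squeeze_zero_norm' ?_ z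
    filter_upwards [S.small ‖θ‖ (5/16) (by norm_num)] with i hi
    exact (S.D i).R θ (hi θ le_rfl).le j
  have T3 := ((S.pd_conv θ j).const_mul (2 * Real.pi)).add T
  have := tendsto_nhds_unique T2 T3
  linarith

end Aux

namespace Aux

noncomputable def X (a : ℝ) (θ : E2) : E2 := (1 / (1 + a * ‖θ‖ ^ 2)) • θ

lemma X_apply (a : ℝ) (θ : E2) (j : Fin 2) : X a θ j = θ j / (1 + a * ‖θ‖ ^ 2) := by
  simp [X]; ring

lemma X_lip (a : ℝ) (ha : 0 < a) (θ ζ : E2) : ‖X a θ - X a ζ‖ ≤ ‖θ - ζ‖ := by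
  set p := ‖θ‖ with hp
  set q := ‖ζ‖ with hq
  have p0 : 0 ≤ p := norm_nonneg _
  have q0 : 0 ≤ q := norm_nonneg _
  have A : 0 < 1 + a * p ^ 2 := by positivity
  have B : 0 < 1 + a * q ^ 2 := by positivity
  have e : X a θ - X a ζ = (1 / ((1 + a * p ^ 2) * (1 + a * q ^ 2))) • ((θ - ζ) + a • (q ^ 2 • θ - p ^ 2 • ζ)) := by
    unfold X
    rw [← hp, ← hq]
    ext i
    simp
    field_simp
    ring
  have n : ‖q ^ 2 • θ - p ^ 2 • ζ‖ = p * q * ‖θ - ζ‖ := by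
    rw [← sq_eq_sq₀ (norm_nonneg _) (by positivity), nsq]
    have h1 : p ^ 2 = θ 0 ^ 2 + θ 1 ^ 2 := nsq θ
    have h2 : q ^ 2 = ζ 0 ^ 2 + ζ 1 ^ 2 := nsq ζ
    rw [mul_pow, mul_pow, nsq (θ - ζ)]
    simp
    rw [h1, h2]
    ring
  rw [e, norm_smul, Real.norm_eq_abs, abs_of_pos (by positivity)]
  have h1 : ‖(θ - ζ) + a • (q ^ 2 • θ - p ^ 2 • ζ)‖ ≤ ‖θ - ζ‖ + a * (p * q * ‖θ - ζ‖) := by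
    refine (norm_add_le _ _).trans ?_
    rw [norm_smul, n, Real.norm_eq_abs, abs_of_pos ha]
  rw [one_div, inv_mul_le_iff₀ (by positivity)]
  refine h1.trans ?_
  have : 1 + a * (p * q) ≤ (1 + a * p ^ 2) * (1 + a * q ^ 2) := by
    have h : 0 ≤ a * p * q := by positivity
    nlinarith [mul_nonneg ha.le (sq_nonneg (p - q)), sq_nonneg (a * p * q)]
  nlinarith [norm_nonneg (θ - ζ)]

lemma X_bdd (a : ℝ) (ha : 0 < a) (θ : E2) (j : Fin 2) : |X a θ j| ≤ 1 + 1 / a := by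
  rw [X_apply, abs_div, abs_of_pos (by positivity : 0 < 1 + a * ‖θ‖ ^ 2), div_le_iff₀ (by positivity)]
  have := abs_coord_le θ j
  have h : (1 + 1 / a) * (1 + a * ‖θ‖ ^ 2) = 1 + 1 / a + a * ‖θ‖ ^ 2 + ‖θ‖ ^ 2 := by field_simp; ring
  rw [h]
  have : 0 < 1 / a := by positivity
  have : 0 ≤ a * ‖θ‖ ^ 2 := by positivity
  nlinarith [sq_nonneg (‖θ‖ - 1)]

lemma pd_X (a : ℝ) (ha : 0 < a) (θ : E2) (j : Fin 2) : DifferentiableAt ℝ (fun z => X a z j) θ ∧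
    pd j (fun z => X a z j) θ = 1 / (1 + a * ‖θ‖ ^ 2) - 2 * a * (θ j) ^ 2 / (1 + a * ‖θ‖ ^ 2) ^ 2 := by
  have e : (fun z => X a z j) = fun z : E2 => z j / (1 + a * (z 0 ^ 2 + z 1 ^ 2)) := by
    ext z; rw [X_apply, nsq]
  have pos : ∀ z : E2, 1 + a * (z 0 ^ 2 + z 1 ^ 2) ≠ 0 := fun z => by positivity
  have d : DifferentiableAt ℝ (fun z => X a z j) θ := by
    rw [e]
    have d1 : DifferentiableAt ℝ (fun z : E2 => z j) θ := by fun_prop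
    have d2 : DifferentiableAt ℝ (fun z : E2 => 1 + a * (z 0 ^ 2 + z 1 ^ 2)) θ := by fun_prop
    have := d1.mul (d2.inv (pos θ))
    simp only [div_eq_mul_inv]
    exact this
  refine ⟨d, ?_⟩
  have l := line_deriv (fun z => X a z j) θ j 0 (by simpa using d)
  rw [zero_smul, add_zero] at l
  rw [nsq]
  have h2 : ∀ t : ℝ, X a (θ + t • EuclideanSpace.single j 1) j = (θ j + t) / (1 + a * ((θ 0 ^ 2 + θ 1 ^ 2) + 2 * t * θ j + t ^ 2)) := by
    intro t
    rw [X_apply, nsq]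
    fin_cases j <;> simp <;> ring
  simp only [h2] at l
  have l2 : HasDerivAt (fun t : ℝ => (θ j + t) / (1 + a * ((θ 0 ^ 2 + θ 1 ^ 2) + 2 * t * θ j + t ^ 2)))
      (1 / (1 + a * (θ 0 ^ 2 + θ 1 ^ 2)) - 2 * a * (θ j) ^ 2 / (1 + a * (θ 0 ^ 2 + θ 1 ^ 2)) ^ 2) 0 := by
    have n1 : HasDerivAt (fun t : ℝ => θ j + t) 1 0 := (hasDerivAt_id (0:ℝ)).const_add _
    have n2 : HasDerivAt (fun t : ℝ => (1 + a * ((θ 0 ^ 2 + θ 1 ^ 2) + 2 * t * θ j + t ^ 2))) (a * (2 * θ j)) 0 := by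
      have a1 := (((hasDerivAt_id (0:ℝ)).const_mul 2).mul_const (θ j)).const_add (θ 0 ^ 2 + θ 1 ^ 2)
      have a2 := ((a1.add ((hasDerivAt_id (0:ℝ)).pow 2)).const_mul a).const_add 1
      refine a2.congr_deriv ?_
      simp
    refine (n1.div n2 (by simpa using pos θ)).congr_deriv ?_
    have := pos θ
    simp
    field_simp
  exact l.unique l2

lemma pd_X_cont (a : ℝ) (ha : 0 < a) (j : Fin 2) : Continuous (pd j (fun z => X a z j)) := by
  have : pd j (fun z => X a z j) = fun θ => 1 / (1 + a * ‖θ‖ ^ 2) - 2 * a * (θ j) ^ 2 / (1 + a * ‖θ‖ ^ 2) ^ 2 := by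
    ext θ; exact (pd_X a ha θ j).2
  rw [this]
  have pos : ∀ z : E2, 1 + a * ‖z‖ ^ 2 ≠ 0 := fun z => by positivity
  have pos2 : ∀ z : E2, (1 + a * ‖z‖ ^ 2) ^ 2 ≠ 0 := fun z => by positivity
  exact (continuous_const.div (by fun_prop) pos).sub (Continuous.div (by fun_prop) (by fun_prop) pos2)

lemma pd_X_bdd (a : ℝ) (ha : 0 < a) (j : Fin 2) (θ : E2) : |pd j (fun z => X a z j) θ| ≤ 3 := by
  rw [(pd_X a ha θ j).2]
  have h1 : 1 / (1 + a * ‖θ‖ ^ 2) ≤ 1 := by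
    rw [div_le_one (by positivity)]
    have : 0 ≤ a * ‖θ‖ ^ 2 := by positivity
    linarith
  have h0 : 0 < 1 / (1 + a * ‖θ‖ ^ 2) := by positivity
  have h3 : 0 ≤ 2 * a * (θ j) ^ 2 / (1 + a * ‖θ‖ ^ 2) ^ 2 := by positivity
  have h2 : 2 * a * (θ j) ^ 2 / (1 + a * ‖θ‖ ^ 2) ^ 2 ≤ 2 := by
    rw [div_le_iff₀ (by positivity)]
    have : (θ j) ^ 2 ≤ ‖θ‖ ^ 2 := sq_le_sq' (by linarith [(abs_le.mp (abs_coord_le θ j)).1]) (abs_le.mp (abs_coord_le θ j)).2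
    have : a * (θ j) ^ 2 ≤ a * ‖θ‖ ^ 2 := by gcongr
    nlinarith [sq_nonneg (a * ‖θ‖ ^ 2), mul_nonneg ha.le (sq_nonneg ‖θ‖)]
  rw [abs_le]; constructor <;> linarith

lemma X_cont (a : ℝ) (ha : 0 < a) (j : Fin 2) : Continuous (fun z => X a z j) :=
  continuous_iff_continuousAt.mpr fun z => (pd_X a ha z j).1.continuousAt

/-- step A -/
lemma ibp (f u : E2 → ℝ) (fi : Integrable f) (B : ℝ)
    (fd : Differentiable ℝ f) (ud : ∀ j x, pd j f x = f x * pd j u x) (uc : ∀ j, Continuous (pd j u)) (ub : ∀ j x, |pd j u x| ≤ B)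
    (a : ℝ) (ha : 0 < a) (j : Fin 2) :
    ∫ x, f x * pd j u x * X a x j = - ∫ x, f x * pd j (fun z => X a z j) x := by
  have := integral_mul_fderiv_eq_neg_fderiv_mul_of_integrable (𝕜 := ℝ) (μ := (volume : Measure E2)) (f := f) (g := fun z => X a z j) (v := EuclideanSpace.single j 1)
    ?_ ?_ ?_ (fun x _ => fd x) (fun x _ => (pd_X a ha x j).1)
  · have e1 : ∀ x, fderiv ℝ f x (EuclideanSpace.single j 1) * X a x j = f x * pd j u x * X a x j := by
      intro x; rw [← ud]; rfl
    simp only [e1] at this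
    rw [← neg_eq_iff_eq_neg.mpr this]
    rfl
  · have e1 : ∀ x, fderiv ℝ f x (EuclideanSpace.single j 1) * X a x j = f x * (pd j u x * X a x j) := by
      intro x; rw [← mul_assoc, ← ud]; rfl
    simp only [e1]
    refine fi.mul_bdd (c := B * (1 + 1 / a)) ((uc j).mul (X_cont a ha j)).aestronglyMeasurable (Eventually.of_forall fun x => ?_)
    rw [norm_mul]
    exact mul_le_mul (ub j x) (X_bdd a ha x j) (norm_nonneg _) ((abs_nonneg _).trans (ub j x))
  · exact fi.mul_bdd (c := 3) (pd_X_cont a ha j).aestronglyMeasurable (Eventually.of_forall fun x => pd_X_bdd a ha j x)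
  · exact fi.mul_bdd (c := 1 + 1/a) (X_cont a ha j).aestronglyMeasurable (Eventually.of_forall fun x => X_bdd a ha x j)

end Aux

namespace Aux

lemma K_sum (w : E2) (h : w ≠ 0) : w 0 * K 0 w + w 1 * K 1 w = 1 := by
  unfold K
  have : ‖w‖ ^ 2 ≠ 0 := by simpa using h
  have h2 := nsq w
  field_simp
  linarith

/-- integrability on the product -/
lemma prod_int (f : E2 → ℝ) (fc : Continuous f) (fi : Integrable f) (f0 : ∀ x, 0 ≤ f x) (B : ℝ) (fb : ∀ x, f x ≤ B)
    (g : E2 → ℝ) (gc : Continuous g) (M : ℝ) (gb : ∀ x, |g x| ≤ M) (j : Fin 2) :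
    Integrable (fun p : E2 × E2 => f p.1 * f p.2 * (g p.1 * K j (p.1 - p.2))) (volume.prod volume) := by
  have Km := measurable_K j
  have ms : AEStronglyMeasurable (fun p : E2 × E2 => f p.1 * f p.2 * (g p.1 * K j (p.1 - p.2))) (volume.prod volume) := by
    have : Measurable (fun p : E2 × E2 => f p.1 * f p.2 * (g p.1 * K j (p.1 - p.2))) := by
      have := fc.measurable
      have := gc.measurable
      fun_prop
    exact this.aestronglyMeasurable
  have kb := fun x => kernel_bound f fi f0 x 1 B one_pos (fun z _ => fb z)
  have M0 : 0 ≤ M := (abs_nonneg _).trans (gb 0)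
  have kb2 : ∀ x, ∫ z, f z * (1 / ‖x - z‖) ≤ 2 * Real.pi * B + ∫ z, f z := by
    intro x
    have := (kb x).2
    have h2 : ∫ z in (ball x 1)ᶜ, f z ≤ ∫ z, f z := setIntegral_le_integral fi (Eventually.of_forall f0)
    rw [div_one, mul_one] at this
    linarith
  rw [integrable_prod_iff ms]
  constructor
  · refine Eventually.of_forall fun x => ?_
    have := (kernel_int f fi x 1 B one_pos (fun z _ => by rw [abs_of_nonneg (f0 z)]; exact fb z) j).const_mul (f x * g x)
    refine this.congr (Eventually.of_forall fun z => ?_)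
    simp only; ring
  · refine Integrable.mono' (fi.mul_const (M * (2 * Real.pi * B + ∫ z, f z))) ms.norm.integral_prod_right' ?_
    refine Eventually.of_forall fun x => ?_
    rw [Real.norm_eq_abs, abs_of_nonneg (integral_nonneg fun z => norm_nonneg _)]
    have i2 := (kb x).1.const_mul (f x * M)
    have : ∫ z, ‖f x * f z * (g x * K j (x - z))‖ ≤ ∫ z, f x * M * (f z * (1 / ‖x - z‖)) := by
      refine integral_mono_of_nonneg (Eventually.of_forall fun z => norm_nonneg _) i2 (Eventually.of_forall fun z => ?_)
      simp only [Real.norm_eq_abs, abs_mul, abs_of_nonneg (f0 _)]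
      have h1 := gb x
      have h2 := abs_K_le j (x - z)
      have h3 := f0 x
      have h4 := f0 z
      calc f x * f z * (|g x| * |K j (x - z)|) ≤ f x * f z * (M * (1 / ‖x - z‖)) := by gcongr
        _ = _ := by ring
    refine this.trans ?_
    rw [integral_const_mul, mul_assoc]
    have h3 := f0 x
    gcongr
    exact kb2 x

lemma symm_int (f : E2 → ℝ) (fc : Continuous f) (fi : Integrable f) (f0 : ∀ x, 0 ≤ f x) (B : ℝ) (fb : ∀ x, f x ≤ B)
    (g : E2 → ℝ) (gc : Continuous g) (M : ℝ) (gb : ∀ x, |g x| ≤ M) (j : Fin 2) :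
    2 * ∫ x, f x * g x * (∫ z, f z * K j (x - z)) =
      ∫ p : E2 × E2, f p.1 * f p.2 * ((g p.1 - g p.2) * K j (p.1 - p.2)) ∂(volume.prod volume) := by
  have I := prod_int f fc fi f0 B fb g gc M gb j
  have e1 : ∫ x, f x * g x * (∫ z, f z * K j (x - z)) = ∫ p : E2 × E2, f p.1 * f p.2 * (g p.1 * K j (p.1 - p.2)) ∂(volume.prod volume) := by
    rw [integral_prod _ I]
    congr 1; ext x
    rw [← integral_const_mul]
    congr 1; ext z; ring
  have I' := I.swap
  have e2 := integral_prod_swap (μ := (volume : Measure E2)) (ν := (volume : Measure E2)) (fun p : E2 × E2 => f p.1 * f p.2 * (g p.1 * K j (p.1 - p.2)))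
  have A := integral_add I I'
  simp only [Function.comp_def, Prod.fst_swap, Prod.snd_swap] at A e2
  rw [e2] at A
  rw [e1, two_mul, ← A]
  congr 1; ext p
  have : K j (p.2 - p.1) = - K j (p.1 - p.2) := by rw [← K_neg, neg_sub]
  rw [this]; ring

lemma virial (f u : E2 → ℝ) (fc : Continuous f) (fi : Integrable f) (f0 : ∀ x, 0 < f x) (B : ℝ) (fb : ∀ x, f x ≤ B)
    (fd : Differentiable ℝ f) (ud : ∀ j x, pd j f x = f x * pd j u x) (uc : ∀ j, Continuous (pd j u))
    (rep : ∀ j x, 2 * Real.pi * pd j u x = - ∫ z, f z * K j (x - z)) : ∫ x, f x = 8 * Real.pi := by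
  set β := ∫ x, f x with hβ
  have pi0 := Real.pi_pos
  have f0' : ∀ x, 0 ≤ f x := fun x => (f0 x).le
  have βp : 0 < β := by
    rw [hβ, integral_pos_iff_support_of_nonneg f0' fi]
    have : Function.support f = Set.univ := by ext x; simp [(f0 x).ne']
    rw [this]; simp
  have ub : ∀ j x, |pd j u x| ≤ 2 * Real.pi * B + β := by
    intro j x
    have kb := kernel_bound f fi f0' x 1 B one_pos (fun z _ => fb z)
    have h2 : ∫ z in (ball x 1)ᶜ, f z ≤ ∫ z, f z := setIntegral_le_integral fi (Eventually.of_forall f0')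
    have h3 : |∫ z, f z * K j (x - z)| ≤ ∫ z, f z * (1 / ‖x - z‖) := by
      rw [← Real.norm_eq_abs]
      refine norm_integral_le_of_norm_le kb.1 (Eventually.of_forall fun z => ?_)
      rw [norm_mul, Real.norm_eq_abs, abs_of_nonneg (f0' z), Real.norm_eq_abs]
      have := f0' z
      gcongr
      exact abs_K_le _ _
    have h4 := rep j x
    have h5 : 2 * Real.pi * |pd j u x| = |∫ z, f z * K j (x - z)| := by
      rw [← abs_neg (∫ z, f z * K j (x - z)), ← h4, abs_mul, abs_of_pos (show 0 < 2 * Real.pi by positivity)]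
    have h6 := kb.2
    rw [div_one, mul_one] at h6
    have h7 : |pd j u x| ≤ 2 * Real.pi * |pd j u x| := by
      have := Real.pi_gt_three
      nlinarith [abs_nonneg (pd j u x)]
    linarith
  have key : ∀ a > 0, ∀ j, 4 * Real.pi * ∫ x, f x * pd j (fun z => X a z j) x =
      ∫ p : E2 × E2, f p.1 * f p.2 * ((X a p.1 j - X a p.2 j) * K j (p.1 - p.2)) ∂(volume.prod volume) := by
    intro a ha j
    have s := symm_int f fc fi f0' B fb (fun z => X a z j) (X_cont a ha j) (1 + 1 / a) (fun x => X_bdd a ha x j) j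
    rw [← s]
    have i := ibp f u fi (2 * Real.pi * B + β) fd ud uc ub a ha j
    have : ∫ x, f x * X a x j * (∫ z, f z * K j (x - z)) = - (2 * Real.pi) * ∫ x, f x * pd j u x * X a x j := by
      rw [← integral_const_mul]
      congr 1; ext x
      have := rep j x
      have h : ∫ z, f z * K j (x - z) = - (2 * Real.pi * pd j u x) := by linarith
      rw [h]; ring
    rw [this, i]; ring
  -- limits
  set α : ℕ → ℝ := fun n => 1 / ((n:ℝ) + 1) with hα
  have αp : ∀ n, 0 < α n := fun n => by positivity
  have α0 : Tendsto α atTop (nhds 0) := tendsto_one_div_add_atTop_nhds_zero_nat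
  have Lw : ∀ x : E2, Tendsto (fun n => 1 + α n * ‖x‖ ^ 2) atTop (nhds 1) := fun x => by
    simpa using (α0.mul_const (‖x‖ ^ 2)).const_add 1
  have L1 : ∀ j, Tendsto (fun n => ∫ x, f x * pd j (fun z => X (α n) z j) x) atTop (nhds β) := by
    intro j
    refine tendsto_integral_of_dominated_convergence (fun x => f x * 3) ?_ (fi.mul_const 3) ?_ ?_
    · intro n; exact (fc.mul (pd_X_cont _ (αp n) j)).aestronglyMeasurable
    · intro n
      refine Eventually.of_forall fun x => ?_
      rw [norm_mul, Real.norm_eq_abs, abs_of_nonneg (f0' x)]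
      exact mul_le_mul_of_nonneg_left (pd_X_bdd _ (αp n) j x) (f0' x)
    · refine Eventually.of_forall fun x => ?_
      have : Tendsto (fun n => f x * pd j (fun z => X (α n) z j) x) atTop (nhds (f x * (1 / 1 - 2 * 0 * (x j) ^ 2 / 1 ^ 2))) := by
        refine Tendsto.const_mul _ ?_
        have e : (fun n => pd j (fun z => X (α n) z j) x) = fun n => 1 / (1 + α n * ‖x‖ ^ 2) - 2 * α n * (x j) ^ 2 / (1 + α n * ‖x‖ ^ 2) ^ 2 := by
          ext n; exact (pd_X _ (αp n) x j).2
        rw [e]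
        refine (tendsto_const_nhds.div (Lw x) one_ne_zero).sub ?_
        exact Tendsto.div ((α0.const_mul 2).mul_const _) ((Lw x).pow 2) (by norm_num)
      simpa using this
  have L2 : ∀ j, Tendsto (fun n => ∫ p : E2 × E2, f p.1 * f p.2 * ((X (α n) p.1 j - X (α n) p.2 j) * K j (p.1 - p.2)) ∂(volume.prod volume)) atTop
      (nhds (∫ p : E2 × E2, f p.1 * f p.2 * ((p.1 - p.2) j * K j (p.1 - p.2)) ∂(volume.prod volume))) := by
    intro j
    refine tendsto_integral_of_dominated_convergence (fun p : E2 × E2 => f p.1 * f p.2) ?_ (fi.mul_prod fi) ?_ ?_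
    · intro n
      have := fc.measurable
      have := (X_cont _ (αp n) j).measurable
      have := measurable_K j
      exact Measurable.aestronglyMeasurable (by fun_prop)
    · intro n
      refine Eventually.of_forall fun p => ?_
      have h1 : |X (α n) p.1 j - X (α n) p.2 j| ≤ ‖p.1 - p.2‖ := by
        have := abs_coord_le (X (α n) p.1 - X (α n) p.2) j
        exact this.trans (X_lip _ (αp n) _ _)
      have h2 := abs_K_le j (p.1 - p.2)
      rw [norm_mul, norm_mul, norm_mul, Real.norm_eq_abs, Real.norm_eq_abs, Real.norm_eq_abs, Real.norm_eq_abs, abs_of_nonneg (f0' _), abs_of_nonneg (f0' _)]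
      have h3 : |X (α n) p.1 j - X (α n) p.2 j| * |K j (p.1 - p.2)| ≤ 1 := by
        calc _ ≤ ‖p.1 - p.2‖ * (1 / ‖p.1 - p.2‖) := by gcongr
          _ ≤ 1 := by rw [mul_one_div]; exact div_self_le_one _
      have := mul_nonneg (f0' p.1) (f0' p.2)
      nlinarith
    · refine Eventually.of_forall fun p => ?_
      refine Tendsto.const_mul _ (Tendsto.mul_const _ ?_)
      have : ∀ x : E2, Tendsto (fun n => X (α n) x j) atTop (nhds (x j)) := by
        intro x
        simp only [X_apply]
        have h := (tendsto_const_nhds (x := x j)).div (Lw x) one_ne_zero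
        rw [div_one] at h
        exact h
      exact (this _).sub (this _)
  have I : ∀ j, Integrable (fun p : E2 × E2 => f p.1 * f p.2 * ((p.1 - p.2) j * K j (p.1 - p.2))) (volume.prod volume) := by
    intro j
    refine (fi.mul_prod fi).mono' ?_ (Eventually.of_forall fun p => ?_)
    · have := fc.measurable
      have := measurable_K j
      exact Measurable.aestronglyMeasurable (by fun_prop)
    · have h1 := abs_coord_le (p.1 - p.2) j
      have h2 := abs_K_le j (p.1 - p.2)
      rw [norm_mul, norm_mul, norm_mul, Real.norm_eq_abs, Real.norm_eq_abs, Real.norm_eq_abs, Real.norm_eq_abs, abs_of_nonneg (f0' _), abs_of_nonneg (f0' _)]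
      have h3 : |(p.1 - p.2) j| * |K j (p.1 - p.2)| ≤ 1 := by
        calc _ ≤ ‖p.1 - p.2‖ * (1 / ‖p.1 - p.2‖) := by gcongr
          _ ≤ 1 := by rw [mul_one_div]; exact div_self_le_one _
      have := mul_nonneg (f0' p.1) (f0' p.2)
      nlinarith
  have E : ∀ j, 4 * Real.pi * β = ∫ p : E2 × E2, f p.1 * f p.2 * ((p.1 - p.2) j * K j (p.1 - p.2)) ∂(volume.prod volume) := by
    intro j
    refine tendsto_nhds_unique ((L1 j).const_mul (4 * Real.pi)) ?_
    have : (fun n => 4 * Real.pi * ∫ x, f x * pd j (fun z => X (α n) z j) x) = _ := funext fun n => key (α n) (αp n) j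
    rw [this]
    exact L2 j
  have S : (∫ p : E2 × E2, f p.1 * f p.2 * ((p.1 - p.2) 0 * K 0 (p.1 - p.2)) ∂(volume.prod volume)) +
      (∫ p : E2 × E2, f p.1 * f p.2 * ((p.1 - p.2) 1 * K 1 (p.1 - p.2)) ∂(volume.prod volume)) = β * β := by
    rw [integral_prod _ (I 0), integral_prod _ (I 1), ← integral_add (I 0).integral_prod_left (I 1).integral_prod_left]
    rw [hβ, ← integral_mul_const]
    congr 1; ext x
    have j : ∀ j, Integrable (fun z => f x * f z * ((x - z) j * K j (x - z))) := by
      intro j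
      refine (fi.const_mul (f x)).mono' ?_ (Eventually.of_forall fun z => ?_)
      · have := fc.measurable
        have := measurable_K j
        exact Measurable.aestronglyMeasurable (by fun_prop)
      · have h1 := abs_coord_le (x - z) j
        have h2 := abs_K_le j (x - z)
        rw [norm_mul, norm_mul, norm_mul, Real.norm_eq_abs, Real.norm_eq_abs, Real.norm_eq_abs, Real.norm_eq_abs, abs_of_nonneg (f0' _), abs_of_nonneg (f0' _)]
        have h3 : |(x - z) j| * |K j (x - z)| ≤ 1 := by
          calc _ ≤ ‖x - z‖ * (1 / ‖x - z‖) := by gcongr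
            _ ≤ 1 := by rw [mul_one_div]; exact div_self_le_one _
        have := mul_nonneg (f0' x) (f0' z)
        nlinarith
    have A := integral_add (j 0) (j 1)
    simp only at A ⊢
    rw [← A, ← integral_const_mul]
    refine integral_congr_ae ?_
    have : ∀ᵐ z : E2, z ≠ x := by simp [ae_iff]
    filter_upwards [this] with z hz
    have := K_sum (x - z) (sub_ne_zero.mpr (Ne.symm hz))
    rw [← mul_add, this, mul_one]
  rw [← E 0, ← E 1] at S
  have : β * (8 * Real.pi) = β * β := by linarith
  exact (mul_left_cancel₀ βp.ne' this).symm

lemma Sq.mass {C b V₀ : ℝ} {v W f : ℕ → E2 → ℝ} {lam m : ℕ → ℝ} {u₀ : E2 → ℝ}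
    (S : Sq C b V₀ v W f lam m u₀) : ∫ z, V₀ * Real.exp (u₀ z) = 8 * Real.pi := by
  have V0 := S.V0
  refine virial (fun z => V₀ * Real.exp (u₀ z)) u₀ S.f0c S.f0mass.1 (fun x => by positivity) V₀ (fun x => ?_) ?_ ?_ ?_ (fun j x => S.rep x j)
  · have : Real.exp (u₀ x) ≤ 1 := Real.exp_le_one_iff.mpr (S.u0np x)
    nlinarith
  · have := S.u0d
    fun_prop
  · intro j x
    unfold pd
    have := ((S.u0d x).hasFDerivAt.exp.const_mul V₀).fderiv
    rw [this]; simp; ring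
  · intro j
    have := S.u0dc
    unfold pd
    fun_prop

end Aux

namespace Aux
variable {C b V₀ : ℝ} {v W f : ℕ → E2 → ℝ} {lam m : ℕ → ℝ} {u₀ : E2 → ℝ}

lemma Sq.neck (S : Sq C b V₀ v W f lam m u₀) (η : ℝ) (hη : 0 < η) : ∃ k : ℝ, 1 ≤ k ∧ ∀ᶠ i in atTop,
    (∫ z in (ball (0:E2) k)ᶜ, f i z ≤ η) ∧ |(∫ z in ball (0:E2) k, f i z) - 8 * Real.pi| ≤ η := by
  obtain ⟨i0, -⟩ := S.f0mass
  have ac := aecover_closedBall (μ := (volume : Measure E2)) (x := 0) (tendsto_id (α := ℝ) (x := atTop))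
  have t := ac.integral_tendsto_of_countably_generated i0
  rw [S.mass] at t
  obtain ⟨R, hR, R0⟩ := ((t.eventually (lt_mem_nhds (show 8 * Real.pi - η / 4 < 8 * Real.pi by linarith))).and (eventually_ge_atTop 0)).exists
  simp only [id] at hR
  refine ⟨R + 1, by linarith, ?_⟩
  set c := volume.real (closedBall (0:E2) R) with hc
  have c0 : 0 ≤ c := by positivity
  have e2 := S.m0.eventually (gt_mem_nhds (show 8 * Real.pi < 8 * Real.pi + η / 2 by linarith))
  filter_upwards [S.fconv R (η / (4 * (c + 1))) (by positivity), e2] with i h1 h2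
  have D := S.D i
  have fi := D.fi
  have cR : Integrable (fun _ : E2 => η / (4 * (c + 1))) (volume.restrict (closedBall (0:E2) R)) :=
    (continuous_const.continuousOn.integrableOn_compact (isCompact_closedBall 0 R))
  have j : ∫ z in closedBall (0:E2) R, V₀ * Real.exp (u₀ z) ≤ ∫ z in closedBall (0:E2) R, (f i z + η / (4 * (c + 1))) := by
    refine setIntegral_mono_on i0.integrableOn ?_ measurableSet_closedBall ?_
    · exact fi.integrableOn.add cR
    · intro z hz
      have := abs_le.mp (h1 z (by simpa using hz))
      linarith
  have A := integral_add (μ := volume.restrict (closedBall (0:E2) R)) fi.integrableOn cR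
  rw [A, setIntegral_const, smul_eq_mul, ← hc] at j
  have l : c * (η / (4 * (c + 1))) ≤ η / 4 := by
    field_simp; nlinarith
  have k1 : ∫ z in closedBall (0:E2) R, f i z ≤ ∫ z in ball (0:E2) (R + 1), f i z :=
    setIntegral_mono_set fi.integrableOn (Eventually.of_forall D.f0) (closedBall_subset_ball (by linarith)).eventuallyLE
  have k2 := integral_add_compl (measurableSet_ball (x := (0:E2)) (ε := R + 1)) fi
  have k3 : 0 ≤ ∫ z in (ball (0:E2) (R + 1))ᶜ, f i z := integral_nonneg D.f0
  have k4 := D.fm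
  constructor
  · linarith
  · rw [abs_le]; constructor <;> linarith

/-- Lower mass estimate on a small ball -/
lemma reg_core {v W f : E2 → ℝ} {lam m : ℝ} (D : Data C b v W f lam m) (hC : 0 ≤ C) (hV : 0 < V₀)
    (hW : ∀ z, lam * ‖z‖ ≤ 3/8 → V₀ / 2 ≤ W z ∧ W z ≤ 2 * V₀) (hm : m ≤ 9 * Real.pi)
    (z : E2) (s : ℝ) (hs : 0 < s) (hz1 : ∀ w ∈ ball z s, lam * ‖w‖ ≤ 5/16 ∧ s ≤ ‖w‖)
    (hz2 : ∀ w ∈ ball z s, Real.exp (v w) ≤ 4 * Real.exp (v z)) (hE : s ^ 2 * Real.exp (v z) ≤ 1) (η : ℝ)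
    (hη : ∫ w in ball z (s / 2), f w ≤ η) :
    s ^ 2 * Real.exp (v z) ≤ 8 * Real.exp (C + 8 * Real.pi * V₀ + 18 * Real.pi) / (Real.pi * V₀) * η := by
  set A := C + 8 * Real.pi * V₀ + 18 * Real.pi with hA
  have pi0 := Real.pi_pos
  set E := Real.exp (v z) with hEE
  have Ep : 0 < E := Real.exp_pos _
  have fi := D.fi
  have sub : ∀ w ∈ ball z (s / 2), ∀ x ∈ ball w (s / 2), x ∈ ball z s := by
    intro w hw x hx
    rw [mem_ball] at *
    linarith [dist_triangle x w z]
  have sub' : ball z (s / 2) ⊆ ball z s := ball_subset_ball (by linarith)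
  have grad : ∀ w ∈ ball z (s / 2), ‖fderiv ℝ v w‖ ≤ 2 * A / s := by
    intro w hw
    have hw1 := hz1 w (sub' hw)
    have kb := kernel_bound f fi D.f0 w (s / 2) (8 * V₀ * E) (by linarith) (by
      intro x hx
      have hx' := sub w hw x hx
      have h1 := (hz1 x hx').1
      rw [D.feq x (by linarith)]
      have h2 := (hW x (by linarith)).2
      have h3 := hz2 x hx'
      have := mul_le_mul h2 h3 (Real.exp_pos _).le (by positivity)
      linarith)
    have h2 : ∫ z in (ball w (s / 2))ᶜ, f z ≤ 9 * Real.pi :=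
      (setIntegral_le_integral fi (Eventually.of_forall D.f0)).trans (D.fm.trans hm)
    have h3 : ∀ j, |∫ z, f z * K j (w - z)| ≤ ∫ z, f z * (1 / ‖w - z‖) := by
      intro j
      rw [← Real.norm_eq_abs]
      refine norm_integral_le_of_norm_le kb.1 (Eventually.of_forall fun z => ?_)
      rw [norm_mul, Real.norm_eq_abs, abs_of_nonneg (D.f0 z), Real.norm_eq_abs]
      have := D.f0 z
      gcongr
      exact abs_K_le _ _
    have h4 : 2 * Real.pi * (s / 2) * (8 * V₀ * E) ≤ 8 * Real.pi * V₀ / s := by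
      rw [le_div_iff₀ hs]
      have : 2 * Real.pi * (s / 2) * (8 * V₀ * E) * s = 8 * Real.pi * V₀ * (s ^ 2 * E) := by ring
      rw [this]
      have : 0 < 8 * Real.pi * V₀ := by positivity
      nlinarith
    have h5 : (∫ z in (ball w (s / 2))ᶜ, f z) / (s / 2) ≤ 18 * Real.pi / s := by
      rw [div_le_div_iff₀ (by linarith) hs]
      nlinarith
    have h6 : C * lam ≤ C / s := by
      rw [le_div_iff₀ hs]
      have : lam * s ≤ 1 := by
        have := mul_le_mul_of_nonneg_left hw1.2 D.lam_pos.le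
        linarith
      nlinarith
    have h7 : ∀ j, |pd j v w| ≤ A / s := by
      intro j
      have r := D.R w hw1.1 j
      have r1 := abs_sub_abs_le_abs_sub (2 * Real.pi * pd j v w) (-(∫ ζ, f ζ * K j (w - ζ)))
      rw [sub_neg_eq_add, abs_neg, abs_mul, abs_of_pos (show 0 < 2 * Real.pi by positivity)] at r1
      have r2 : A / s = C / s + 8 * Real.pi * V₀ / s + 18 * Real.pi / s := by rw [hA]; ring
      have r3 := h3 j
      have r4 := kb.2
      have h7 : |pd j v w| ≤ 2 * Real.pi * |pd j v w| := by
        have := Real.pi_gt_three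
        nlinarith [abs_nonneg (pd j v w)]
      rw [r2]; linarith
    have := norm_fderiv_le v w
    have a := h7 0
    have b := h7 1
    have : 2 * A / s = A / s + A / s := by ring
    linarith
  have low : ∀ w ∈ ball z (s / 2), Real.exp (-A) * E ≤ Real.exp (v w) := by
    intro w hw
    have mv := Convex.norm_image_sub_le_of_norm_fderiv_le (𝕜 := ℝ) (f := v) (s := ball z (s / 2)) (C := 2 * A / s) (x := z) (y := w)
      (fun x hx => (D.vC x (by linarith [(hz1 x (sub' hx)).1])).differentiableAt (by norm_num)) grad (convex_ball _ _) (mem_ball_self (by linarith)) hw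
    have h1 : ‖w - z‖ ≤ s / 2 := by rw [mem_ball_iff_norm] at hw; exact hw.le
    have A0 : 0 < A := by positivity
    have h2 : 2 * A / s * ‖w - z‖ ≤ A := by
      calc 2 * A / s * ‖w - z‖ ≤ 2 * A / s * (s / 2) := by gcongr
        _ = A := by field_simp
    rw [Real.norm_eq_abs] at mv
    have := (abs_le.mp (mv.trans h2)).1
    rw [hEE, ← Real.exp_add]
    exact Real.exp_le_exp.mpr (by linarith)
  have vol : volume.real (ball z (s / 2)) = Real.pi * (s / 2) ^ 2 := by
    rw [Measure.real, EuclideanSpace.volume_ball_fin_two]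
    simp [ENNReal.toReal_mul, ENNReal.toReal_ofReal (by linarith : 0 ≤ s / 2), ENNReal.toReal_ofReal Real.pi_pos.le]
    try ring
  have fin : volume (ball z (s / 2)) ≠ ⊤ := measure_ball_lt_top.ne
  have mass : Real.pi * (s / 2) ^ 2 * (V₀ / 2 * (Real.exp (-A) * E)) ≤ η := by
    refine le_trans ?_ hη
    rw [← vol, ← smul_eq_mul, ← setIntegral_const]
    refine setIntegral_mono_on (integrableOn_const fin) fi.integrableOn measurableSet_ball fun w hw => ?_
    have h1 := (hz1 w (sub' hw)).1
    rw [D.feq w (by linarith)]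
    exact mul_le_mul (hW w (by linarith)).1 (low w hw) (by positivity) (by linarith [(hW w (by linarith)).1])
  have e : Real.exp (-A) = 1 / Real.exp A := by rw [Real.exp_neg]; simp
  rw [e] at mass
  have : Real.pi * (s / 2) ^ 2 * (V₀ / 2 * (1 / Real.exp A * E)) = Real.pi * V₀ / (8 * Real.exp A) * (s ^ 2 * E) := by
    field_simp; norm_num
  rw [this] at mass
  have ea := Real.exp_pos A
  rw [div_mul_eq_mul_div, le_div_iff₀ (by positivity)]
  rw [div_mul_eq_mul_div, div_le_iff₀ (by positivity)] at mass
  linarith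

lemma reg {v W f : E2 → ℝ} {lam m : ℝ} (D : Data C b v W f lam m) (hC : 0 ≤ C) (hV : 0 < V₀)
    (hW : ∀ z, lam * ‖z‖ ≤ 3/8 → V₀ / 2 ≤ W z ∧ W z ≤ 2 * V₀) (hm : m ≤ 9 * Real.pi) (k η : ℝ) (hk : 1 ≤ k)
    (hη : ∫ z in (ball (0:E2) k)ᶜ, f z ≤ η)
    (hη2 : 8 * Real.exp (C + 8 * Real.pi * V₀ + 18 * Real.pi) / (Real.pi * V₀) * η < 1)
    (z : E2) (hz : 2 * k ≤ ‖z‖) (hz2 : lam * ‖z‖ ≤ 9/32) :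
    ‖z‖ ^ 2 * Real.exp (v z) ≤ 324 * (8 * Real.exp (C + 8 * Real.pi * V₀ + 18 * Real.pi) / (Real.pi * V₀)) * η := by
  set C2 := 8 * Real.exp (C + 8 * Real.pi * V₀ + 18 * Real.pi) / (Real.pi * V₀) with hC2
  set ρ := ‖z‖ with hρ
  have ρ0 : 0 < ρ := by linarith
  have lp := D.lam_pos
  have nrm : ∀ w ∈ closedBall z (ρ / 9), 8 * ρ / 9 ≤ ‖w‖ ∧ lam * ‖w‖ ≤ 5/16 := by
    intro w hw
    rw [mem_closedBall, dist_eq_norm] at hw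
    have h1 := norm_sub_norm_le w z
    have h2 := norm_sub_norm_le z w
    rw [norm_sub_rev] at h2
    refine ⟨by linarith, ?_⟩
    have : ‖w‖ ≤ 10 / 9 * ρ := by linarith
    nlinarith
  have vc : ContinuousOn v (closedBall z (ρ / 9)) := fun w hw =>
    (D.vC w (by linarith [(nrm w hw).2])).continuousAt.continuousWithinAt
  obtain ⟨zs, hzs, hmax⟩ := (isCompact_closedBall z (ρ / 9)).exists_isMaxOn ⟨z, mem_closedBall_self (by linarith)⟩
    (f := fun w => (ρ / 9 - dist w z) ^ 2 * Real.exp (v w)) (by fun_prop)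
  set σ := (ρ / 9 - dist zs z) / 2 with hσ
  have h1 : (ρ / 9 - dist z z) ^ 2 * Real.exp (v z) ≤ (ρ / 9 - dist zs z) ^ 2 * Real.exp (v zs) :=
    hmax (mem_closedBall_self (by linarith))
  rw [dist_self, sub_zero] at h1
  have e2 : ρ / 9 - dist zs z = 2 * σ := by rw [hσ]; ring
  rw [e2] at h1
  have σ0 : 0 ≤ σ := by
    rw [mem_closedBall] at hzs
    linarith
  have Ep := Real.exp_pos (v zs)
  have σp : 0 < σ := by
    rcases σ0.lt_or_eq with h | h
    · exact h
    · rw [← h] at h1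
      have : 0 < (ρ / 9) ^ 2 * Real.exp (v z) := by positivity
      simp at h1
      linarith
  have inb : ∀ w ∈ ball zs σ, w ∈ closedBall z (ρ / 9) ∧ σ ≤ ρ / 9 - dist w z := by
    intro w hw
    rw [mem_ball] at hw
    rw [mem_closedBall]
    have := dist_triangle w zs z
    constructor <;> linarith
  have four : ∀ w ∈ ball zs σ, Real.exp (v w) ≤ 4 * Real.exp (v zs) := by
    intro w hw
    obtain ⟨a, c⟩ := inb w hw
    have h3 : (ρ / 9 - dist w z) ^ 2 * Real.exp (v w) ≤ (ρ / 9 - dist zs z) ^ 2 * Real.exp (v zs) := hmax a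
    rw [e2] at h3
    have h4 : σ ^ 2 * Real.exp (v w) ≤ (ρ / 9 - dist w z) ^ 2 * Real.exp (v w) := by gcongr
    have h5 : σ ^ 2 * Real.exp (v w) ≤ σ ^ 2 * (4 * Real.exp (v zs)) := by linarith
    exact le_of_mul_le_mul_left h5 (by positivity)
  have core : ∀ s, 0 < s → s ≤ σ → s ^ 2 * Real.exp (v zs) ≤ 1 → s ^ 2 * Real.exp (v zs) ≤ C2 * η := by
    intro s hs hsσ hs1
    have sb : ball zs s ⊆ ball zs σ := ball_subset_ball hsσ
    have σl : σ ≤ ρ / 18 := by linarith [dist_nonneg (x := zs) (y := z)]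
    refine reg_core D hC hV hW hm zs s hs (fun w hw => ?_) (fun w hw => four w (sb hw)) hs1 η ?_
    · have := nrm w (inb w (sb hw)).1
      exact ⟨this.2, by linarith⟩
    · refine le_trans ?_ hη
      refine setIntegral_mono_set D.fi.integrableOn (Eventually.of_forall D.f0) (HasSubset.Subset.eventuallyLE ?_)
      intro w hw
      have := nrm w (inb w (sb (ball_subset_ball (by linarith) hw))).1
      simp
      linarith
  have fin : σ ^ 2 * Real.exp (v zs) ≤ C2 * η := by
    by_cases h : σ ^ 2 * Real.exp (v zs) ≤ 1
    · exact core σ σp le_rfl h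
    · push Not at h
      exfalso
      set s := Real.exp (-(v zs) / 2) with hs
      have s2 : s ^ 2 * Real.exp (v zs) = 1 := by
        rw [hs, ← Real.exp_nat_mul, ← Real.exp_add]; simp; ring
      have sp : 0 < s := Real.exp_pos _
      have : s ≤ σ := by
        by_contra hc
        push Not at hc
        have : σ ^ 2 * Real.exp (v zs) ≤ s ^ 2 * Real.exp (v zs) := by gcongr
        linarith
      have := core s sp this s2.le
      linarith
  have : ρ ^ 2 * Real.exp (v z) = 81 * ((ρ / 9) ^ 2 * Real.exp (v z)) := by ring
  rw [this]
  have : (2 * σ) ^ 2 * Real.exp (v zs) = 4 * (σ ^ 2 * Real.exp (v zs)) := by ring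
  linarith

end Aux

namespace Aux

lemma K_diff (j : Fin 2) (k : ℝ) (θ ζ : E2) (h1 : 2 * k ≤ ‖θ‖) (h2 : ‖ζ‖ < k) :
    |K j (θ - ζ) - K j θ| ≤ 2 * k / ‖θ‖ ^ 2 := by
  have k0 : 0 < k := (norm_nonneg ζ).trans_lt h2
  have t0 : 0 < ‖θ‖ := by linarith
  have n1 : ‖θ‖ / 2 ≤ ‖θ - ζ‖ := by
    have := norm_sub_norm_le θ ζ
    linarith
  have hx : θ - ζ ≠ 0 := norm_pos_iff.mp (by linarith)
  have hy : θ ≠ 0 := norm_pos_iff.mp t0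
  have d := EuclideanGeometry.dist_inversion_inversion (c := (0:E2)) hx hy 1
  have e : ∀ w : E2, K j w = (EuclideanGeometry.inversion (0:E2) 1 w) j := by
    intro w
    simp [EuclideanGeometry.inversion, K]
    ring
  rw [e, e]
  have := abs_coord_le (EuclideanGeometry.inversion (0:E2) 1 (θ - ζ) - EuclideanGeometry.inversion (0:E2) 1 θ) j
  rw [← dist_eq_norm, d] at this
  simp only [PiLp.sub_apply] at this
  refine this.trans ?_
  rw [dist_zero_right, dist_zero_right, dist_eq_norm]
  have : ‖θ - ζ - θ‖ = ‖ζ‖ := by rw [sub_sub_cancel_left, norm_neg]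
  rw [this, one_pow, div_mul_eq_mul_div, one_mul, div_le_div_iff₀ (by positivity) (by positivity)]
  have : ‖ζ‖ * ‖θ‖ ^ 2 ≤ k * ‖θ‖ ^ 2 := by gcongr
  have : 2 * k * (‖θ‖ / 2 * ‖θ‖) ≤ 2 * k * (‖θ - ζ‖ * ‖θ‖) := by gcongr
  nlinarith

variable {C b V₀ : ℝ} {v W f : ℕ → E2 → ℝ} {lam m : ℕ → ℝ} {u₀ : E2 → ℝ}

lemma ker_split {f : E2 → ℝ} (fi : Integrable f) (f0 : ∀ z, 0 ≤ f z) (b : ℝ) (fb : ∀ z, f z ≤ b)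
    (hm : ∫ z, f z ≤ 9 * Real.pi) (k η B : ℝ) (hη : 0 < η) (hk : 1 ≤ k)
    (h1 : ∫ z in (ball (0:E2) k)ᶜ, f z ≤ η) (h2 : |(∫ z in ball (0:E2) k, f z) - 8 * Real.pi| ≤ η)
    (θ : E2) (ht : 2 * k ≤ ‖θ‖) (ht2 : 18 * Real.pi * k / η ≤ ‖θ‖)
    (hB : ∀ z ∈ ball θ (‖θ‖ / 8), f z ≤ B) (j : Fin 2) :
    |(∫ ζ, f ζ * K j (θ - ζ)) - 8 * Real.pi * K j θ| ≤ 10 * η / ‖θ‖ + 2 * Real.pi * (‖θ‖ / 8) * B := by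
  have pi0 := Real.pi_pos
  set ρ := ‖θ‖ with hρ
  have ρ0 : 0 < ρ := by linarith
  have fKi : Integrable (fun ζ => f ζ * K j (θ - ζ)) :=
    kernel_int f fi θ 1 b one_pos (fun z _ => by rw [abs_of_nonneg (f0 z)]; exact fb z) j
  have k2 := integral_add_compl (measurableSet_ball (x := (0:E2)) (ε := k)) fKi
  set I1 := ∫ ζ in ball (0:E2) k, f ζ * K j (θ - ζ)
  set I2 := ∫ ζ in (ball (0:E2) k)ᶜ, f ζ * K j (θ - ζ) with hI2
  set M := ∫ z in ball (0:E2) k, f z with hM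
  have Mle : M ≤ 9 * Real.pi := (setIntegral_le_integral fi (Eventually.of_forall f0)).trans hm
  have a1 : |I1 - M * K j θ| ≤ η / ρ := by
    have e : I1 - M * K j θ = ∫ ζ in ball (0:E2) k, (f ζ * K j (θ - ζ) - f ζ * K j θ) := by
      have A := integral_sub (μ := volume.restrict (ball (0:E2) k)) fKi.integrableOn (fi.mul_const (K j θ)).integrableOn
      rw [A, integral_mul_const]
    rw [e, ← Real.norm_eq_abs]
    have c := norm_integral_le_of_norm_le (μ := volume.restrict (ball (0:E2) k))
      (f := fun ζ => f ζ * K j (θ - ζ) - f ζ * K j θ) (g := fun ζ => f ζ * (2 * k / ρ ^ 2))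
      (fi.mul_const _).integrableOn (by
        filter_upwards [ae_restrict_mem measurableSet_ball] with ζ hζ
        rw [← mul_sub, norm_mul, Real.norm_eq_abs, Real.norm_eq_abs, abs_of_nonneg (f0 ζ)]
        exact mul_le_mul_of_nonneg_left (K_diff j k θ ζ ht (by simpa using hζ)) (f0 ζ))
    refine c.trans ?_
    rw [integral_mul_const, ← hM]
    have : M * (2 * k / ρ ^ 2) ≤ 9 * Real.pi * (2 * k / ρ ^ 2) := by gcongr
    refine this.trans ?_
    rw [div_le_iff₀ hη] at ht2
    rw [← mul_div_assoc, div_le_div_iff₀ (by positivity) ρ0]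
    nlinarith
  have a2 : |M * K j θ - 8 * Real.pi * K j θ| ≤ η / ρ := by
    rw [← sub_mul, abs_mul]
    calc _ ≤ η * (1 / ρ) := mul_le_mul h2 (abs_K_le j θ) (abs_nonneg _) hη.le
      _ = _ := by ring
  have a3 : |I2| ≤ 8 * η / ρ + 2 * Real.pi * (ρ / 8) * B := by
    set g := (ball (0:E2) k)ᶜ.indicator f with hg
    have gi : Integrable g := fi.indicator measurableSet_ball.compl
    have g0 : ∀ z, 0 ≤ g z := fun z => Set.indicator_nonneg (fun z _ => f0 z) z
    have gle : ∀ z, g z ≤ f z := fun z => Set.indicator_le_self' (fun z _ => f0 z) z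
    have kb := kernel_bound g gi g0 θ (ρ / 8) B (by linarith) (fun z hz => (gle z).trans (hB z hz))
    have e : I2 = ∫ ζ, g ζ * K j (θ - ζ) := by
      rw [hI2, ← integral_indicator measurableSet_ball.compl]
      congr 1
      ext ζ
      rw [hg]
      by_cases h : ζ ∈ (ball (0:E2) k)ᶜ
      · rw [Set.indicator_of_mem h, Set.indicator_of_mem h]
      · rw [Set.indicator_of_notMem h, Set.indicator_of_notMem h, zero_mul]
    have gm : ∫ z in (ball θ (ρ / 8))ᶜ, g z ≤ η := by
      refine (setIntegral_le_integral gi (Eventually.of_forall g0)).trans ?_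
      rw [hg, integral_indicator measurableSet_ball.compl]
      exact h1
    have h3 : |I2| ≤ ∫ z, g z * (1 / ‖θ - z‖) := by
      rw [e, ← Real.norm_eq_abs]
      refine norm_integral_le_of_norm_le kb.1 (Eventually.of_forall fun z => ?_)
      rw [norm_mul, Real.norm_eq_abs, abs_of_nonneg (g0 z), Real.norm_eq_abs]
      exact mul_le_mul_of_nonneg_left (abs_K_le j _) (g0 z)
    have : (∫ z in (ball θ (ρ / 8))ᶜ, g z) / (ρ / 8) ≤ η / (ρ / 8) := by gcongr
    have e4 : η / (ρ / 8) = 8 * η / ρ := by field_simp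
    linarith [kb.2]
  have e5 : 10 * η / ρ = η / ρ + η / ρ + 8 * η / ρ := by ring
  rw [← k2, e5]
  have : I1 + I2 - 8 * Real.pi * K j θ = (I1 - M * K j θ) + (M * K j θ - 8 * Real.pi * K j θ) + I2 := by ring
  rw [this]
  have t1 := abs_add_le ((I1 - M * K j θ) + (M * K j θ - 8 * Real.pi * K j θ)) I2
  have t2 := abs_add_le (I1 - M * K j θ) (M * K j θ - 8 * Real.pi * K j θ)
  linarith

lemma Sq.est (S : Sq C b V₀ v W f lam m u₀) (hC : 0 ≤ C) (ε : ℝ) (hε : 0 < ε) : ∃ k : ℝ, 1 ≤ k ∧ ∀ᶠ i in atTop,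
    ∀ θ : E2, k ≤ ‖θ‖ → lam i * ‖θ‖ ≤ 1/4 → ∀ j, |pd j (v i) θ + 4 * K j θ| ≤ ε / ‖θ‖ + C * lam i := by
  have V0 := S.V0
  have pi0 := Real.pi_pos
  set C2 := 8 * Real.exp (C + 8 * Real.pi * V₀ + 18 * Real.pi) / (Real.pi * V₀) with hC2
  have C2p : 0 < C2 := by positivity
  set T := 324 * C2 with hT
  have Tp : 0 < T := by positivity
  set η := min (1 / (2 * C2)) (ε / (10 + Real.pi * V₀ * T)) with hη
  have ηp : 0 < η := by positivity
  have η1 : C2 * η < 1 := by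
    have : η ≤ 1 / (2 * C2) := min_le_left _ _
    rw [le_div_iff₀ (by positivity)] at this
    linarith
  have η2 : (10 + Real.pi * V₀ * T) * η ≤ ε := by
    have : η ≤ ε / (10 + Real.pi * V₀ * T) := min_le_right _ _
    rw [le_div_iff₀ (by positivity)] at this
    linarith
  obtain ⟨k0, hk0, hn⟩ := S.neck η ηp
  have q : 0 ≤ 18 * Real.pi * k0 / η := by positivity
  refine ⟨3 * k0 + 18 * Real.pi * k0 / η, by linarith, ?_⟩
  obtain ⟨i₀, hW0⟩ := S.W0 (V₀ / 2) (by linarith)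
  have e2 := S.m0.eventually (gt_mem_nhds (show 8 * Real.pi < 9 * Real.pi by linarith))
  filter_upwards [hn, e2, eventually_ge_atTop i₀] with i hn hm hi θ hθ hlt j
  have D := S.D i
  have lp := D.lam_pos
  have hW : ∀ z, lam i * ‖z‖ ≤ 3/8 → V₀ / 2 ≤ W i z ∧ W i z ≤ 2 * V₀ := by
    intro z hz
    have := abs_le.mp (hW0 i hi z hz)
    constructor <;> linarith
  set ρ := ‖θ‖ with hρ
  have ρ0 : 0 < ρ := by linarith
  have rg := reg D hC V0 hW hm.le k0 η hk0 hn.1 η1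
  have sp := ker_split D.fi D.f0 b D.fb (D.fm.trans hm.le) k0 η (4 * V₀ * T * η / ρ ^ 2) ηp hk0 hn.1 hn.2 θ
    (by linarith) (by linarith) (by
      intro z hz
      rw [mem_ball, dist_eq_norm] at hz
      have n1 := norm_sub_norm_le z θ
      have n2 := norm_sub_norm_le θ z
      rw [norm_sub_rev] at n2
      have n3 : ‖z‖ ≤ 9 / 8 * ρ := by linarith
      have n4 : 7 / 8 * ρ ≤ ‖z‖ := by linarith
      have n5 : lam i * ‖z‖ ≤ 9 / 32 := by nlinarith
      have r1 := rg z (by linarith) n5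
      rw [← hC2, ← hT] at r1
      rw [D.feq z (by linarith), le_div_iff₀ (by positivity)]
      have w := (hW z (by linarith)).2
      have ex := Real.exp_pos (v i z)
      have n6 : (7 / 8 * ρ) ^ 2 ≤ ‖z‖ ^ 2 := by gcongr
      have n7 : ρ ^ 2 * Real.exp (v i z) ≤ 2 * (T * η) := by
        have : (7 / 8 * ρ) ^ 2 * Real.exp (v i z) ≤ ‖z‖ ^ 2 * Real.exp (v i z) := by gcongr
        have : 0 < T * η := by positivity
        nlinarith
      calc W i z * Real.exp (v i z) * ρ ^ 2 = W i z * (ρ ^ 2 * Real.exp (v i z)) := by ring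
        _ ≤ 2 * V₀ * (ρ ^ 2 * Real.exp (v i z)) := by gcongr
        _ ≤ 2 * V₀ * (2 * (T * η)) := by gcongr
        _ = _ := by ring) j
  have RR := D.R θ (by linarith) j
  have e : 10 * η / ρ + 2 * Real.pi * (ρ / 8) * (4 * V₀ * T * η / ρ ^ 2) = ((10 + Real.pi * V₀ * T) * η) / ρ := by
    field_simp; ring
  rw [← hρ, e] at sp
  have e6 : ((10 + Real.pi * V₀ * T) * η) / ρ ≤ ε / ρ := by gcongr
  have tot : |2 * Real.pi * (pd j (v i) θ + 4 * K j θ)| ≤ ε / ρ + C * lam i := by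
    have : 2 * Real.pi * (pd j (v i) θ + 4 * K j θ) = (2 * Real.pi * pd j (v i) θ + ∫ ζ, f i ζ * K j (θ - ζ))
      - ((∫ ζ, f i ζ * K j (θ - ζ)) - 8 * Real.pi * K j θ) := by ring
    rw [this]
    refine (abs_sub _ _).trans ?_
    linarith
  rw [abs_mul, abs_of_pos (show 0 < 2 * Real.pi by positivity)] at tot
  have := Real.pi_gt_three
  nlinarith [abs_nonneg (pd j (v i) θ + 4 * K j θ)]

lemma Sq.est0 (S : Sq C b V₀ v W f lam m u₀) (ε k : ℝ)
    (h : ∀ᶠ i in atTop, ∀ θ : E2, k ≤ ‖θ‖ → lam i * ‖θ‖ ≤ 1/4 → ∀ j, |pd j (v i) θ + 4 * K j θ| ≤ ε / ‖θ‖ + C * lam i)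
    (θ : E2) (hθ : k ≤ ‖θ‖) (j : Fin 2) : |pd j u₀ θ + 4 * K j θ| ≤ ε / ‖θ‖ := by
  have t1 : Tendsto (fun i => |pd j (v i) θ + 4 * K j θ|) atTop (nhds |pd j u₀ θ + 4 * K j θ|) :=
    ((S.pd_conv θ j).add_const _).abs
  have t2 : Tendsto (fun i => ε / ‖θ‖ + C * lam i) atTop (nhds (ε / ‖θ‖ + C * 0)) :=
    (S.lam0.const_mul C).const_add _
  rw [mul_zero, add_zero] at t2
  refine le_of_tendsto_of_tendsto t1 t2 ?_
  filter_upwards [h, S.small ‖θ‖ (1/4) (by norm_num)] with i h1 h2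
  exact h1 θ hθ (h2 θ le_rfl).le j

end Aux

namespace Aux

lemma ray {v : E2 → ℝ} (k e c : ℝ) (hk : 0 < k) (θ : E2) (hθ : k ≤ ‖θ‖)
    (hd : ∀ w : E2, ‖w‖ ≤ ‖θ‖ → DifferentiableAt ℝ v w)
    (he : ∀ w : E2, k ≤ ‖w‖ → ‖w‖ ≤ ‖θ‖ → ∀ j, |pd j v w + 4 * K j w| ≤ e / ‖w‖ + c) :
    ∃ w : E2, ‖w‖ = k ∧ |v θ + 4 * Real.log ‖θ‖ - (v w + 4 * Real.log k)| ≤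
      2 * e * (Real.log ‖θ‖ - Real.log k) + 2 * c * (‖θ‖ - k) := by
  set ρ := ‖θ‖ with hρ
  have ρ0 : 0 < ρ := by linarith
  set ω : E2 := ρ⁻¹ • θ with hω
  have nω : ‖ω‖ = 1 := by rw [hω, norm_smul, norm_inv, Real.norm_eq_abs, abs_of_pos ρ0, ← hρ]; field_simp
  have ρω : ρ • ω = θ := by rw [hω, smul_smul, mul_inv_cancel₀ ρ0.ne', one_smul]
  have ns : ∀ s : ℝ, 0 < s → ‖s • ω‖ = s := by
    intro s hs
    rw [norm_smul, nω, mul_one, Real.norm_eq_abs, abs_of_pos hs]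
  refine ⟨k • ω, ns k hk, ?_⟩
  set F : ℝ → ℝ := fun s => v (s • ω) + 4 * Real.log s - (v (k • ω) + 4 * Real.log k) with hF
  have dF : ∀ s, 0 < s → s ≤ ρ → HasDerivAt F (fderiv ℝ v (s • ω) ω + 4 * s⁻¹) s := by
    intro s hs hs2
    have h1 : HasDerivAt (fun t : ℝ => t • ω) ω s := by
      simpa using (hasDerivAt_id s).smul_const ω
    have h2 := (hd (s • ω) (by rw [ns s hs]; exact hs2)).hasFDerivAt.comp_hasDerivAt s h1
    have h3 := (Real.hasDerivAt_log hs.ne').const_mul 4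
    exact (h2.add h3).sub_const _
  have bd : ∀ s, k ≤ s → s ≤ ρ → |fderiv ℝ v (s • ω) ω + 4 * s⁻¹| ≤ 2 * e * s⁻¹ + 2 * c := by
    intro s hs hs2
    have s0 : 0 < s := by linarith
    have h := he (s • ω) (by rw [ns s s0]; exact hs) (by rw [ns s s0]; exact hs2)
    rw [ns s s0] at h
    have n2 : ω 0 ^ 2 + ω 1 ^ 2 = 1 := by rw [← nsq, nω]; norm_num
    have eq : fderiv ℝ v (s • ω) ω + 4 * s⁻¹ =
        ω 0 * (pd 0 v (s • ω) + 4 * K 0 (s • ω)) + ω 1 * (pd 1 v (s • ω) + 4 * K 1 (s • ω)) := by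
      rw [fderiv_vec]
      have : s⁻¹ = ω 0 * K 0 (s • ω) + ω 1 * K 1 (s • ω) := by
        unfold K
        rw [ns s s0]
        simp only [PiLp.smul_apply, smul_eq_mul]
        field_simp
        linarith
      rw [this]; ring
    rw [eq]
    have c0 := abs_coord_le ω 0
    have c1 := abs_coord_le ω 1
    rw [nω] at c0 c1
    refine (abs_add_le _ _).trans ?_
    rw [abs_mul, abs_mul]
    have t0 := mul_le_mul c0 (h 0) (abs_nonneg _) zero_le_one
    have t1 := mul_le_mul c1 (h 1) (abs_nonneg _) zero_le_one
    rw [div_eq_mul_inv] at t0 t1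
    linarith
  have key := image_norm_le_of_norm_deriv_right_le_deriv_boundary' (f := F) (a := k) (b := ρ)
    (f' := fun s => fderiv ℝ v (s • ω) ω + 4 * s⁻¹)
    (fun s hs => (dF s (by linarith [hs.1]) hs.2).continuousAt.continuousWithinAt)
    (fun s hs => (dF s (by linarith [hs.1]) hs.2.le).hasDerivWithinAt)
    (B := fun s => 2 * e * (Real.log s - Real.log k) + 2 * c * (s - k)) (B' := fun s => 2 * e * s⁻¹ + 2 * c)
    (by simp [hF])
    (fun s hs => by
      have : s ≠ 0 := by linarith [hs.1]
      exact ((((Real.continuousAt_log this).sub continuousAt_const).const_mul _).add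
        ((continuousAt_id.sub continuousAt_const).const_mul _)).continuousWithinAt)
    (fun s hs => by
      have : s ≠ 0 := by linarith [hs.1]
      have h := (((Real.hasDerivAt_log this).sub_const (Real.log k)).const_mul (2 * e)).add
        (((hasDerivAt_id s).sub_const k).const_mul (2 * c))
      exact (h.congr_deriv (by ring)).hasDerivWithinAt)
    (fun s hs => bd s hs.1 hs.2.le)
  have := key (x := ρ) ⟨hθ, le_rfl⟩
  simp only [hF, ρω, Real.norm_eq_abs] at this
  exact this

variable {C b V₀ : ℝ} {v W f : ℕ → E2 → ℝ} {lam m : ℕ → ℝ} {u₀ : E2 → ℝ}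

lemma Sq.main (S : Sq C b V₀ v W f lam m u₀) (hC : 0 ≤ C) (ε : ℝ) (hε : 0 < ε) :
    ∃ k : ℝ, 1 ≤ k ∧ ∃ Cv > (0:ℝ), ∃ i₀ : ℕ, ∀ i ≥ i₀, ∀ θ : E2, k ≤ ‖θ‖ → lam i * ‖θ‖ ≤ 1/4 →
      |v i θ + 4 * Real.log ‖θ‖| ≤ ε * Real.log ‖θ‖ + Cv ∧
      ∀ j, |pd j (v i) θ - pd j u₀ θ| ≤ ε / ‖θ‖ + (C ^ 2 / (2 * ε) + 1) * lam i ^ 2 * ‖θ‖ := by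
  obtain ⟨k, hk, he⟩ := S.est hC (ε / 4) (by linarith)
  have h0 := S.est0 (ε / 4) k he
  obtain ⟨M, hM⟩ := (isCompact_closedBall (0:E2) k).exists_bound_of_continuousOn S.u0c.continuousOn
  have M0 : 0 ≤ M := (norm_nonneg _).trans (hM 0 (by simp; linarith))
  have lk : 0 ≤ Real.log k := Real.log_nonneg hk
  have hc := Metric.tendstoUniformlyOn_iff.mp (S.cv k) 1 one_pos
  refine ⟨k, hk, M + 1 + 4 * Real.log k + C / 2, by positivity, ?_⟩
  obtain ⟨i₀, hi₀⟩ := eventually_atTop.mp (he.and hc)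
  refine ⟨i₀, fun i hi θ hθ hl => ?_⟩
  obtain ⟨h1, h2⟩ := hi₀ i hi
  have lp := (S.D i).lam_pos
  have ρ0 : 0 < ‖θ‖ := by linarith
  have mono : ∀ w : E2, ‖w‖ ≤ ‖θ‖ → lam i * ‖w‖ ≤ 1/4 := fun w hw =>
    (mul_le_mul_of_nonneg_left hw lp.le).trans hl
  constructor
  · obtain ⟨w, hw, hr⟩ := ray (v := v i) k (ε / 4) (C * lam i) (by linarith) θ hθ
      (fun w hw => ((S.D i).vC w (by linarith [mono w hw])).differentiableAt (by norm_num))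
      (fun w hw hw2 j => h1 w hw (mono w hw2) j)
    have wb : w ∈ closedBall (0:E2) k := by simp [hw]
    have a := hM w wb
    have b := h2 w wb
    rw [Real.dist_eq] at b
    rw [Real.norm_eq_abs] at a
    have lθ : Real.log k ≤ Real.log ‖θ‖ := Real.log_le_log (by linarith) hθ
    have a' := abs_le.mp a
    have b' := abs_lt.mp b
    have r' := abs_le.mp hr
    have z : 2 * (C * lam i) * (‖θ‖ - k) ≤ C / 2 := by
      have : C * (lam i * ‖θ‖) ≤ C * (1/4) := by gcongr
      have : 0 ≤ C * lam i * k := by positivity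
      nlinarith
    have z2 : 2 * (ε / 4) * (Real.log ‖θ‖ - Real.log k) ≤ ε * Real.log ‖θ‖ := by nlinarith
    rw [abs_le]
    constructor <;> linarith
  · intro j
    have a := h1 θ hθ hl j
    have b := h0 θ hθ j
    have : pd j (v i) θ - pd j u₀ θ = (pd j (v i) θ + 4 * K j θ) - (pd j u₀ θ + 4 * K j θ) := by ring
    rw [this]
    have t := abs_sub (pd j (v i) θ + 4 * K j θ) (pd j u₀ θ + 4 * K j θ)
    have am : C * lam i ≤ ε / 2 / ‖θ‖ + C ^ 2 / (2 * ε) * lam i ^ 2 * ‖θ‖ := by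
      have : ε / 2 / ‖θ‖ + C ^ 2 / (2 * ε) * lam i ^ 2 * ‖θ‖ - C * lam i =
          (ε - C * lam i * ‖θ‖) ^ 2 / (2 * ε * ‖θ‖) := by
        field_simp; ring
      have : 0 ≤ (ε - C * lam i * ‖θ‖) ^ 2 / (2 * ε * ‖θ‖) := by positivity
      linarith
    have : 0 ≤ lam i ^ 2 * ‖θ‖ := by positivity
    have e : ε / ‖θ‖ = ε / 4 / ‖θ‖ + ε / 4 / ‖θ‖ + ε / 2 / ‖θ‖ := by ring
    rw [e]
    linarith

end Aux

theorem stmt13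
    (b A s C₀ : ℝ) (hs1 : 1/2 < s) (hs2 : s ≤ 1)
    (V u : ℕ → E2 → ℝ) (x_ : ℕ → E2) (δ r : ℕ → ℝ) (v : ℕ → E2 → ℝ)
    (hu : ∀ i, ContDiffOn ℝ 2 (u i) (closedBall (0:E2) 1))
    (hVb : ∀ i, ∀ x ∈ ball (0:E2) 1, 0 ≤ V i x ∧ V i x ≤ b)
    (hVhol : ∀ i, ∀ x ∈ ball (0:E2) 1, ∀ y ∈ ball (0:E2) 1, |V i x - V i y| ≤ A * ‖x - y‖ ^ s)
    (hpde : ∀ i, ∀ x ∈ ball (0:E2) 1, -(lapl (u i) x) = V i x * Real.exp (u i x))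
    (hbc : ∀ i, ∀ x ∈ sphere (0:E2) 1, u i x = 0)
    (hint : ∀ i, (∫ y in ball (0:E2) 1, Real.exp (u i y)) ≤ C₀)
    (hxmem : ∀ i, x_ i ∈ ball (0:E2) 1)
    (hmax : ∀ i, ∀ y ∈ closedBall (0:E2) 1, u i y ≤ u i (x_ i))
    (hblow : Tendsto (fun i => u i (x_ i)) atTop atTop)
    (hδ : ∀ i, δ i = Metric.infDist (x_ i) (sphere (0:E2) 1))
    (hδ0 : Tendsto δ atTop (nhds 0))
    (hr : ∀ i, r i = Real.exp (-(u i (x_ i)) / 2))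
    (hrδ : Tendsto (fun i => r i / δ i) atTop (nhds 0))
    (hmass : Tendsto (fun i => ∫ y in ball (x_ i) (δ i / 2), V i y * Real.exp (u i y)) atTop
      (nhds (8 * Real.pi)))
    (hbound : ∀ ε : ℝ, 0 < ε → ε < 1 → ∃ Cε : ℝ, ∀ i, ∀ y : E2, ‖y‖ = ε →
      u i (x_ i + δ i • y) ≤ Cε)
    (hv : ∀ i θ, v i θ = u i (x_ i + r i • θ) - u i (x_ i))
    (y_ t_ : ℕ → E2)
    (hymem : ∀ i, y_ i ∈ ball (0:E2) 1) (htmem : ∀ i, t_ i ∈ ball (0:E2) 1)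
    (hyblow : Tendsto (fun i => u i (y_ i)) atTop atTop)
    (htblow : Tendsto (fun i => u i (t_ i)) atTop atTop)
    (u₀ : E2 → ℝ) (V₀ : ℝ) (hV₀pos : 0 < V₀)
    (hV₀ : Tendsto (fun i => V i (x_ i)) atTop (nhds V₀))
    (hu₀ : ∀ x : E2, -(lapl u₀ x) = V₀ * Real.exp (u₀ x))
    (hconv : ∀ K : Set E2, IsCompact K →
      TendstoUniformlyOn (fun i θ => v i θ) u₀ atTop K ∧
      TendstoUniformlyOn (fun i θ => fderiv ℝ (v i) θ) (fderiv ℝ u₀) atTop K ∧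
      TendstoUniformlyOn (fun i θ => fderiv ℝ (fun w => fderiv ℝ (v i) w) θ)
        (fderiv ℝ (fun w => fderiv ℝ u₀ w)) atTop K) :
    ∀ ε : ℝ, 0 < ε → ∀ ε' : ℝ, ε' ∈ Set.Ioo (0:ℝ) (1/4) →
      ∃ k > (0:ℝ), ∃ i₀ : ℕ, ∃ Cv > (0:ℝ), ∃ C > (0:ℝ), ∃ C₁ > (0:ℝ), ∃ C₂ > (0:ℝ), ∃ m : ℝ,
        ∀ i ≥ i₀, ∀ θ : E2, k ≤ ‖θ‖ → ‖θ‖ ≤ δ i * ε' / r i →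
          ((-4 - ε) * Real.log ‖θ‖ - Cv ≤ v i θ ∧ v i θ ≤ (-4 + ε) * Real.log ‖θ‖ + Cv) ∧
          ∀ j : Fin 2, |pd j (v i) θ - pd j u₀ θ - m * (r i / δ i)| ≤
            ε / ‖θ‖ + C * (r i / δ i) ^ 2 * ‖θ‖ + C₁ * (r i / dist (x_ i) (y_ i)) +
              C₂ * (r i / dist (x_ i) (t_ i)) := by
  have δp : ∀ i, 0 < δ i := by
    intro i
    rw [hδ i]
    refine (isClosed_sphere.notMem_iff_infDist_pos ?_).mp ?_
    · exact (NormedSpace.sphere_nonempty (E := E2)).mpr zero_le_one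
    · have := hxmem i
      simp at this ⊢
      exact this.ne
  have rp : ∀ i, 0 < r i := fun i => by rw [hr i]; exact Real.exp_pos _
  have δ1 : ∀ i, δ i ≤ 1 - ‖x_ i‖ := fun i => by rw [hδ i]; exact Aux.infDist_le _ (hxmem i)
  obtain ⟨C, hC, hD⟩ := Aux.mkData
  obtain ⟨M, hM⟩ := hbound (3/8) (by norm_num) (by norm_num)
  have S : Aux.Sq (C * max M 0) b V₀ v (fun i z => V i (x_ i + r i • z))
      (fun i z => Aux.χ ((r i / δ i) • z) * (V i (x_ i + r i • z) * Real.exp (v i z))) (fun i => r i / δ i)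
      (fun i => ∫ y in ball (x_ i) (δ i / 2), V i y * Real.exp (u i y)) u₀ := by
    refine ⟨fun i => ?_, hrδ, hmass, ?_, hV₀pos, fun R => (hconv _ (isCompact_closedBall 0 R)).1,
      fun R => (hconv _ (isCompact_closedBall 0 R)).2.1⟩
    · exact hD (u i) (V i) (v i) (x_ i) (δ i) (r i) (max M 0) b (hu i) (hVb i) (hpde i) (hbc i) (hxmem i) (hmax i)
        (δp i) (δ1 i) (hr i) (le_max_right _ _) (fun y hy => (hM i y hy).trans (le_max_left _ _)) (hv i)
    · intro η hη
      have t1 : Tendsto (fun i => |A| * δ i ^ s + |V i (x_ i) - V₀|) atTop (nhds (|A| * (0:ℝ) ^ s + |V₀ - V₀|)) :=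
        ((hδ0.rpow_const (Or.inr (by linarith))).const_mul _).add (hV₀.sub_const _).abs
      rw [Real.zero_rpow (by linarith), sub_self, abs_zero, mul_zero, add_zero] at t1
      obtain ⟨i₀, h⟩ := eventually_atTop.mp (t1.eventually (gt_mem_nhds hη))
      refine ⟨i₀, fun i hi z hz => ?_⟩
      have h1 := h i hi
      have d0 := δp i
      have nz : ‖r i • z‖ ≤ 3 / 8 * δ i := by
        rw [norm_smul, Real.norm_eq_abs, abs_of_pos (rp i)]
        rw [div_mul_eq_mul_div, div_le_iff₀ d0] at hz
        exact hz
      have mem : x_ i + r i • z ∈ ball (0:E2) 1 := by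
        rw [mem_ball_zero_iff]
        have := norm_add_le (x_ i) (r i • z)
        linarith [δ1 i]
      have hh := hVhol i _ mem _ (hxmem i)
      rw [add_sub_cancel_left] at hh
      have p : ‖r i • z‖ ^ s ≤ δ i ^ s := Real.rpow_le_rpow (norm_nonneg _) (by linarith) (by linarith)
      have p2 : A * ‖r i • z‖ ^ s ≤ |A| * δ i ^ s :=
        mul_le_mul (le_abs_self A) p (Real.rpow_nonneg (norm_nonneg _) _) (abs_nonneg _)
      have := abs_sub_le (V i (x_ i + r i • z)) (V i (x_ i)) V₀
      linarith
  intro ε hε ε' hε'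
  obtain ⟨k, hk, Cv, hCv, i₀, H⟩ := S.main (by positivity) ε hε
  refine ⟨k, by linarith, i₀, Cv, hCv, (C * max M 0) ^ 2 / (2 * ε) + 1, by positivity, 1, one_pos, 1, one_pos, 0, ?_⟩
  intro i hi θ hθ hθ2
  have d0 := δp i
  have r0 := rp i
  have hl : r i / δ i * ‖θ‖ ≤ 1/4 := by
    rw [le_div_iff₀ r0] at hθ2
    rw [div_mul_eq_mul_div, div_le_iff₀ d0]
    nlinarith [hε'.2]
  obtain ⟨h1, h2⟩ := H i hi θ hθ hl
  have h1 := abs_le.mp h1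
  refine ⟨⟨by linarith, by linarith⟩, fun j => ?_⟩
  have a1 : 0 ≤ r i / dist (x_ i) (y_ i) := by positivity
  have a2 : 0 ≤ r i / dist (x_ i) (t_ i) := by positivity
  rw [zero_mul, sub_zero]
  linarith [h2 j]
end

section
/- (Smallness of the gradient in L^q near the blow-up point.) Under the blow-up setup, for every q with 1 ≤ q < 2 and every ε' ∈ (0, 1/4), the L^q norm of the gradient of u_i over the ball B(x_i, δ_i ε') tends to zero: ( ∫_{B(x_i, δ_i ε')} |∇u_i|^q dy )^{1/q} → 0 as i → ∞. -/
open MeasureTheory Filter Metric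

open Topology

lemma second_deriv_nonneg {g : ℝ → ℝ} {x : ℝ} (hm : IsLocalMin g x) (hc : ContinuousAt g x) :
    0 ≤ deriv (deriv g) x := by
  by_contra! h
  have hM := isLocalMax_of_deriv_deriv_neg h hm.deriv_eq_zero hc
  have he : g =ᶠ[𝓝 x] fun _ => g x := by
    filter_upwards [hm, hM] with y h1 h2
    exact le_antisymm h2 h1
  have h3 := he.deriv.deriv_eq
  simp at h3
  linarith

lemma pd_contDiffAt {u : E2 → ℝ} {x : E2} (h : ContDiffAt ℝ 2 u x) (j : Fin 2) :
    ContDiffAt ℝ 1 (pd j u) x := by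
  have h1 : ContDiffAt ℝ 1 (fderiv ℝ u) x := h.fderiv_right (by norm_num)
  exact h1.clm_apply contDiffAt_const

lemma hasDerivAt_line {f : E2 → ℝ} (z : E2) (j : Fin 2) (t : ℝ)
    (hf : DifferentiableAt ℝ f (z + t • EuclideanSpace.single j 1)) :
    HasDerivAt (fun t : ℝ => f (z + t • EuclideanSpace.single j 1))
      (pd j f (z + t • EuclideanSpace.single j 1)) t := by
  have h1 : HasDerivAt (fun t : ℝ => z + t • (EuclideanSpace.single j 1 : E2))
      (EuclideanSpace.single j 1) t := by
    simpa using ((hasDerivAt_id t).smul_const (EuclideanSpace.single j 1 : E2)).const_add z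
  exact hf.hasFDerivAt.comp_hasDerivAt t h1

lemma pd_pd_ge {u : E2 → ℝ} {z : E2} (hu : ContDiffAt ℝ 2 u z) (ε : ℝ) (j : Fin 2)
    (hm : IsLocalMin (fun x => u x - ε * ‖x‖ ^ 2) z) : 2 * ε ≤ pd j (pd j u) z := by
  set e : E2 := EuclideanSpace.single j 1 with he
  have hc : ContinuousAt (fun t : ℝ => z + t • e) 0 := by fun_prop
  have hz : z + (0:ℝ) • e = z := by simp
  have hnorm : ∀ t : ℝ, ‖z + t • e‖ ^ 2 = ‖z‖ ^ 2 + 2 * t * z j + t ^ 2 := by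
    intro t
    rw [norm_add_sq_real, inner_smul_right, he, EuclideanSpace.inner_single_right, norm_smul]
    simp
    ring
  let g : ℝ → ℝ := fun t => u (z + t • e) - ε * (‖z‖ ^ 2 + 2 * t * z j + t ^ 2)
  have hgm : IsLocalMin g 0 := by
    have h1 : Tendsto (fun t : ℝ => z + t • e) (𝓝 0) (𝓝 z) := by
      have := hc.tendsto
      rwa [hz] at this
    have h2 := h1.eventually hm
    filter_upwards [h2] with t ht
    have h3 := hnorm 0
    rw [hz] at h3
    simp only [g, hz]
    rw [← h3, ← hnorm t]
    exact ht
  have hev : ∀ᶠ t : ℝ in 𝓝 0, ContDiffAt ℝ 2 u (z + t • e) := by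
    have h1 : Tendsto (fun t : ℝ => z + t • e) (𝓝 0) (𝓝 z) := by
      have := hc.tendsto
      rwa [hz] at this
    exact h1.eventually (hu.eventually (by simp))
  have hd1 : ∀ᶠ t : ℝ in 𝓝 0, HasDerivAt g (pd j u (z + t • e) - ε * (2 * z j + 2 * t)) t := by
    filter_upwards [hev] with t ht
    refine (hasDerivAt_line z j t (ht.differentiableAt (by norm_num))).sub ?_
    apply HasDerivAt.const_mul
    have ha : HasDerivAt (fun t : ℝ => 2 * t * z j) (2 * z j) t := by
      simpa using ((hasDerivAt_id t).const_mul 2).mul_const (z j)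
    have hb : HasDerivAt (fun t : ℝ => t ^ 2) (2 * t) t := by
      simpa using hasDerivAt_pow 2 t
    exact (ha.const_add (‖z‖ ^ 2)).add hb
  have hd2 : HasDerivAt (deriv g) (pd j (pd j u) z - ε * 2) 0 := by
    have h1 : deriv g =ᶠ[𝓝 0] fun t => pd j u (z + t • e) - ε * (2 * z j + 2 * t) :=
      hd1.mono fun t ht => ht.deriv
    refine HasDerivAt.congr_of_eventuallyEq ?_ h1
    have h2 := hasDerivAt_line (f := pd j u) z j 0 (by
      rw [← he, hz]; exact (pd_contDiffAt hu j).differentiableAt (by norm_num))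
    rw [← he, hz] at h2
    refine h2.sub ?_
    apply HasDerivAt.const_mul
    simpa using ((hasDerivAt_id (0:ℝ)).const_mul 2).const_add (2 * z j)
  have := second_deriv_nonneg hgm hd1.self_of_nhds.continuousAt
  rw [hd2.deriv] at this
  linarith

lemma nonneg_of_superharmonic {u : E2 → ℝ}
    (hu : ContDiffOn ℝ 2 u (closedBall (0:E2) 1))
    (hl : ∀ x ∈ ball (0:E2) 1, lapl u x ≤ 0)
    (hbc : ∀ x ∈ sphere (0:E2) 1, u x = 0) :
    ∀ x ∈ closedBall (0:E2) 1, 0 ≤ u x := by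
  intro y hy
  by_contra! hneg
  obtain ⟨ε, hε0, hε⟩ : ∃ ε : ℝ, 0 < ε ∧ u y < -ε := ⟨-u y / 2, by linarith, by linarith⟩
  have hcont : ContinuousOn (fun x => u x - ε * ‖x‖ ^ 2) (closedBall (0:E2) 1) :=
    hu.continuousOn.sub (by fun_prop)
  obtain ⟨z, hz, hzm⟩ := (isCompact_closedBall (0:E2) 1).exists_isMinOn ⟨y, hy⟩ hcont
  have hzy : u z - ε * ‖z‖ ^ 2 ≤ u y - ε * ‖y‖ ^ 2 := hzm hy
  have hzb : z ∈ ball (0:E2) 1 := by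
    by_contra hnb
    have hz1 : ‖z‖ = 1 := by
      simp at hz hnb; linarith
    have := hbc z (by simpa using hz1)
    rw [this, hz1] at hzy
    nlinarith [sq_nonneg ‖y‖]
  have hnhds : closedBall (0:E2) 1 ∈ 𝓝 z := mem_of_superset (isOpen_ball.mem_nhds hzb) ball_subset_closedBall
  have hmin : IsLocalMin (fun x => u x - ε * ‖x‖ ^ 2) z := hzm.isLocalMin hnhds
  have hc : ContDiffAt ℝ 2 u z := hu.contDiffAt hnhds
  have h0 := pd_pd_ge hc ε 0 hmin
  have h1 := pd_pd_ge hc ε 1 hmin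
  have h2 := hl z hzb
  unfold lapl at h2
  linarith

lemma integral_pd_eq_zero {G : E2 → ℝ} (hG : ContDiff ℝ 1 G) (hs : HasCompactSupport G) (j : Fin 2) :
    Integrable (pd j G) ∧ ∫ y, pd j G y = 0 := by
  have hcont : Continuous (pd j G) := (hG.continuous_fderiv (by norm_num)).clm_apply continuous_const
  have hsupp : HasCompactSupport (pd j G) := hs.fderiv_apply (𝕜 := ℝ) _
  have hint : Integrable (pd j G) := hcont.integrable_of_hasCompactSupport hsupp
  refine ⟨hint, ?_⟩
  have := integral_mul_fderiv_eq_neg_fderiv_mul_of_integrable (μ := (volume : Measure E2))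
    (f := fun _ : E2 => (1:ℝ)) (g := G) (v := EuclideanSpace.single j 1)
    (by simp) (by simpa [pd, Function.comp_def] using (show Integrable (fun x => pd j G x) volume from hint))
    (by simpa using hG.continuous.integrable_of_hasCompactSupport hs)
    (by intros; fun_prop) (by intro x _; exact hG.differentiable (by norm_num) x)
  simpa [pd] using this

lemma caccioppoli {u χ : E2 → ℝ} {U : Set E2} (hU : IsOpen U)
    (hu : ∀ x ∈ U, ContDiffAt ℝ 2 u x) (hpos : ∀ x ∈ U, 0 ≤ u x)
    (hl : ∀ x ∈ U, lapl u x ≤ 0) (hχ : ContDiff ℝ 1 χ) (hcs : HasCompactSupport χ)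
    (hsub : tsupport χ ⊆ U) :
    Integrable (fun y => χ y ^ 2 * ((pd 0 u y ^ 2 + pd 1 u y ^ 2) / (1 + u y) ^ 2)) ∧
    ∫ y, χ y ^ 2 * ((pd 0 u y ^ 2 + pd 1 u y ^ 2) / (1 + u y) ^ 2) ≤
      4 * ∫ y, (pd 0 χ y ^ 2 + pd 1 χ y ^ 2) := by
  have hzero : ∀ x, x ∉ tsupport χ → χ =ᶠ[𝓝 x] fun _ => 0 := fun x hx =>
    notMem_tsupport_iff_eventuallyEq.mp hx
  have hne : ∀ x ∈ U, 1 + u x ≠ 0 := fun x hx => by have := hpos x hx; positivity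
  let G : Fin 2 → E2 → ℝ := fun j y => χ y ^ 2 * (pd j u y / (1 + u y))
  have hG : ∀ j, ContDiff ℝ 1 (G j) := by
    intro j
    rw [contDiff_iff_contDiffAt]
    intro x
    by_cases hx : x ∈ tsupport χ
    · have hxU := hsub hx
      exact (hχ.contDiffAt.pow 2).mul ((pd_contDiffAt (hu x hxU) j).div
        (contDiffAt_const.add ((hu x hxU).of_le (by norm_num))) (hne x hxU))
    · have : G j =ᶠ[𝓝 x] fun _ => 0 := by
        filter_upwards [hzero x hx] with y hy
        simp [G, hy]
      exact contDiffAt_const.congr_of_eventuallyEq this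
  have hGs : ∀ j, HasCompactSupport (G j) := by
    intro j
    refine hcs.mono ?_
    intro x hx hx0
    apply hx
    simp [G, hx0]
  have hGpd : ∀ j, ∀ x ∈ U, pd j (G j) x = 2 * χ x * pd j χ x * (pd j u x / (1 + u x)) +
      χ x ^ 2 * (pd j (pd j u) x / (1 + u x) - pd j u x ^ 2 / (1 + u x) ^ 2) := by
    intro j x hx
    have e1 := hasDerivAt_line (f := χ) x j 0 (hχ.differentiable (by norm_num) _)
    have e2 := hasDerivAt_line (f := u) x j 0
      (by simpa using (hu x hx).differentiableAt (by norm_num))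
    have e3 := hasDerivAt_line (f := pd j u) x j 0
      (by simpa using (pd_contDiffAt (hu x hx) j).differentiableAt (by norm_num))
    have e4 := hasDerivAt_line (f := G j) x j 0 ((hG j).differentiable (by norm_num) _)
    have e5 := (e1.pow 2).mul (e3.div (e2.const_add 1) (by simpa using hne x hx))
    have e6 := e4.unique e5
    simp only [zero_smul, add_zero] at e6
    rw [e6]
    have := hne x hx
    simp only [Pi.div_apply, Pi.pow_apply, zero_smul, add_zero]
    norm_num
    field_simp
    simp
  let F : E2 → ℝ := fun y => χ y ^ 2 * ((pd 0 u y ^ 2 + pd 1 u y ^ 2) / (1 + u y) ^ 2)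
  have hFc : Continuous F := by
    rw [continuous_iff_continuousAt]
    intro x
    by_cases hx : x ∈ tsupport χ
    · have hxU := hsub hx
      exact (hχ.continuous.continuousAt.pow 2).mul
        ((((pd_contDiffAt (hu x hxU) 0).continuousAt.pow 2).add
          ((pd_contDiffAt (hu x hxU) 1).continuousAt.pow 2)).div
        ((continuousAt_const.add (hu x hxU).continuousAt).pow 2) (pow_ne_zero 2 (hne x hxU)))
    · have : F =ᶠ[𝓝 x] fun _ => 0 := by
        filter_upwards [hzero x hx] with y hy
        simp [F, hy]
      exact continuousAt_const.congr this.symm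
  have hFs : HasCompactSupport F := by
    refine hcs.mono ?_
    intro x hx hx0
    apply hx
    simp [F, hx0]
  have hFi : Integrable F := hFc.integrable_of_hasCompactSupport hFs
  have hχc : ∀ j, Continuous (pd j χ) := fun j =>
    (hχ.continuous_fderiv (by norm_num)).clm_apply continuous_const
  have hχs : ∀ j, HasCompactSupport (pd j χ) := fun j => hcs.fderiv_apply (𝕜 := ℝ) _
  have hχi : ∀ j, Integrable (fun y => pd j χ y ^ 2) := fun j => by
    refine ((hχc j).pow 2).integrable_of_hasCompactSupport ((hχs j).mono ?_)
    intro x hx hx0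
    apply hx
    simp [hx0]
  refine ⟨hFi, ?_⟩
  have hpt : ∀ y, pd 0 (G 0) y + pd 1 (G 1) y ≤
      -(1/2) * F y + 2 * (pd 0 χ y ^ 2 + pd 1 χ y ^ 2) := by
    intro x
    by_cases hx : x ∈ tsupport χ
    · have hxU := hsub hx
      rw [hGpd 0 x hxU, hGpd 1 x hxU]
      have h1 := hl x hxU
      unfold lapl at h1
      have h2 : 0 < 1 + u x := by have := hpos x hxU; positivity
      have h3 : χ x ^ 2 * ((pd 0 (pd 0 u) x + pd 1 (pd 1 u) x) / (1 + u x)) ≤ 0 :=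
        mul_nonpos_of_nonneg_of_nonpos (sq_nonneg _) (div_nonpos_of_nonpos_of_nonneg h1 h2.le)
      rw [add_div] at h3
      simp only [F]
      rw [add_div, ← div_pow, ← div_pow]
      nlinarith [sq_nonneg (χ x * (pd 0 u x / (1 + u x)) - 2 * pd 0 χ x),
        sq_nonneg (χ x * (pd 1 u x / (1 + u x)) - 2 * pd 1 χ x)]
    · have hg : ∀ j, pd j (G j) x = 0 := by
        intro j
        have : G j =ᶠ[𝓝 x] fun _ => 0 := by
          filter_upwards [hzero x hx] with y hy
          simp [G, hy]
        simp [pd, this.fderiv_eq]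
      have hF : F x = 0 := by simp [F, (hzero x hx).self_of_nhds]
      rw [hg, hg, hF]
      nlinarith [sq_nonneg (pd 0 χ x), sq_nonneg (pd 1 χ x)]
  have hχ01 : Integrable (fun y => pd 0 χ y ^ 2 + pd 1 χ y ^ 2) := (hχi 0).add (hχi 1)
  have h0 := integral_pd_eq_zero (hG 0) (hGs 0) 0
  have h1 := integral_pd_eq_zero (hG 1) (hGs 1) 1
  have hI := integral_mono (μ := (volume : Measure E2)) (h0.1.add h1.1)
    ((hFi.const_mul (-(1/2))).add (hχ01.const_mul 2)) hpt
  simp only [Pi.add_apply] at hI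
  rw [integral_add h0.1 h1.1, h0.2, h1.2,
    integral_add (hFi.const_mul (-(1/2))) (hχ01.const_mul 2),
    integral_const_mul, integral_const_mul] at hI
  change ∫ y, F y ≤ _
  linarith

lemma norm_fderiv_sq_le (u : E2 → ℝ) (x : E2) :
    ‖fderiv ℝ u x‖ ^ 2 ≤ pd 0 u x ^ 2 + pd 1 u x ^ 2 := by
  have h : ‖fderiv ℝ u x‖ ≤ √(pd 0 u x ^ 2 + pd 1 u x ^ 2) := by
    refine ContinuousLinearMap.opNorm_le_bound _ (Real.sqrt_nonneg _) fun w => ?_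
    have hw : w = w 0 • (EuclideanSpace.single 0 1 : E2) + w 1 • (EuclideanSpace.single 1 1 : E2) := by
      ext i; fin_cases i <;> simp
    have h1 : fderiv ℝ u x w = w 0 * pd 0 u x + w 1 * pd 1 u x := by
      conv_lhs => rw [hw]
      simp [pd]
    rw [h1, EuclideanSpace.norm_eq, ← Real.sqrt_mul (by positivity), Real.norm_eq_abs]
    apply Real.abs_le_sqrt
    simp [Fin.sum_univ_two]
    nlinarith [sq_nonneg (w 0 * pd 1 u x - w 1 * pd 0 u x)]
  calc _ ≤ (√(pd 0 u x ^ 2 + pd 1 u x ^ 2)) ^ 2 := by gcongr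
    _ = _ := Real.sq_sqrt (by positivity)

lemma pointwise_young {q : ℝ} (hq1 : 1 ≤ q) (hq2 : q < 2) {lam : ℝ} (hl : 0 < lam) :
    ∃ K : ℝ, 0 ≤ K ∧ ∀ a t : ℝ, 0 ≤ a → 0 ≤ t →
      a ^ q ≤ lam * (a ^ 2 / (1 + t) ^ 2) + lam * Real.exp t + K := by
  set m : ℝ := q / (2 - q) with hm
  have hq3 : 0 < 2 - q := by linarith
  have hm0 : 0 < m := by positivity
  set c : ℝ := (1 / lam) ^ m with hc
  have hc0 : 0 < c := by positivity
  have h1 := (isLittleO_rpow_exp_atTop (2 * m)).def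
    (show 0 < lam * Real.exp (-1) / c by positivity)
  obtain ⟨T, hT⟩ := eventually_atTop.mp h1
  refine ⟨c * (max T 1) ^ (2 * m), by positivity, fun a t ha ht => ?_⟩
  have hK : 0 ≤ c * (max T 1) ^ (2 * m) := by positivity
  have hE := Real.exp_pos t
  rcases ha.eq_or_lt with rfl | ha
  · rw [Real.zero_rpow (by linarith)]; positivity
  rcases le_total (a ^ q) (lam * (a ^ 2 / (1 + t) ^ 2)) with h | h
  · nlinarith [mul_pos hl hE]
  have hA : 0 ≤ lam * (a ^ 2 / (1 + t) ^ 2) := by positivity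
  have h2 : a ^ (2 - q) ≤ (1 + t) ^ 2 / lam := by
    have : a ^ (2 - q) = a ^ 2 / a ^ q := by
      rw [Real.rpow_sub ha]; simp
    rw [this, div_le_div_iff₀ (by positivity) hl]
    have h' := mul_le_mul_of_nonneg_right h (sq_nonneg (1 + t))
    have : lam * (a ^ 2 / (1 + t) ^ 2) * (1 + t) ^ 2 = a ^ 2 * lam := by field_simp
    linarith
  have h3 : a ^ q ≤ c * (1 + t) ^ (2 * m) := by
    have e1 : a ^ q = (a ^ (2 - q)) ^ m := by
      rw [← Real.rpow_mul ha.le, hm]; congr 1; field_simp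
    rw [e1]
    calc _ ≤ ((1 + t) ^ 2 / lam) ^ m := by gcongr
      _ = c * (1 + t) ^ (2 * m) := by
        rw [hc, div_eq_mul_one_div, Real.mul_rpow (by positivity) (by positivity), mul_comm,
          Real.rpow_mul (by positivity)]
        norm_num
  rcases le_total T (1 + t) with hTt | hTt
  · have h4 := hT (1 + t) hTt
    rw [Real.norm_of_nonneg (by positivity), Real.norm_of_nonneg (by positivity)] at h4
    have h5 : c * (1 + t) ^ (2 * m) ≤ lam * Real.exp t := by
      calc _ ≤ c * (lam * Real.exp (-1) / c * Real.exp (1 + t)) := by gcongr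
        _ = lam * (Real.exp (-1) * Real.exp (1 + t)) := by field_simp
        _ = _ := by rw [← Real.exp_add]; congr 2; ring
    linarith
  · have h5 : c * (1 + t) ^ (2 * m) ≤ c * (max T 1) ^ (2 * m) := by
      gcongr
      exact hTt.trans (le_max_left _ _)
    nlinarith [mul_pos hl hE]

lemma infDist_le {x : E2} (hx : x ∈ ball (0:E2) 1) :
    0 < infDist x (sphere (0:E2) 1) ∧ infDist x (sphere (0:E2) 1) ≤ 1 - ‖x‖ := by
  have hx1 : ‖x‖ < 1 := by simpa using hx
  have hne : (sphere (0:E2) 1).Nonempty := NormedSpace.sphere_nonempty.mpr zero_le_one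
  constructor
  · rw [← isClosed_sphere.notMem_iff_infDist_pos hne]
    simp; linarith
  · by_cases h0 : x = 0
    · obtain ⟨p, hp⟩ := hne
      refine (infDist_le_dist_of_mem hp).trans ?_
      subst h0
      have : ‖p‖ = 1 := by simpa using hp
      simp [this]
    · have hn : 0 < ‖x‖ := norm_pos_iff.mpr h0
      have hp : (‖x‖⁻¹ • x) ∈ sphere (0:E2) 1 := by
        simp [norm_smul, hn.ne']
      refine (infDist_le_dist_of_mem hp).trans ?_
      rw [dist_eq_norm, show x - ‖x‖⁻¹ • x = (1 - ‖x‖⁻¹) • x by rw [sub_smul, one_smul],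
        norm_smul, Real.norm_eq_abs, abs_of_nonpos (by
          have := one_le_inv_iff₀.mpr ⟨hn, hx1.le⟩; linarith)]
      field_simp
      linarith

lemma exists_cutoff : ∃ L : ℝ, ∀ (x : E2) (d : ℝ), 0 < d → ∃ χ : E2 → ℝ, ContDiff ℝ 1 χ ∧
    HasCompactSupport χ ∧ tsupport χ ⊆ ball x d ∧ (∀ y ∈ ball x (d / 4), χ y = 1) ∧
    ∫ y, (pd 0 χ y ^ 2 + pd 1 χ y ^ 2) ≤ L := by
  let f : ContDiffBump (0 : E2) := ⟨1/4, 1/2, by norm_num, by norm_num⟩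
  have hfc : ContDiff ℝ 1 f := f.contDiff
  obtain ⟨M, hM⟩ := (f.hasCompactSupport.fderiv (𝕜 := ℝ)).exists_bound_of_continuous
    (hfc.continuous_fderiv (by norm_num))
  have hM0 : 0 ≤ M := (norm_nonneg _).trans (hM 0)
  refine ⟨2 * M ^ 2 * volume.real (ball (0:E2) 1), fun x d hd => ?_⟩
  let χ : E2 → ℝ := fun y => f (d⁻¹ • (y - x))
  have hχ : ContDiff ℝ 1 χ := hfc.comp (by fun_prop)
  have hts : tsupport χ ⊆ closedBall x (d / 2) := by
    refine closure_minimal ?_ isClosed_closedBall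
    intro y hy
    have h1 : d⁻¹ • (y - x) ∈ Function.support f := hy
    rw [f.support_eq, mem_ball_zero_iff, norm_smul, norm_inv, Real.norm_of_nonneg hd.le] at h1
    rw [mem_closedBall, dist_eq_norm]
    have h2 : d⁻¹ * ‖y - x‖ < 1 / 2 := h1
    rw [inv_mul_lt_iff₀ hd] at h2
    linarith
  have hcs : HasCompactSupport χ := HasCompactSupport.of_support_subset_isCompact
    (isCompact_closedBall x (d/2)) (subset_closure.trans hts)
  refine ⟨χ, hχ, hcs, hts.trans (closedBall_subset_ball (by linarith)), ?_, ?_⟩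
  · intro y hy
    apply f.one_of_mem_closedBall
    rw [mem_closedBall_zero_iff, norm_smul, norm_inv, Real.norm_of_nonneg hd.le]
    rw [mem_ball, dist_eq_norm] at hy
    change d⁻¹ * ‖y - x‖ ≤ 1 / 4
    rw [inv_mul_le_iff₀ hd]
    linarith
  · have hb : ∀ j y, |pd j χ y| ≤ M / d := by
      intro j y
      have h1 : HasFDerivAt (fun y : E2 => d⁻¹ • (y - x)) (d⁻¹ • ContinuousLinearMap.id ℝ E2) y :=
        ((hasFDerivAt_id y).sub_const x).const_smul d⁻¹
      have h2 : HasFDerivAt χ ((fderiv ℝ f (d⁻¹ • (y - x))).comp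
          (d⁻¹ • ContinuousLinearMap.id ℝ E2)) y :=
        HasFDerivAt.comp (g := (f : E2 → ℝ)) y ((hfc.differentiable (by norm_num) (d⁻¹ • (y - x))).hasFDerivAt) h1
      have h3 : pd j χ y = d⁻¹ * fderiv ℝ f (d⁻¹ • (y - x)) (EuclideanSpace.single j 1) := by
        rw [pd, h2.fderiv]; simp
      rw [h3, abs_mul, abs_of_pos (inv_pos.mpr hd), div_eq_inv_mul]
      gcongr
      calc _ ≤ ‖fderiv ℝ f (d⁻¹ • (y - x))‖ * ‖(EuclideanSpace.single j 1 : E2)‖ :=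
            ContinuousLinearMap.le_opNorm _ _
        _ ≤ M := by simpa using hM _
    have hz : ∀ j, ∀ y ∉ closedBall x (d/2), pd j χ y = 0 := by
      intro j y hy
      have := notMem_tsupport_iff_eventuallyEq.mp (fun h => hy (hts h))
      simp [pd, this.fderiv_eq]
    rw [← setIntegral_eq_integral_of_forall_compl_eq_zero (s := closedBall x (d/2))
      (fun y hy => by simp [hz _ y hy])]
    have hfin : volume (closedBall x (d/2)) < ⊤ := measure_closedBall_lt_top
    have hn := norm_setIntegral_le_of_norm_le_const (C := 2 * (M / d) ^ 2)
      (f := fun y => pd 0 χ y ^ 2 + pd 1 χ y ^ 2) hfin (fun y _ => by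
        rw [Real.norm_of_nonneg (by positivity)]
        have a0 := sq_le_sq' (neg_le_of_abs_le (hb 0 y)) (le_of_abs_le (hb 0 y))
        have a1 := sq_le_sq' (neg_le_of_abs_le (hb 1 y)) (le_of_abs_le (hb 1 y))
        linarith)
    refine (le_abs_self _).trans (hn.trans ?_)
    rw [Measure.addHaar_real_closedBall _ _ (by positivity)]
    simp only [finrank_euclideanSpace, Fintype.card_fin]
    have hv : 0 ≤ volume.real (ball (0:E2) 1) := measureReal_nonneg
    calc 2 * (M / d) ^ 2 * ((d / 2) ^ 2 * volume.real (ball (0:E2) 1))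
        = (2 * M ^ 2 * volume.real (ball (0:E2) 1)) * (1/4) := by field_simp; ring
      _ ≤ _ := mul_le_of_le_one_right (by positivity) (by norm_num)

lemma grad_bound {q : ℝ} (hq1 : 1 ≤ q) (hq2 : q < 2) (C₀ : ℝ) {η : ℝ} (hη : 0 < η) :
    ∃ ρ : ℝ, 0 < ρ ∧ ∀ (u : E2 → ℝ) (x : E2) (e d : ℝ),
      ContDiffOn ℝ 2 u (closedBall (0:E2) 1) →
      (∀ x ∈ ball (0:E2) 1, lapl u x ≤ 0) →
      (∀ x ∈ sphere (0:E2) 1, u x = 0) →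
      (∫ y in ball (0:E2) 1, Real.exp (u y)) ≤ C₀ → 0 < d → d ≤ 1 - ‖x‖ → e < 1/4 → 0 < e →
      d < ρ →
      (∫ y in ball x (d * e), ‖fderiv ℝ u y‖ ^ q) ≤ η := by
  obtain ⟨L, hL⟩ := exists_cutoff
  set B : ℝ := 4 * |L| + |C₀| + 1 with hB
  have hB0 : 0 < B := by positivity
  set lam : ℝ := η / (2 * B) with hlam
  have hlam0 : 0 < lam := by positivity
  obtain ⟨K, hK0, hK⟩ := pointwise_young hq1 hq2 hlam0
  set v : ℝ := volume.real (ball (0:E2) 1) with hvdef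
  have hv : 0 ≤ v := measureReal_nonneg
  refine ⟨min 1 (η / (2 * (K * v + 1))), by positivity, ?_⟩
  intro u x e d hu hl hbc hint hd hdx he he0 hdρ
  have hd1 : d < 1 := hdρ.trans_le (min_le_left _ _)
  have hd2 : d < η / (2 * (K * v + 1)) := hdρ.trans_le (min_le_right _ _)
  have hsub : ball x d ⊆ ball (0:E2) 1 := by
    apply ball_subset_ball'
    simp; linarith
  have hpos := nonneg_of_superharmonic hu hl hbc
  have hde : d * e ≤ d / 4 := by nlinarith
  have hca : ∀ y ∈ ball (0:E2) 1, ContDiffAt ℝ 2 u y := fun y hy =>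
    hu.contDiffAt (mem_of_superset (isOpen_ball.mem_nhds hy) ball_subset_closedBall)
  obtain ⟨χ, hχ, hcs, hts, hone, hχL⟩ := hL x d hd
  obtain ⟨hFi, hF⟩ := caccioppoli isOpen_ball hca (fun y hy => hpos y (ball_subset_closedBall hy)) hl
    hχ hcs (hts.trans hsub)
  set S := ball x (d * e) with hS
  have hSd : S ⊆ ball x (d/4) := ball_subset_ball hde
  have hS1 : closedBall x (d * e) ⊆ ball (0:E2) 1 :=
    (closedBall_subset_ball (by linarith : d * e < d)).trans hsub
  have hS1' : S ⊆ ball (0:E2) 1 := ball_subset_closedBall.trans hS1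
  have hexp : IntegrableOn (fun y => Real.exp (u y)) (ball (0:E2) 1) :=
    ((Real.continuous_exp.comp_continuousOn hu.continuousOn).integrableOn_compact
      (isCompact_closedBall _ _)).mono_set ball_subset_closedBall
  have hgc : ContinuousOn (fun y => ‖fderiv ℝ u y‖ ^ q) (closedBall x (d * e)) := by
    intro y hy
    have h1 : ContinuousAt (fderiv ℝ u) y :=
      ((hca y (hS1 hy)).fderiv_right (m := 1) (by norm_num)).continuousAt
    exact (h1.norm.rpow_const (Or.inr (by linarith))).continuousWithinAt
  have hgi : IntegrableOn (fun y => ‖fderiv ℝ u y‖ ^ q) S :=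
    (hgc.integrableOn_compact (isCompact_closedBall _ _)).mono_set ball_subset_closedBall
  have hSfin : volume S ≠ ⊤ := measure_ball_lt_top.ne
  let F : E2 → ℝ := fun y => χ y ^ 2 * ((pd 0 u y ^ 2 + pd 1 u y ^ 2) / (1 + u y) ^ 2)
  have hci : IntegrableOn (fun _ : E2 => K) S := integrableOn_const hSfin
  have i1 : IntegrableOn (fun y => lam * F y) S := (hFi.const_mul lam).integrableOn
  have i2 : IntegrableOn (fun y => lam * Real.exp (u y)) S := (hexp.mono_set hS1').const_mul lam
  have i12 : IntegrableOn (fun y => lam * F y + lam * Real.exp (u y)) S := i1.add i2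
  have hle : ∫ y in S, ‖fderiv ℝ u y‖ ^ q ≤ ∫ y in S, (lam * F y + lam * Real.exp (u y) + K) := by
    refine setIntegral_mono_on hgi (i12.add hci) measurableSet_ball ?_
    intro y hy
    refine (hK ‖fderiv ℝ u y‖ (u y) (norm_nonneg _)
      (hpos y (ball_subset_closedBall (hS1' hy)))).trans ?_
    simp only [F, hone y (hSd hy), one_pow, one_mul]
    have := norm_fderiv_sq_le u y
    gcongr
  have e1 : ∫ y in S, F y ≤ 4 * |L| := by
    have h1 : ∫ y in S, F y ≤ ∫ y, F y :=
      setIntegral_le_integral hFi (Eventually.of_forall fun y => by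
        simp only [Pi.zero_apply]; positivity)
    have h2 := le_abs_self L
    have h3 : ∫ y, F y ≤ _ := hF
    linarith
  have e2 : ∫ y in S, Real.exp (u y) ≤ |C₀| := by
    have h1 : ∫ y in S, Real.exp (u y) ≤ ∫ y in ball (0:E2) 1, Real.exp (u y) :=
      setIntegral_mono_set hexp (Eventually.of_forall fun y => (Real.exp_pos _).le)
        (Eventually.of_forall hS1')
    exact h1.trans (hint.trans (le_abs_self _))
  have e3 : volume.real S ≤ d * v := by
    rw [hS, measureReal_def, Measure.addHaar_ball _ _ (by positivity), ENNReal.toReal_mul,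
      ENNReal.toReal_ofReal (by positivity), ← measureReal_def, ← hvdef]
    simp only [finrank_euclideanSpace, Fintype.card_fin]
    apply mul_le_mul_of_nonneg_right _ hv
    nlinarith [mul_pos hd he0]
  have hsplit : ∫ y in S, (lam * F y + lam * Real.exp (u y) + K) =
      lam * (∫ y in S, F y) + lam * (∫ y in S, Real.exp (u y)) + volume.real S * K := by
    rw [integral_add (f := fun y => lam * F y + lam * Real.exp (u y)) i12 hci, integral_add i1 i2, integral_const_mul, integral_const_mul]
    simp
  rw [hsplit] at hle
  have e4 : lam * (∫ y in S, F y) + lam * (∫ y in S, Real.exp (u y)) ≤ η / 2 := by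
    calc _ ≤ lam * B := by rw [← mul_add]; gcongr; linarith
      _ = η / 2 := by rw [hlam]; field_simp
  have e5 : volume.real S * K ≤ η / 2 := by
    rw [lt_div_iff₀ (by positivity)] at hd2
    nlinarith [mul_le_mul_of_nonneg_right e3 hK0]
  linarith

theorem stmt14
    (b A s C₀ : ℝ) (hs1 : 1/2 < s) (hs2 : s ≤ 1)
    (V u : ℕ → E2 → ℝ) (x_ : ℕ → E2) (δ r : ℕ → ℝ) (v : ℕ → E2 → ℝ)
    (hu : ∀ i, ContDiffOn ℝ 2 (u i) (closedBall (0:E2) 1))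
    (hVb : ∀ i, ∀ x ∈ ball (0:E2) 1, 0 ≤ V i x ∧ V i x ≤ b)
    (hVhol : ∀ i, ∀ x ∈ ball (0:E2) 1, ∀ y ∈ ball (0:E2) 1, |V i x - V i y| ≤ A * ‖x - y‖ ^ s)
    (hpde : ∀ i, ∀ x ∈ ball (0:E2) 1, -(lapl (u i) x) = V i x * Real.exp (u i x))
    (hbc : ∀ i, ∀ x ∈ sphere (0:E2) 1, u i x = 0)
    (hint : ∀ i, (∫ y in ball (0:E2) 1, Real.exp (u i y)) ≤ C₀)
    (hxmem : ∀ i, x_ i ∈ ball (0:E2) 1)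
    (hmax : ∀ i, ∀ y ∈ closedBall (0:E2) 1, u i y ≤ u i (x_ i))
    (hblow : Tendsto (fun i => u i (x_ i)) atTop atTop)
    (hδ : ∀ i, δ i = Metric.infDist (x_ i) (sphere (0:E2) 1))
    (hδ0 : Tendsto δ atTop (nhds 0))
    (hr : ∀ i, r i = Real.exp (-(u i (x_ i)) / 2))
    (hrδ : Tendsto (fun i => r i / δ i) atTop (nhds 0))
    (hmass : Tendsto (fun i => ∫ y in ball (x_ i) (δ i / 2), V i y * Real.exp (u i y)) atTop
      (nhds (8 * Real.pi)))
    (hbound : ∀ ε : ℝ, 0 < ε → ε < 1 → ∃ Cε : ℝ, ∀ i, ∀ y : E2, ‖y‖ = ε →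
      u i (x_ i + δ i • y) ≤ Cε)
    (hv : ∀ i θ, v i θ = u i (x_ i + r i • θ) - u i (x_ i)) :
    ∀ q : ℝ, 1 ≤ q → q < 2 → ∀ ε' : ℝ, ε' ∈ Set.Ioo (0:ℝ) (1/4) →
      Tendsto (fun i => (∫ y in ball (x_ i) (δ i * ε'), ‖fderiv ℝ (u i) y‖ ^ q) ^ (1 / q))
        atTop (nhds 0) := by
  intro q hq1 hq2 ε' hε'
  have hl : ∀ i, ∀ x ∈ ball (0:E2) 1, lapl (u i) x ≤ 0 := by
    intro i x hx
    have h1 := hpde i x hx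
    have h2 := mul_nonneg (hVb i x hx).1 (Real.exp_pos (u i x)).le
    linarith
  have hmain : Tendsto (fun i => ∫ y in ball (x_ i) (δ i * ε'), ‖fderiv ℝ (u i) y‖ ^ q)
      atTop (nhds 0) := by
    rw [Metric.tendsto_atTop']
    intro η hη
    obtain ⟨ρ, hρ, H⟩ := grad_bound hq1 hq2 C₀ (half_pos hη)
    obtain ⟨N, hN⟩ := eventually_atTop.mp (hδ0.eventually (gt_mem_nhds hρ))
    refine ⟨N, fun i hi => ?_⟩
    have hd := infDist_le (hxmem i)
    rw [← hδ i] at hd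
    have h1 := H (u i) (x_ i) ε' (δ i) (hu i) (hl i) (hbc i) (hint i) hd.1 hd.2 hε'.2 hε'.1
      (hN i hi.le)
    have h0 : 0 ≤ ∫ y in ball (x_ i) (δ i * ε'), ‖fderiv ℝ (u i) y‖ ^ q :=
      integral_nonneg fun y => by simp only [Pi.zero_apply]; positivity
    rw [Real.dist_eq, sub_zero, abs_of_nonneg h0]
    linarith
  have hq0 : (0:ℝ) < 1 / q := by positivity
  have := hmain.rpow_const (p := 1 / q) (Or.inr hq0.le)
  rwa [Real.zero_rpow hq0.ne'] at this
end
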